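/- Under the null hypothesis, for any fixed x > 0, P( M_n^+ ≥ x / (2 log n · log log n) ) ≤ e^{-x} + o(1) as n → ∞. -/

import Mathlib

open MeasureTheory Filter Set

noncomputable section

/-- Density of the Beta(a,b) distribution on [0,1]. -/
def betaPDF (a b x : ℝ) : ℝ :=
  x ^ (a - 1) * (1 - x) ^ (b - 1) / (Real.Gamma a * Real.Gamma b / Real.Gamma (a + b))

/-- Regularized incomplete beta function `I_x(a,b) = P(Beta(a,b) < x)`. -/
def regIncBeta (a b x : ℝ) : ℝ := ∫ t in Set.Ioc (0:ℝ) x, betaPDF a b t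

/-- The `i`-th order statistic (0-based) of the sample `u`. -/
def orderStat {n : ℕ} (u : Fin n → ℝ) (i : Fin n) : ℝ := u (Tuple.sort u i)

/-- `p_{(i)} = P(Beta(i, n-i+1) < u_{(i)})` (with 1-based index `i = (i : Fin n) + 1`). -/
def pOrd {n : ℕ} (u : Fin n → ℝ) (i : Fin n) : ℝ :=
  regIncBeta ((i : ℕ) + 1 : ℝ) ((n : ℝ) - (i : ℕ)) (orderStat u i)

/-- One-sided exact Berk-Jones statistic `M_n^+`. -/
def MnPlus {n : ℕ} (u : Fin n → ℝ) : ℝ := ⨅ i, pOrd u i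

/-- One-sided exact Berk-Jones statistic `M_n^-`. -/
def MnMinus {n : ℕ} (u : Fin n → ℝ) : ℝ := ⨅ i, (1 - pOrd u i)

/-- Two-sided exact Berk-Jones statistic `M_n`. -/
def Mn {n : ℕ} (u : Fin n → ℝ) : ℝ := min (MnPlus u) (MnMinus u)

/-- Joint law of `n` i.i.d. `U[0,1]` random variables (the null hypothesis). -/
def nullMeasure (n : ℕ) : Measure (Fin n → ℝ) :=
  Measure.pi fun _ => MeasureTheory.volume.restrict (Set.Icc (0:ℝ) 1)

end

/-!
Put `p = x / (2 log n log log n)` and let `c j` be the `p`-quantile of `U_(j)`, so that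
`P(Bin(n, c j) ≥ j) = p`. On `{M_n⁺ ≥ p}` fewer than `j` sample points lie below `c j` for every `j`
in a window `[a, n - a]`, i.e. no index `j` is a crossing. Given a last crossing `i`, the `i` points
below `c i` are uniform, so with `f i` the probability that the last crossing is `i`, there is the
renewal identity `p = ∑ i ≥ j, f i * P(Bin(i, c j / c i) ≥ j)`, up to a boundary term.

Measure indices by the half-logit `s j = log (j / (n - j)) / 2`. If `s i - s j` is large, the
crossings at `i` and `j` decorrelate and the tail is at most `(1 + δ) p`. Close to the diagonal the
tails are those of a Poisson random walk with drift about `u / (2 σ i)`, where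
`u² = 2 log log n` and `σ i² = i (n - i) / n`, and a Lyapunov function bounds their sum over `j`,
weighted by the steps of `s`, by `(1 + o(1)) / u²`. Between the two ranges Bernstein's inequality
suffices. Averaging the renewal identity over a block of half-logit length `log n / M` therefore
shows that the probability of no crossing so far drops by a factor `1 + y / M` in each of the `M`
blocks covering the window, for any `y < x`; then `(1 + y / M)⁻ᴹ → e⁻ʸ` as `M → ∞`, and `y → x`.
-/

section Binomial

/-- The binomial weight `P(Bin(m, q) = k)`, as a polynomial in `q`. -/
noncomputable def binomWeight (m : ℕ) (q : ℝ) (k : ℕ) : ℝ :=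
  (m.choose k : ℝ) * q ^ k * (1 - q) ^ (m - k)

/-- The upper tail `P(Bin(m, q) ≥ j)` of the binomial distribution. -/
noncomputable def binomTail (m : ℕ) (q : ℝ) (j : ℕ) : ℝ :=
  ∑ k ∈ Finset.Icc j m, binomWeight m q k

variable {m : ℕ} {q : ℝ}

lemma binomWeight_nonneg (hq0 : 0 ≤ q) (hq1 : q ≤ 1) (k : ℕ) : 0 ≤ binomWeight m q k := by
  have : 0 ≤ 1 - q := by linarith
  unfold binomWeight
  positivity

lemma binomWeight_pos {k : ℕ} (hq0 : 0 < q) (hq1 : q < 1) (hk : k ≤ m) :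
    0 < binomWeight m q k := by
  have : (0 : ℝ) < m.choose k := by exact_mod_cast Nat.choose_pos hk
  have : 0 < 1 - q := by linarith
  unfold binomWeight
  positivity

lemma binomWeight_of_lt {k : ℕ} (q : ℝ) (h : m < k) : binomWeight m q k = 0 := by
  simp [binomWeight, Nat.choose_eq_zero_of_lt h]

lemma binomWeight_eq_eval_bernsteinPolynomial (m : ℕ) (q : ℝ) (k : ℕ) :
    binomWeight m q k = (bernsteinPolynomial ℝ m k).eval q := by
  simp [binomWeight, bernsteinPolynomial]

lemma sum_range_binomWeight (m : ℕ) (q : ℝ) :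
    ∑ k ∈ Finset.range (m + 1), binomWeight m q k = 1 := by
  simpa [Polynomial.eval_finsetSum, binomWeight_eq_eval_bernsteinPolynomial] using
    congrArg (Polynomial.eval q) (bernsteinPolynomial.sum ℝ m)

lemma sum_sq_sub_mul_binomWeight (m : ℕ) (q : ℝ) :
    ∑ k ∈ Finset.range (m + 1), ((k : ℝ) - m * q) ^ 2 * binomWeight m q k = m * q * (1 - q) := by
  have h := congrArg (Polynomial.eval q) (bernsteinPolynomial.variance ℝ m)
  simp only [Polynomial.eval_finsetSum, Polynomial.eval_mul, Polynomial.eval_pow,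
    Polynomial.eval_sub, Polynomial.eval_natCast, Polynomial.eval_X,
    Polynomial.eval_one, ← binomWeight_eq_eval_bernsteinPolynomial, nsmul_eq_mul] at h
  rw [← h]
  exact Finset.sum_congr rfl fun k _ => by ring

lemma sum_binomWeight_mul_exp (m : ℕ) (q l : ℝ) :
    ∑ k ∈ Finset.range (m + 1), binomWeight m q k * Real.exp (l * k) =
      (1 - q + q * Real.exp l) ^ m := by
  rw [add_comm (1 - q), add_pow]
  refine Finset.sum_congr rfl fun k _ => ?_
  rw [mul_pow, ← Real.exp_nat_mul, mul_comm l, binomWeight]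
  ring

lemma binomTail_nonneg (hq0 : 0 ≤ q) (hq1 : q ≤ 1) (j : ℕ) : 0 ≤ binomTail m q j :=
  Finset.sum_nonneg fun k _ => binomWeight_nonneg hq0 hq1 k

lemma binomTail_antitone (hq0 : 0 ≤ q) (hq1 : q ≤ 1) : Antitone (binomTail m q) := fun _ _ h =>
  Finset.sum_le_sum_of_subset_of_nonneg (Finset.Icc_subset_Icc_left h) fun k _ _ =>
    binomWeight_nonneg hq0 hq1 k

@[simp]
lemma binomTail_zero (m : ℕ) (q : ℝ) : binomTail m q 0 = 1 := by
  rw [← sum_range_binomWeight m q, binomTail, ← Nat.range_succ_eq_Icc_zero]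

lemma binomTail_of_lt {j : ℕ} (q : ℝ) (h : m < j) : binomTail m q j = 0 := by
  simp [binomTail, h]

lemma binomTail_eq_add_succ (m : ℕ) (q : ℝ) (j : ℕ) :
    binomTail m q j = binomWeight m q j + binomTail m q (j + 1) := by
  by_cases h : j ≤ m
  · rw [binomTail, ← Finset.insert_Icc_succ_left_eq_Icc h, Finset.sum_insert (by simp)]
    rfl
  · rw [binomTail_of_lt _ (by lia), binomTail_of_lt _ (by lia), binomWeight_of_lt _ (by lia),
      add_zero]

lemma binomWeight_succ_succ (m : ℕ) (q : ℝ) (k : ℕ) :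
    binomWeight (m + 1) q (k + 1) = q * binomWeight m q k + (1 - q) * binomWeight m q (k + 1) := by
  unfold binomWeight
  rw [Nat.choose_succ_succ]
  push_cast
  by_cases h : k + 1 ≤ m
  · obtain ⟨d, rfl⟩ := Nat.exists_eq_add_of_le h
    rw [show k + 1 + d - k = d + 1 by lia, show k + 1 + d - (k + 1) = d by lia]
    ring
  · rw [Nat.choose_eq_zero_of_lt (show m < k + 1 by lia)]
    push_cast
    ring_nf

lemma binomTail_succ_succ (m : ℕ) (q : ℝ) (j : ℕ) :
    binomTail (m + 1) q (j + 1) = binomTail m q (j + 1) + q * binomWeight m q j := by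
  by_cases h : j ≤ m
  · induction h using Nat.decreasingInduction with
    | self =>
      rw [binomTail_of_lt (m := m) _ (by lia), binomTail_eq_add_succ, binomTail_of_lt _ (by lia)]
      simp [binomWeight, pow_succ, mul_comm]
    | of_succ k _ ih =>
      rw [binomTail_eq_add_succ, binomTail_eq_add_succ m q (k + 1), ih, binomWeight_succ_succ]
      ring
  · rw [binomTail_of_lt _ (by lia), binomTail_of_lt _ (by lia), binomWeight_of_lt _ (by lia)]
    simp

lemma cast_choose_succ_mul (m k : ℕ) :
    (m.choose (k + 1) : ℝ) * (k + 1) = m.choose k * (m - k) := by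
  rcases le_or_gt k m with h | h
  · rw [← Nat.cast_sub h]
    exact_mod_cast Nat.choose_succ_right_eq m k
  · simp [Nat.choose_eq_zero_of_lt h, Nat.choose_eq_zero_of_lt (Nat.lt_succ_of_lt h)]

lemma hasDerivAt_binomWeight_succ (m k : ℕ) (q : ℝ) :
    HasDerivAt (fun q => binomWeight m q (k + 1))
      (m.choose (k + 1) * ((k + 1) * q ^ k) * (1 - q) ^ (m - (k + 1)) -
        m.choose (k + 1) * q ^ (k + 1) *
          (((m - (k + 1) : ℕ) : ℝ) * (1 - q) ^ (m - (k + 1) - 1))) q := by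
  have hpow : HasDerivAt (fun q : ℝ => q ^ (k + 1)) ((k + 1) * q ^ k) q := by
    simpa using hasDerivAt_pow (k + 1) q
  have hpow' := HasDerivAt.fun_pow ((hasDerivAt_id q).const_sub 1) (m - (k + 1))
  exact ((hpow.const_mul _).mul hpow').congr_deriv (by simp only [id]; ring)

lemma hasDerivAt_binomTail {j : ℕ} (q : ℝ) (h : j ≤ m) :
    HasDerivAt (fun q => binomTail m q (j + 1))
      ((m - j) * m.choose j * q ^ j * (1 - q) ^ (m - j - 1)) q := by
  induction h using Nat.decreasingInduction with
  | self =>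
    simp only [binomTail_of_lt _ (Nat.lt_succ_self m)]
    simpa using hasDerivAt_const q (0 : ℝ)
  | of_succ k hk ih =>
    simp_rw [fun q => binomTail_eq_add_succ m q (k + 1)]
    refine ((hasDerivAt_binomWeight_succ m k q).fun_add ih).congr_deriv ?_
    rw [Nat.cast_sub (by lia), show m - k - 1 = m - (k + 1) by lia]
    push_cast
    linear_combination q ^ k * (1 - q) ^ (m - (k + 1)) * cast_choose_succ_mul m k

lemma continuous_binomTail (m j : ℕ) : Continuous fun q => binomTail m q j := by
  unfold binomTail binomWeight
  fun_prop

lemma strictMonoOn_binomTail {j : ℕ} (h : j < m) :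
    StrictMonoOn (fun q => binomTail m q (j + 1)) (Icc 0 1) := by
  refine strictMonoOn_of_deriv_pos (convex_Icc 0 1) (continuous_binomTail _ _).continuousOn
    fun q hq => ?_
  rw [interior_Icc] at hq
  rw [(hasDerivAt_binomTail q h.le).deriv]
  have hq0 : 0 < q := hq.1
  have hq1 : 0 < 1 - q := sub_pos.2 hq.2
  have hj : (0 : ℝ) < m - j := sub_pos.2 (by exact_mod_cast h)
  have hchoose : (0 : ℝ) < m.choose j := by exact_mod_cast Nat.choose_pos h.le
  positivity

lemma monotoneOn_binomTail (m j : ℕ) : MonotoneOn (fun q => binomTail m q j) (Icc 0 1) := by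
  rcases j with _ | j
  · simpa using monotoneOn_const
  · by_cases hj : j < m
    · exact (strictMonoOn_binomTail hj).monotoneOn
    · simpa [binomTail_of_lt _ (show m < j + 1 by lia)] using monotoneOn_const

lemma binomTail_succ_zero_prob (m j : ℕ) : binomTail m 0 (j + 1) = 0 :=
  Finset.sum_eq_zero fun k hk => by
    have : k ≠ 0 := by have := Finset.mem_Icc.1 hk; lia
    simp [binomWeight, this]

lemma binomTail_one_prob {j : ℕ} (h : j ≤ m) : binomTail m 1 j = 1 := by
  rw [binomTail, Finset.sum_eq_single_of_mem m (Finset.right_mem_Icc.2 h)]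
  · simp [binomWeight]
  · intro k hk hkm
    have : m - k ≠ 0 := by have := Finset.mem_Icc.1 hk; lia
    simp [binomWeight, this]

lemma exists_binomTail_eq {j : ℕ} (h : j < m) {p : ℝ} (hp0 : 0 < p) (hp1 : p < 1) :
    ∃ c, 0 < c ∧ c < 1 ∧ binomTail m c (j + 1) = p := by
  have hivt := intermediate_value_Icc (zero_le_one (α := ℝ))
    (continuous_binomTail m (j + 1)).continuousOn
  rw [binomTail_succ_zero_prob, binomTail_one_prob h] at hivt
  obtain ⟨c, hc, hcp⟩ := hivt ⟨hp0.le, hp1.le⟩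
  dsimp only at hcp
  refine ⟨c, hc.1.lt_of_ne ?_, hc.2.lt_of_ne ?_, hcp⟩ <;> rintro rfl
  · rw [binomTail_succ_zero_prob] at hcp; linarith
  · rw [binomTail_one_prob h] at hcp; linarith

lemma betaPDF_natCast {n j : ℕ} (h : j < n) (s : ℝ) :
    betaPDF (j + 1) (n - j) s = (n - j) * n.choose j * s ^ j * (1 - s) ^ (n - j - 1) := by
  obtain ⟨d, rfl⟩ := Nat.exists_eq_add_of_lt h
  have hsub : ((j + d + 1 : ℕ) : ℝ) - j = (d : ℕ) + 1 := by push_cast; ring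
  have hadd : (j : ℝ) + 1 + ((d : ℕ) + 1) = ((j + d + 1 : ℕ) : ℝ) + 1 := by push_cast; ring
  have hfact : ((j + d + 1).choose j : ℝ) * j.factorial * ((d + 1) * d.factorial) =
      (j + d + 1).factorial := by
    rw [← Nat.choose_mul_factorial_mul_factorial h.le, show j + d + 1 - j = d + 1 by lia,
      Nat.factorial_succ]
    push_cast
    ring
  have hchoose : ((j + d + 1).choose j : ℝ) ≠ 0 := by exact_mod_cast (Nat.choose_pos h.le).ne'
  have hj : (j.factorial : ℝ) ≠ 0 := by positivity
  have hd : (d.factorial : ℝ) ≠ 0 := by positivity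
  rw [betaPDF, hsub, hadd, add_sub_cancel_right, add_sub_cancel_right, Real.rpow_natCast,
    Real.rpow_natCast, Real.Gamma_nat_eq_factorial, Real.Gamma_nat_eq_factorial,
    Real.Gamma_nat_eq_factorial, ← hfact, show j + d + 1 - j - 1 = d by lia]
  field_simp

lemma regIncBeta_eq_binomTail {n j : ℕ} (h : j < n) {t : ℝ} (ht : 0 ≤ t) :
    regIncBeta (j + 1) (n - j) t = binomTail n t (j + 1) := by
  rw [regIncBeta, ← intervalIntegral.integral_of_le ht]
  simp_rw [betaPDF_natCast h]
  rw [intervalIntegral.integral_eq_sub_of_hasDerivAt (fun s _ => hasDerivAt_binomTail s h.le)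
    (Continuous.intervalIntegrable (by fun_prop) _ _), binomTail_succ_zero_prob, sub_zero]

end Binomial

section BinomialEstimates

variable {m j h : ℕ} {q X : ℝ}

lemma monotone_binomTail_trials (hq0 : 0 ≤ q) (hq1 : q ≤ 1) (j : ℕ) :
    Monotone fun m => binomTail m q j := by
  rcases j with _ | j
  · simpa using monotone_const
  · refine monotone_nat_of_le_succ fun m => ?_
    rw [binomTail_succ_succ]
    exact le_add_of_nonneg_right (mul_nonneg hq0 (binomWeight_nonneg hq0 hq1 j))

lemma sum_filter_binomWeight_le (hq0 : 0 ≤ q) (hq1 : q ≤ 1) (S : Finset ℕ) :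
    ∑ k ∈ Finset.range (m + 1) with k ∈ S, binomWeight m q k ≤ ∑ k ∈ S, binomWeight m q k :=
  Finset.sum_le_sum_of_subset_of_nonneg (fun k => by simp) fun k _ _ =>
    binomWeight_nonneg hq0 hq1 k

lemma one_sub_variance_div_sq_le_sum_binomWeight {g : ℝ} (hq0 : 0 ≤ q) (hq1 : q ≤ 1) (hg : 0 < g)
    {S : Finset ℕ} (hS : ∀ k ≤ m, k ∉ S → g ≤ |(k : ℝ) - m * q|) :
    1 - m * q * (1 - q) / g ^ 2 ≤ ∑ k ∈ S, binomWeight m q k := by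
  have pointwise : ∀ k ∈ Finset.range (m + 1),
      binomWeight m q k - ((k : ℝ) - m * q) ^ 2 * binomWeight m q k / g ^ 2 ≤
        if k ∈ S then binomWeight m q k else 0 := by
    intro k hk
    have hb := binomWeight_nonneg (m := m) hq0 hq1 k
    split_ifs with hkS
    · exact sub_le_self _ (by positivity)
    · rw [sub_nonpos, le_div_iff₀ (by positivity), mul_comm, ← sq_abs (_ - _)]
      gcongr
      exact hS k (Nat.lt_succ_iff.1 (Finset.mem_range.1 hk)) hkS
  calc 1 - m * q * (1 - q) / g ^ 2
      = ∑ k ∈ Finset.range (m + 1),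
          (binomWeight m q k - ((k : ℝ) - m * q) ^ 2 * binomWeight m q k / g ^ 2) := by
        rw [Finset.sum_sub_distrib, sum_range_binomWeight, ← Finset.sum_div,
          sum_sq_sub_mul_binomWeight]
    _ ≤ ∑ k ∈ Finset.range (m + 1) with k ∈ S, binomWeight m q k := by
        rw [Finset.sum_filter]
        exact Finset.sum_le_sum pointwise
    _ ≤ ∑ k ∈ S, binomWeight m q k := sum_filter_binomWeight_le hq0 hq1 S

lemma one_sub_variance_div_sq_le_binomTail {g : ℝ} (hq0 : 0 ≤ q) (hq1 : q ≤ 1) (hg : 0 < g)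
    (h : (j : ℝ) + g ≤ m * q) : 1 - m * q * (1 - q) / g ^ 2 ≤ binomTail m q j := by
  refine one_sub_variance_div_sq_le_sum_binomWeight hq0 hq1 hg fun k hk hkS => ?_
  have hkj : (k : ℝ) < j := by
    rw [Finset.mem_Icc, not_and'] at hkS
    exact_mod_cast not_le.1 (hkS hk)
  rw [abs_of_nonpos (by linarith)]
  linarith

lemma exp_neg_le_one_sub_add_sq {x : ℝ} (hx : 0 ≤ x) : Real.exp (-x) ≤ 1 - x + x ^ 2 / 2 := by
  have hpos : 0 < 1 - x + x ^ 2 / 2 := by nlinarith [sq_nonneg (x - 1)]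
  rw [Real.exp_neg, inv_le_iff_one_le_mul₀ (Real.exp_pos x)]
  calc (1 : ℝ) ≤ (1 - x + x ^ 2 / 2) * (1 + x + x ^ 2 / 2) := by nlinarith [sq_nonneg (x ^ 2)]
    _ ≤ (1 - x + x ^ 2 / 2) * Real.exp x :=
        mul_le_mul_of_nonneg_left (Real.quadratic_le_exp_of_nonneg hx) hpos.le

lemma exp_le_one_add_add_sq_mul {y : ℝ} (hy0 : 0 ≤ y) (hy1 : y ≤ 1) :
    Real.exp y ≤ 1 + y + y ^ 2 / 2 * (1 + y) := by
  have := Real.exp_bound' hy0 hy1 (n := 3) (by norm_num)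
  norm_num [Finset.sum_range_succ, Nat.factorial] at this
  nlinarith [pow_nonneg hy0 3]

lemma bernoulli_mgf_le {l : ℝ} (hq0 : 0 ≤ q) (hq1 : q ≤ 1) (hl0 : 0 ≤ l) (hl1 : l ≤ 1) :
    1 - q + q * Real.exp l ≤ Real.exp (l * q + q * (1 - q) * l ^ 2 * (1 + l) / 2) := by
  have hq : 0 ≤ 1 - q := by linarith
  have hlow := exp_neg_le_one_sub_add_sq (x := l * q) (by positivity)
  have hhigh := exp_le_one_add_add_sq_mul (y := l * (1 - q)) (by positivity) (by nlinarith)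
  have hcentre : 1 - q + q * Real.exp l = Real.exp (l * q) *
      ((1 - q) * Real.exp (-(l * q)) + q * Real.exp (l * (1 - q))) := by
    rw [mul_add, mul_left_comm, ← Real.exp_add, mul_left_comm, ← Real.exp_add, add_neg_cancel,
      ← mul_add, add_sub_cancel, Real.exp_zero, mul_one, mul_one]
  have hconvex : q + (1 - q) * (1 + l * (1 - q)) ≤ 1 + l := by
    nlinarith [mul_le_one₀ (a := 1 - q) (b := 1 - q) (by linarith) hq (by linarith)]
  rw [hcentre, Real.exp_add]
  gcongr
  calc (1 - q) * Real.exp (-(l * q)) + q * Real.exp (l * (1 - q))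
      ≤ (1 - q) * (1 - l * q + (l * q) ^ 2 / 2) +
        q * (1 + l * (1 - q) + (l * (1 - q)) ^ 2 / 2 * (1 + l * (1 - q))) := by gcongr
    _ = q * (1 - q) * l ^ 2 / 2 * (q + (1 - q) * (1 + l * (1 - q))) + 1 := by ring
    _ ≤ q * (1 - q) * l ^ 2 / 2 * (1 + l) + 1 := by gcongr
    _ = q * (1 - q) * l ^ 2 * (1 + l) / 2 + 1 := by ring
    _ ≤ Real.exp (q * (1 - q) * l ^ 2 * (1 + l) / 2) := Real.add_one_le_exp _

lemma binomTail_mul_exp_le {l : ℝ} (hq0 : 0 ≤ q) (hq1 : q ≤ 1) (hl : 0 ≤ l) (j : ℕ) :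
    binomTail m q j * Real.exp (l * j) ≤ (1 - q + q * Real.exp l) ^ m := by
  have hb := binomWeight_nonneg (m := m) hq0 hq1
  rw [← sum_binomWeight_mul_exp, binomTail, Finset.sum_mul]
  calc ∑ k ∈ Finset.Icc j m, binomWeight m q k * Real.exp (l * j)
      ≤ ∑ k ∈ Finset.Icc j m, binomWeight m q k * Real.exp (l * k) := by
        gcongr with k hk
        · exact hb k
        · exact (Finset.mem_Icc.1 hk).1
    _ ≤ ∑ k ∈ Finset.range (m + 1), binomWeight m q k * Real.exp (l * k) :=
        Finset.sum_le_sum_of_subset_of_nonneg (fun k => by simp) fun k _ _ =>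
          mul_nonneg (hb k) (Real.exp_pos _).le

lemma binomTail_le_exp_bernstein {l : ℝ} (hq0 : 0 ≤ q) (hq1 : q ≤ 1) (hl0 : 0 ≤ l) (hl1 : l ≤ 1)
    (j : ℕ) :
    binomTail m q j ≤
      Real.exp (-(l * (j - m * q)) + m * q * (1 - q) * l ^ 2 * (1 + l) / 2) := by
  have hmgf := pow_le_pow_left₀ (add_nonneg (sub_nonneg.2 hq1) (by positivity))
    (bernoulli_mgf_le hq0 hq1 hl0 hl1) m
  have hchernoff := (binomTail_mul_exp_le hq0 hq1 hl0 j).trans hmgf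
  rw [← Real.exp_nat_mul, ← le_div_iff₀ (Real.exp_pos _), ← Real.exp_sub] at hchernoff
  refine hchernoff.trans_eq ?_
  congr 1
  ring

lemma binomWeight_succ_mul (m : ℕ) (q : ℝ) (l : ℕ) :
    binomWeight m q (l + 1) * ((l + 1) * (1 - q)) = (m - l) * q * binomWeight m q l := by
  rcases lt_or_ge l m with h | h
  · obtain ⟨d, rfl⟩ := Nat.exists_eq_add_of_lt h
    unfold binomWeight
    rw [show l + d + 1 - l = d + 1 by lia, show l + d + 1 - (l + 1) = d by lia]
    linear_combination
      q ^ (l + 1) * (1 - q) ^ (d + 1) * cast_choose_succ_mul (l + d + 1) l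
  · rw [binomWeight_of_lt q (Nat.lt_succ_of_le h)]
    rcases h.eq_or_lt with rfl | h
    · simp
    · simp [binomWeight_of_lt q h]

lemma one_sub_mul_binomWeight_le_succ {k : ℕ} (hq0 : 0 ≤ q) (hq1 : q < 1)
    (h : (1 - X) * ((k + 1) * (1 - q)) ≤ (m - k) * q) :
    (1 - X) * binomWeight m q k ≤ binomWeight m q (k + 1) := by
  have hpos : 0 < ((k : ℝ) + 1) * (1 - q) := mul_pos (by positivity) (by linarith)
  have := mul_le_mul_of_nonneg_right h (binomWeight_nonneg (m := m) hq0 hq1.le k)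
  rw [← binomWeight_succ_mul] at this
  exact le_of_mul_le_mul_right (by linarith) hpos

lemma one_sub_pow_mul_binomWeight_le (hq0 : 0 ≤ q) (hq1 : q < 1) (hX0 : 0 ≤ X) (hX1 : X ≤ 1)
    (hc : (j : ℝ) + h - m * q ≤ X * ((j + 1) * (1 - q))) {t : ℕ} (ht : t ≤ h) :
    (1 - X) ^ t * binomWeight m q j ≤ binomWeight m q (j + t) := by
  induction t with
  | zero => simp
  | succ t ih =>
    have hth : (t : ℝ) + 1 ≤ h := by exact_mod_cast ht
    have hratio : (1 - X) * (((j + t : ℕ) + 1) * (1 - q)) ≤ (m - (j + t : ℕ)) * q := by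
      have : 0 ≤ X * (t * (1 - q)) :=
        mul_nonneg hX0 (mul_nonneg (by positivity) (by linarith))
      push_cast
      nlinarith
    calc (1 - X) ^ (t + 1) * binomWeight m q j
        = (1 - X) * ((1 - X) ^ t * binomWeight m q j) := by ring
      _ ≤ (1 - X) * binomWeight m q (j + t) :=
          mul_le_mul_of_nonneg_left (ih (by lia)) (by linarith)
      _ ≤ binomWeight m q (j + (t + 1)) := one_sub_mul_binomWeight_le_succ hq0 hq1 hratio

lemma sum_Ico_binomWeight_le_binomTail (hq0 : 0 ≤ q) (hq1 : q ≤ 1) (j b : ℕ) :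
    ∑ k ∈ Finset.Ico j b, binomWeight m q k ≤ binomTail m q j := by
  calc ∑ k ∈ Finset.Ico j b, binomWeight m q k
      = ∑ k ∈ Finset.Ico j b with k ≤ m, binomWeight m q k :=
        (Finset.sum_filter_of_ne fun k _ hk =>
          not_lt.1 fun hmk => hk (binomWeight_of_lt q hmk)).symm
    _ ≤ binomTail m q j :=
        Finset.sum_le_sum_of_subset_of_nonneg (fun k => by simp; lia) fun k _ _ =>
          binomWeight_nonneg hq0 hq1 k

lemma half_mul_binomWeight_le_binomTail_succ (hq0 : 0 ≤ q) (hq1 : q < 1) (hX0 : 0 ≤ X)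
    (hhX : h * X ≤ 1 / 2) (hc : (j : ℝ) + h - m * q ≤ X * ((j + 1) * (1 - q))) :
    (h : ℝ) / 2 * binomWeight m q j ≤ binomTail m q (j + 1) := by
  have hb := binomWeight_nonneg (m := m) hq0 hq1.le
  have half : ∀ t < h, 1 / 2 * binomWeight m q j ≤ binomWeight m q (j + 1 + t) := by
    intro t ht
    have hth : (t : ℝ) + 1 ≤ h := by exact_mod_cast ht
    have hX1 : X ≤ 1 := by nlinarith
    have hbernoulli := one_add_mul_le_pow (a := -X) (by linarith) (t + 1)
    rw [← sub_eq_add_neg] at hbernoulli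
    push_cast at hbernoulli
    calc 1 / 2 * binomWeight m q j ≤ (1 - X) ^ (t + 1) * binomWeight m q j :=
          mul_le_mul_of_nonneg_right (by nlinarith) (hb j)
      _ ≤ binomWeight m q (j + (t + 1)) := one_sub_pow_mul_binomWeight_le hq0 hq1 hX0 hX1 hc ht
      _ = binomWeight m q (j + 1 + t) := by rw [add_right_comm, add_assoc]
  calc (h : ℝ) / 2 * binomWeight m q j
      = ∑ _t ∈ Finset.range h, 1 / 2 * binomWeight m q j := by
        rw [Finset.sum_const, Finset.card_range, nsmul_eq_mul]; ring
    _ ≤ ∑ t ∈ Finset.range h, binomWeight m q (j + 1 + t) :=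
        Finset.sum_le_sum fun t ht => half t (Finset.mem_range.1 ht)
    _ = ∑ k ∈ Finset.Ico (j + 1) (j + 1 + h), binomWeight m q k := by
        rw [Finset.sum_Ico_eq_sum_range, Nat.add_sub_cancel_left]
    _ ≤ binomTail m q (j + 1) := sum_Ico_binomWeight_le_binomTail hq0 hq1.le _ _

lemma binomTail_le_exp_mul_binomTail {m₀ : ℕ} (hq0 : 0 ≤ q) (hq1 : q < 1) (hh : 1 ≤ h)
    (hX0 : 0 ≤ X) (hhX : h * X ≤ 1 / 2) (hm : m₀ ≤ m)
    (hc : (j : ℝ) + h - m₀ * q ≤ X * ((j + 1) * (1 - q))) :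
    binomTail m q (j + 1) ≤ Real.exp (2 * q / h * (m - m₀)) * binomTail m₀ q (j + 1) := by
  have : (0 : ℝ) < h := by exact_mod_cast hh
  induction m, hm using Nat.le_induction with
  | base => simp
  | succ k hk ih =>
    have hkk : (m₀ : ℝ) * q ≤ k * q := by gcongr
    have hhazard : (h : ℝ) / 2 * binomWeight k q j ≤ binomTail k q (j + 1) :=
      half_mul_binomWeight_le_binomTail_succ hq0 hq1 hX0 hhX (by linarith)
    calc binomTail (k + 1) q (j + 1)
        = binomTail k q (j + 1) + 2 * q / h * (h / 2 * binomWeight k q j) := by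
          rw [binomTail_succ_succ]; field_simp
      _ ≤ binomTail k q (j + 1) + 2 * q / h * binomTail k q (j + 1) := by gcongr
      _ = (2 * q / h + 1) * binomTail k q (j + 1) := by ring
      _ ≤ Real.exp (2 * q / h) * (Real.exp (2 * q / h * (k - m₀)) * binomTail m₀ q (j + 1)) := by
          gcongr
          · exact binomTail_nonneg hq0 hq1.le _
          · exact Real.add_one_le_exp _
      _ = Real.exp (2 * q / h * ((k + 1 : ℕ) - m₀)) * binomTail m₀ q (j + 1) := by
          rw [← mul_assoc, ← Real.exp_add]
          push_cast
          ring_nf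

/-- The Poisson weight `P(Poi(b) = l)`, for a real parameter `b`. -/
noncomputable def poissonWeight (b : ℝ) (l : ℕ) : ℝ :=
  Real.exp (-b) * b ^ l / l.factorial

lemma exp_one_le_div_pow (s : ℕ) (hs : s ≠ 0) :
    Real.exp 1 ≤ (((s : ℝ) + 1) / s) ^ (s + 1) := by
  have : (0 : ℝ) < s := by exact_mod_cast hs.bot_lt
  rw [← Real.le_log_iff_exp_le (by positivity), Real.log_pow]
  calc (1 : ℝ) = (s + 1 : ℕ) * (1 - (((s : ℝ) + 1) / s)⁻¹) := by push_cast; field_simp; ring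
    _ ≤ (s + 1 : ℕ) * Real.log (((s : ℝ) + 1) / s) := by
      gcongr
      exact Real.one_sub_inv_le_log_of_pos (by positivity)

lemma monotone_pow_succ_mul_exp_neg_div_factorial :
    Monotone fun r : ℕ => (r : ℝ) ^ (r + 1) * Real.exp (-r) / r.factorial := by
  refine monotone_nat_of_le_succ fun s => ?_
  rcases eq_or_ne s 0 with rfl | hs
  · simp [Real.exp_nonneg]
  have : (0 : ℝ) < s := by exact_mod_cast hs.bot_lt
  have hpow := exp_one_le_div_pow s hs
  rw [div_pow, le_div_iff₀ (by positivity)] at hpow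
  have hexp : Real.exp (-s) = Real.exp 1 * Real.exp (-(s + 1 : ℕ)) := by
    rw [← Real.exp_add]; push_cast; ring_nf
  rw [Nat.factorial_succ, div_le_div_iff₀ (by positivity) (by positivity), hexp]
  push_cast
  calc (s : ℝ) ^ (s + 1) * (Real.exp 1 * Real.exp (-(s + 1))) * ((s + 1) * s.factorial)
      = (Real.exp 1 * (s : ℝ) ^ (s + 1)) * (Real.exp (-(s + 1)) * ((s + 1) * s.factorial)) := by
        ring
    _ ≤ ((s : ℝ) + 1) ^ (s + 1) * (Real.exp (-(s + 1)) * ((s + 1) * s.factorial)) := by gcongr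
    _ = ((s : ℝ) + 1) ^ (s + 1 + 1) * Real.exp (-(s + 1)) * s.factorial := by ring

lemma one_sub_pow_le_exp {i k : ℕ} (hk : k < i) (hq1 : q ≤ 1) :
    (1 - q) ^ (i - k) ≤ (((i - k : ℕ) : ℝ) / i) ^ (i - k) * Real.exp (k - i * q) := by
  have hr : (0 : ℝ) < (i - k : ℕ) := by exact_mod_cast Nat.sub_pos_of_lt hk
  have hi : (0 : ℝ) < i := by exact_mod_cast k.zero_le.trans_lt hk
  have hx : (1 - q) * i / (i - k : ℕ) ≤ Real.exp ((1 - q) * i / (i - k : ℕ) - 1) := by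
    simpa using Real.add_one_le_exp ((1 - q) * i / (i - k : ℕ) - 1)
  calc (1 - q) ^ (i - k)
      = (((i - k : ℕ) : ℝ) / i) ^ (i - k) * ((1 - q) * i / (i - k : ℕ)) ^ (i - k) := by
        rw [← mul_pow]; field_simp
    _ ≤ (((i - k : ℕ) : ℝ) / i) ^ (i - k) *
          Real.exp ((1 - q) * i / (i - k : ℕ) - 1) ^ (i - k) := by
        have : 0 ≤ (1 - q) * i / (i - k : ℕ) := by
          have : 0 ≤ 1 - q := by linarith
          positivity
        gcongr
    _ = (((i - k : ℕ) : ℝ) / i) ^ (i - k) * Real.exp (k - i * q) := by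
        rw [← Real.exp_nat_mul]
        congr 2
        field_simp
        rw [Nat.cast_sub hk.le]
        ring

lemma binomWeight_le_poissonWeight {i k : ℕ} (hk : k < i) (hq0 : 0 ≤ q) (hq1 : q ≤ 1) :
    binomWeight i q k ≤ i / (i - k) * poissonWeight (i * q) k := by
  obtain ⟨r, hr0, rfl⟩ : ∃ r, 0 < r ∧ i = r + k := ⟨i - k, by lia, by lia⟩
  have hstirling := monotone_pow_succ_mul_exp_neg_div_factorial (Nat.le_add_right r k)
  have hexp := one_sub_pow_le_exp hk hq1
  have hr : (0 : ℝ) < r := by exact_mod_cast hr0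
  rw [Nat.add_sub_cancel] at hexp
  set i := r + k with hi
  have hri : (i : ℝ) - k = r := by rw [hi]; push_cast; ring
  set A : ℝ := Real.exp r * i.factorial / (k.factorial * r * i ^ r) * q ^ k *
    Real.exp (k - i * q) with hA
  calc binomWeight i q k
      = i.factorial / (k.factorial * r.factorial) * q ^ k * (1 - q) ^ r := by
        rw [binomWeight, Nat.cast_choose ℝ hk.le, hi, Nat.add_sub_cancel]
    _ ≤ i.factorial / (k.factorial * r.factorial) * q ^ k *
          ((r / i) ^ r * Real.exp (k - i * q)) := by gcongr
    _ = r ^ (r + 1) * Real.exp (-r) / r.factorial * A := by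
        rw [hA, Real.exp_neg, div_pow]
        field_simp
        ring
    _ ≤ i ^ (i + 1) * Real.exp (-i) / i.factorial * A := by gcongr
    _ = i / (i - k) * poissonWeight (i * q) k := by
        have hexp : Real.exp (-(i * q)) = Real.exp (-i) * Real.exp r * Real.exp (k - i * q) := by
          rw [← Real.exp_add, ← Real.exp_add, ← hri]
          ring_nf
        have hpow : (i : ℝ) ^ (i + 1) = i * i ^ r * i ^ k := by
          rw [← pow_succ', ← pow_add, hi]
          ring_nf
        have : (0 : ℝ) < i := by rw [hi]; positivity
        rw [hA, poissonWeight, hexp, hpow, mul_pow, hri]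
        field_simp

end BinomialEstimates

section QuantileSpacing

variable {n l : ℕ} {y t : ℝ}

lemma div_pow_le_exp_mul_sub (k : ℕ) (hy : 0 < y) (ht : 0 ≤ t) :
    (t / y) ^ k ≤ Real.exp (k / y * (t - y)) := by
  have hbase : t / y ≤ Real.exp ((t - y) / y) := by
    simpa [sub_div, hy.ne'] using Real.add_one_le_exp ((t - y) / y)
  calc (t / y) ^ k ≤ Real.exp ((t - y) / y) ^ k := by gcongr
    _ = Real.exp (k / y * (t - y)) := by rw [← Real.exp_nat_mul]; ring_nf

lemma betaDensity_le_binomWeight_mul_exp (hl : l < n) (hy0 : 0 < y) (hy1 : y < 1) (ht0 : 0 ≤ t)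
    (ht1 : t ≤ 1) :
    (n - l) * n.choose l * t ^ l * (1 - t) ^ (n - l - 1) ≤
      binomWeight n y l * ((n - l) / (1 - y)) *
        Real.exp ((l / y - (n - l - 1) / (1 - y)) * (t - y)) := by
  obtain ⟨d, rfl⟩ := Nat.exists_eq_add_of_lt hl
  have hy1' : 0 < 1 - y := sub_pos.2 hy1
  have hcast : ((l + d + 1 : ℕ) : ℝ) - l - 1 = d := by push_cast; ring
  have hratio : ((1 - t) / (1 - y)) ^ d ≤ Real.exp (d / (1 - y) * ((1 - t) - (1 - y))) :=
    div_pow_le_exp_mul_sub d hy1' (sub_nonneg.2 ht1)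
  have hprod : (t / y) ^ l * ((1 - t) / (1 - y)) ^ d ≤
      Real.exp ((l / y - d / (1 - y)) * (t - y)) := by
    calc (t / y) ^ l * ((1 - t) / (1 - y)) ^ d
        ≤ Real.exp (l / y * (t - y)) * Real.exp (d / (1 - y) * ((1 - t) - (1 - y))) := by
          exact mul_le_mul (div_pow_le_exp_mul_sub l hy0 ht0) hratio
            (pow_nonneg (div_nonneg (sub_nonneg.2 ht1) hy1'.le) _) (Real.exp_pos _).le
      _ = Real.exp ((l / y - d / (1 - y)) * (t - y)) := by rw [← Real.exp_add]; ring_nf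
  have hw := binomWeight_nonneg (m := l + d + 1) hy0.le hy1.le l
  have hfactor : ((l + d + 1 : ℕ) - l : ℝ) * (l + d + 1).choose l * t ^ l *
      (1 - t) ^ (l + d + 1 - l - 1) =
      binomWeight (l + d + 1) y l * (((l + d + 1 : ℕ) - l) / (1 - y)) *
        ((t / y) ^ l * ((1 - t) / (1 - y)) ^ d) := by
    rw [binomWeight, show l + d + 1 - l - 1 = d by lia, show l + d + 1 - l = d + 1 by lia,
      div_pow, div_pow]
    field_simp
    ring
  rw [hfactor, hcast]
  gcongr
  exact mul_nonneg hw (div_nonneg (by push_cast; linarith) hy1'.le)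

lemma binomTail_sub_le_exp_sub_one {y' σ : ℝ} (hl : l < n) (hy0 : 0 < y) (hyy' : y ≤ y')
    (hy' : y' < 1) (hσ : σ = l / y - (n - l - 1) / (1 - y)) (hσ0 : σ ≠ 0) :
    binomTail n y' (l + 1) - binomTail n y (l + 1) ≤
      binomWeight n y l * ((n - l) / (1 - y)) / σ * (Real.exp (σ * (y' - y)) - 1) := by
  set C := binomWeight n y l * ((n - l) / (1 - y)) with hC
  have hderiv : ∀ t, HasDerivAt (fun t => binomTail n t (l + 1) - C / σ * Real.exp (σ * (t - y)))
      ((n - l) * n.choose l * t ^ l * (1 - t) ^ (n - l - 1) - C * Real.exp (σ * (t - y))) t := by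
    intro t
    have hexp := ((((hasDerivAt_id t).sub_const y).const_mul σ).exp).const_mul (C / σ)
    convert! (hasDerivAt_binomTail t hl.le).fun_sub hexp using 1
    simp only [id_eq, mul_one]
    field_simp
  have hanti : AntitoneOn (fun t => binomTail n t (l + 1) - C / σ * Real.exp (σ * (t - y)))
      (Icc y y') := by
    refine antitoneOn_of_deriv_nonpos (convex_Icc _ _)
      (fun t _ => (hderiv t).continuousAt.continuousWithinAt)
      (fun t _ => (hderiv t).differentiableAt.differentiableWithinAt) fun t ht => ?_
    rw [interior_Icc] at ht
    rw [(hderiv t).deriv, sub_nonpos, hC, hσ]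
    exact betaDensity_le_binomWeight_mul_exp hl hy0 (hyy'.trans_lt hy')
      (hy0.trans ht.1).le (ht.2.trans hy').le
  have hends := hanti (left_mem_Icc.2 hyy') (right_mem_Icc.2 hyy') hyy'
  simp only [sub_self, mul_zero, Real.exp_zero, mul_one] at hends
  linarith

lemma two_div_le_of_one_le_mul_exp_sub_one {κ σ d : ℝ} (hκ : 0 < κ) (hσ : 0 < σ)
    (h : 1 ≤ κ / σ * (Real.exp (σ * d) - 1)) : 2 / (σ + 2 * κ) ≤ d := by
  have hexp : 1 + σ / κ ≤ Real.exp (σ * d) := by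
    rw [div_mul_eq_mul_div, one_le_div hσ] at h
    have : σ / κ ≤ Real.exp (σ * d) - 1 := by rwa [div_le_iff₀' hκ]
    linarith
  have hlog : Real.log (1 + σ / κ) ≤ σ * d :=
    (Real.log_le_iff_le_exp (by positivity)).2 hexp
  have hlower := Real.le_log_one_add_of_nonneg (x := σ / κ) (by positivity)
  have hrw : 2 * (σ / κ) / (σ / κ + 2) = σ * (2 / (σ + 2 * κ)) := by field_simp
  exact le_of_mul_le_mul_left (by linarith) hσ

lemma two_div_le_sub_of_binomTail_eq {y' : ℝ} (hl : l < n) (hy0 : 0 < y)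
    (hy1 : y < 1) (hy'0 : 0 < y') (hy'1 : y' < 1)
    (h : binomTail n y l = binomTail n y' (l + 1)) (hmean : n * y ≤ l) :
    2 / (l / y + (n - l + 1) / (1 - y)) ≤ y' - y := by
  have hw : 0 < binomWeight n y l := binomWeight_pos hy0 hy1 hl.le
  have hsucc := binomTail_eq_add_succ n y l
  have hlt : y < y' := ((strictMonoOn_binomTail hl).lt_iff_lt ⟨hy0.le, hy1.le⟩
    ⟨hy'0.le, hy'1.le⟩).1 (show binomTail n y (l + 1) < binomTail n y' (l + 1) by linarith)
  have hln : (l : ℝ) < n := by exact_mod_cast hl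
  have hy1' : 0 < 1 - y := sub_pos.2 hy1
  set κ : ℝ := (n - l) / (1 - y) with hκ
  set σ : ℝ := l / y - (n - l - 1) / (1 - y) with hσ
  have hκ0 : 0 < κ := div_pos (sub_pos.2 hln) hy1'
  have hσ0 : 0 < σ := by
    have : σ = (l - n * y + y) / (y * (1 - y)) := by rw [hσ]; field_simp; ring
    rw [this]
    exact div_pos (by linarith) (by positivity)
  have hgap : binomWeight n y l ≤ binomWeight n y l * (κ / σ * (Real.exp (σ * (y' - y)) - 1)) := by
    have := binomTail_sub_le_exp_sub_one hl hy0 hlt.le hy'1 hσ hσ0.ne'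
    rw [← hκ, mul_div_assoc, mul_assoc] at this
    linarith
  have hstep := two_div_le_of_one_le_mul_exp_sub_one hκ0 hσ0 ((le_mul_iff_one_le_right hw).1 hgap)
  rwa [show σ + 2 * κ = l / y + (n - l + 1) / (1 - y) by rw [hσ, hκ]; ring] at hstep

end QuantileSpacing

section Counting

instance (n : ℕ) : IsProbabilityMeasure (nullMeasure n) := by
  have : IsProbabilityMeasure ((volume : Measure ℝ).restrict (Icc 0 1)) := ⟨by simp⟩
  unfold nullMeasure
  infer_instance

/-- The number of sample points below `c`. -/
noncomputable def countBelow {ι : Type*} [Fintype ι] (c : ℝ) (w : ι → ℝ) : ℕ :=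
  (Finset.univ.filter fun k => w k < c).card

variable {ι : Type*} [Fintype ι]

@[fun_prop]
lemma measurable_countBelow (c : ℝ) : Measurable (countBelow c : (ι → ℝ) → ℕ) := by
  unfold countBelow
  simp_rw [Finset.card_filter]
  exact Finset.measurable_fun_sum _ fun k _ => Measurable.ite
    (measurableSet_lt (measurable_pi_apply k) measurable_const) measurable_const measurable_const

lemma countBelow_mono (w : ι → ℝ) : Monotone fun c => countBelow c w := fun _ _ h =>
  Finset.card_le_card <| Finset.monotone_filter_right _ fun _ _ hk => hk.trans_le h

variable {n : ℕ} {S T : Finset (Fin n)} {c c' : ℝ}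

lemma setOf_filter_lt_eq_pi (hT : T ⊆ S) (hc : c' ≤ c) :
    {u : Fin n → ℝ | (∀ k ∈ S, u k < c) ∧ S.filter (fun k => u k < c') = T} =
      Set.pi univ fun k => if k ∈ T then Iio c' else if k ∈ S then Ico c' c else univ := by
  ext u
  simp only [mem_ofPred_eq, Set.mem_pi, mem_univ, true_imp_iff, Finset.ext_iff, Finset.mem_filter,
    ← forall_and]
  refine forall_congr' fun k => ?_
  by_cases hkT : k ∈ T
  · simpa [hkT, hT hkT] using fun h : u k < c' => h.trans_le hc
  · by_cases hkS : k ∈ S <;> simp [hkT, hkS, and_comm]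

lemma measureReal_filter_lt_eq (hT : T ⊆ S) (hc'0 : 0 ≤ c') (hc'c : c' ≤ c) (hc1 : c ≤ 1) :
    (nullMeasure n).real {u | (∀ k ∈ S, u k < c) ∧ S.filter (fun k => u k < c') = T} =
      c' ^ T.card * (c - c') ^ (S.card - T.card) := by
  have hcell : ∀ k, ((volume : Measure ℝ).restrict (Icc 0 1)
      (if k ∈ T then Iio c' else if k ∈ S then Ico c' c else univ)).toReal =
        (if k ∈ T then c' else 1) * if k ∈ S \ T then c - c' else 1 := by
    intro k
    by_cases hkT : k ∈ T
    · have : Iio c' ∩ Icc 0 1 = Ico 0 c' := by ext; simp; grind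
      simp [hkT, Measure.restrict_apply measurableSet_Iio, this, hc'0]
    · by_cases hkS : k ∈ S
      · have : Ico c' c ∩ Icc 0 1 = Ico c' c := by ext; simp; grind
        simp [hkT, hkS, Measure.restrict_apply measurableSet_Ico, this, hc'c]
      · simp [hkT, hkS]
  rw [setOf_filter_lt_eq_pi hT hc'c, nullMeasure, measureReal_def, Measure.pi_pi,
    ENNReal.toReal_prod, Finset.prod_congr rfl fun k _ => hcell k, Finset.prod_mul_distrib,
    Finset.prod_ite_mem, Finset.prod_ite_mem, Finset.univ_inter, Finset.univ_inter,
    Finset.prod_const, Finset.prod_const, Finset.card_sdiff_of_subset hT]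

lemma measurableSet_filter_lt_eq (hT : T ⊆ S) (hc : c' ≤ c) :
    MeasurableSet {u : Fin n → ℝ | (∀ k ∈ S, u k < c) ∧ S.filter (fun k => u k < c') = T} := by
  rw [setOf_filter_lt_eq_pi hT hc]
  refine MeasurableSet.univ_pi fun k => ?_
  split_ifs <;> measurability

lemma pow_mul_binomWeight_div {k t : ℕ} (hc : c ≠ 0) (ht : t ≤ k) :
    c ^ k * binomWeight k (c' / c) t = k.choose t * (c' ^ t * (c - c') ^ (k - t)) := by
  have hpow : c ^ k = c ^ t * c ^ (k - t) := by rw [← pow_add, Nat.add_sub_cancel' ht]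
  rw [binomWeight, one_sub_div hc, div_pow, div_pow, hpow]
  field_simp

lemma measureReal_forall_lt_and_le_card_filter (S : Finset (Fin n)) (j : ℕ) (hc0 : 0 < c)
    (hc'0 : 0 ≤ c') (hc'c : c' ≤ c) (hc1 : c ≤ 1) :
    (nullMeasure n).real {u | (∀ k ∈ S, u k < c) ∧ j ≤ (S.filter fun k => u k < c').card} =
      c ^ S.card * binomTail S.card (c' / c) j := by
  have hfibres : {u : Fin n → ℝ | (∀ k ∈ S, u k < c) ∧ j ≤ (S.filter fun k => u k < c').card} =
      ⋃ T ∈ S.powerset.filter (j ≤ ·.card),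
        {u | (∀ k ∈ S, u k < c) ∧ S.filter (fun k => u k < c') = T} := by
    ext u
    simp
  have hcard : ∀ t ∈ Finset.range (S.card + 1),
      ∑ T ∈ Finset.powersetCard t S,
        (if j ≤ T.card then c' ^ T.card * (c - c') ^ (S.card - T.card) else 0) =
      if j ≤ t then c ^ S.card * binomWeight S.card (c' / c) t else 0 := by
    intro t ht
    rw [pow_mul_binomWeight_div hc0.ne' (Nat.lt_succ_iff.1 (Finset.mem_range.1 ht)),
      Finset.sum_congr rfl fun T hT => by rw [(Finset.mem_powersetCard.1 hT).2],
      Finset.sum_const, Finset.card_powersetCard, nsmul_eq_mul, mul_ite, mul_zero]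
  have hindex : (Finset.range (S.card + 1)).filter (j ≤ ·) = Finset.Icc j S.card := by
    ext; simp; lia
  rw [hfibres, measureReal_biUnion_finset
    (fun T _ T' _ hne => Set.disjoint_left.2 fun u hu hu' => hne (hu.2.symm.trans hu'.2))
    fun T hT => measurableSet_filter_lt_eq
      (Finset.mem_powerset.1 (Finset.mem_filter.1 hT).1) hc'c,
    Finset.sum_congr rfl fun T hT => measureReal_filter_lt_eq
      (Finset.mem_powerset.1 (Finset.mem_filter.1 hT).1) hc'0 hc'c hc1,
    Finset.sum_filter, Finset.sum_powerset, Finset.sum_congr rfl hcard, ← Finset.sum_filter,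
    hindex, ← Finset.mul_sum, binomTail]

end Counting

section MarkovProperty

variable {n : ℕ} {S T : Finset (Fin n)} {L : Finset ℕ} {c : ℕ → ℝ} {s t : ℝ}

lemma countBelow_restrict (S : Finset (Fin n)) (t : ℝ) (u : Fin n → ℝ) :
    countBelow t (S.restrict u) = (S.filter fun k => u k < t).card := by
  rw [countBelow, Finset.card_filter, Finset.card_filter]
  exact Finset.sum_coe_sort S fun k => if u k < t then 1 else 0

lemma countBelow_eq_restrict_add (S : Finset (Fin n)) (t : ℝ) (u : Fin n → ℝ) :
    countBelow t u = countBelow t (S.restrict u) + countBelow t (Sᶜ.restrict u) := by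
  rw [countBelow_restrict, countBelow_restrict, countBelow, Finset.card_filter,
    Finset.card_filter, Finset.card_filter, Finset.sum_add_sum_compl]

lemma measureReal_inter_preimage_restrict (hST : Disjoint S T) {A : Set (S → ℝ)}
    {B : Set (T → ℝ)} (hA : MeasurableSet A) (hB : MeasurableSet B) :
    (nullMeasure n).real (S.restrict ⁻¹' A ∩ T.restrict ⁻¹' B) =
      (nullMeasure n).real (S.restrict ⁻¹' A) * (nullMeasure n).real (T.restrict ⁻¹' B) := by
  have : IsProbabilityMeasure ((volume : Measure ℝ).restrict (Icc 0 1)) := ⟨by simp⟩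
  have hindep := ProbabilityTheory.iIndepFun_pi (ι := Fin n)
    (μ := fun _ => (volume : Measure ℝ).restrict (Icc 0 1)) (X := fun _ => (id : ℝ → ℝ))
    fun _ => aemeasurable_id
  have hmul := congrArg ENNReal.toReal <| (hindep.indepFun_finset S T hST fun i => by
    fun_prop).measure_inter_preimage_eq_mul A B hA hB
  rwa [ENNReal.toReal_mul] at hmul

/-- The points inside `S`: all are below `t`, and at least `j` of them are below `s`. -/
def insideEvent (S : Finset (Fin n)) (s t : ℝ) (j : ℕ) : Set (S → ℝ) :=
  {w | (∀ k, w k < t) ∧ j ≤ countBelow s w}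

/-- The points outside `S`: all are at least `t`, and together with `#S` points below `t` they
keep the count at every level `c l`, `l ∈ L`, under `l`. -/
def outsideEvent (S : Finset (Fin n)) (c : ℕ → ℝ) (L : Finset ℕ) (t : ℝ) :
    Set ((Sᶜ : Finset (Fin n)) → ℝ) :=
  {w | (∀ k, t ≤ w k) ∧ ∀ l ∈ L, S.card + countBelow (c l) w < l}

lemma measurableSet_insideEvent (S : Finset (Fin n)) (s t : ℝ) (j : ℕ) :
    MeasurableSet (insideEvent S s t j) := by
  unfold insideEvent
  measurability

lemma measurableSet_outsideEvent (S : Finset (Fin n)) (c : ℕ → ℝ) (L : Finset ℕ) (t : ℝ) :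
    MeasurableSet (outsideEvent S c L t) := by
  unfold outsideEvent
  measurability

lemma filter_lt_eq_iff {u : Fin n → ℝ} :
    Finset.univ.filter (fun k => u k < t) = S ↔
      (∀ k : S, S.restrict u k < t) ∧ ∀ k : (Sᶜ : Finset (Fin n)), t ≤ Sᶜ.restrict u k := by
  simp only [Finset.ext_iff, Finset.mem_filter, Finset.mem_univ, true_and, Finset.restrict,
    Subtype.forall, Finset.mem_compl, ← not_lt]
  grind

lemma setOf_filter_lt_eq_and_eq_inter (hst : s ≤ t) (hL : ∀ l ∈ L, t ≤ c l) (j : ℕ)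
    (S : Finset (Fin n)) :
    {u : Fin n → ℝ | Finset.univ.filter (fun k => u k < t) = S ∧
        (∀ l ∈ L, countBelow (c l) u < l) ∧ j ≤ countBelow s u} =
      S.restrict ⁻¹' insideEvent S s t j ∩ Sᶜ.restrict ⁻¹' outsideEvent S c L t := by
  ext u
  simp only [mem_ofPred_eq, mem_inter_iff, mem_preimage, insideEvent, outsideEvent,
    filter_lt_eq_iff]
  have hcounts : (∀ k : S, S.restrict u k < t) → (∀ k, t ≤ Sᶜ.restrict u k) →
      (∀ l ∈ L, countBelow (c l) (S.restrict u) = S.card) ∧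
        countBelow s (Sᶜ.restrict u) = 0 := by
    intro hin hout
    constructor
    · intro l hl
      rw [countBelow, Finset.filter_true_of_mem fun k _ => (hin k).trans_le (hL l hl)]
      simp
    · rw [countBelow, Finset.filter_false_of_mem fun k _ => not_lt.2 (hst.trans (hout k)),
        Finset.card_empty]
  simp only [countBelow_eq_restrict_add S _ u]
  grind

lemma measureReal_preimage_insideEvent (hs : 0 ≤ s) (hst : s ≤ t) (ht0 : 0 < t) (ht1 : t ≤ 1)
    (j : ℕ) (S : Finset (Fin n)) :
    (nullMeasure n).real (S.restrict ⁻¹' insideEvent S s t j) =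
      t ^ S.card * binomTail S.card (s / t) j := by
  rw [← measureReal_forall_lt_and_le_card_filter S j ht0 hs hst ht1]
  congr 1
  ext u
  simp [insideEvent, countBelow_restrict]

lemma measurableSet_forall_countBelow_lt (c : ℕ → ℝ) (L : Finset ℕ) :
    MeasurableSet {u : Fin n → ℝ | ∀ l ∈ L, countBelow (c l) u < l} := by
  measurability

lemma measureReal_filter_lt_eq_and (hs : 0 ≤ s) (hst : s ≤ t) (ht0 : 0 < t) (ht1 : t ≤ 1)
    (hL : ∀ l ∈ L, t ≤ c l) (j : ℕ) (S : Finset (Fin n)) :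
    (nullMeasure n).real {u | Finset.univ.filter (fun k => u k < t) = S ∧
        (∀ l ∈ L, countBelow (c l) u < l) ∧ j ≤ countBelow s u} =
      (nullMeasure n).real {u | Finset.univ.filter (fun k => u k < t) = S ∧
        (∀ l ∈ L, countBelow (c l) u < l) ∧ 0 ≤ countBelow s u} *
      binomTail S.card (s / t) j := by
  simp only [setOf_filter_lt_eq_and_eq_inter hst hL, measureReal_inter_preimage_restrict
    disjoint_compl_right (measurableSet_insideEvent S s t _) (measurableSet_outsideEvent S c L t),
    measureReal_preimage_insideEvent hs hst ht0 ht1, binomTail_zero]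
  ring

lemma measureReal_countBelow_eq_and (k j : ℕ) :
    (nullMeasure n).real {u | countBelow t u = k ∧
        (∀ l ∈ L, countBelow (c l) u < l) ∧ j ≤ countBelow s u} =
      ∑ S ∈ Finset.powersetCard k Finset.univ,
        (nullMeasure n).real {u | Finset.univ.filter (fun k => u k < t) = S ∧
          (∀ l ∈ L, countBelow (c l) u < l) ∧ j ≤ countBelow s u} := by
  have hmeas : ∀ S ∈ Finset.powersetCard k (Finset.univ : Finset (Fin n)),
      MeasurableSet {u : Fin n → ℝ | Finset.univ.filter (fun k => u k < t) = S ∧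
        (∀ l ∈ L, countBelow (c l) u < l) ∧ j ≤ countBelow s u} := by
    intro S _
    simp only [Finset.ext_iff, Finset.mem_filter, Finset.mem_univ, true_and]
    measurability
  rw [← measureReal_biUnion_finset
    (fun S _ S' _ hne => Set.disjoint_left.2 fun u hu hu' => hne (hu.1.symm.trans hu'.1)) hmeas]
  congr 1
  ext u
  simp [countBelow, Finset.mem_powersetCard]
  tauto

/-- Given their number, the points below `t` are uniform on `[0, t)` and independent of the points
above `t`. -/
lemma markov_countBelow (hs : 0 ≤ s) (hst : s ≤ t) (ht0 : 0 < t) (ht1 : t ≤ 1)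
    (hL : ∀ l ∈ L, t ≤ c l) (k j : ℕ) :
    (nullMeasure n).real {u | countBelow t u = k ∧
        (∀ l ∈ L, countBelow (c l) u < l) ∧ j ≤ countBelow s u} =
      (nullMeasure n).real {u | countBelow t u = k ∧ ∀ l ∈ L, countBelow (c l) u < l} *
        binomTail k (s / t) j := by
  have hdrop : {u : Fin n → ℝ | countBelow t u = k ∧ ∀ l ∈ L, countBelow (c l) u < l} =
      {u | countBelow t u = k ∧ (∀ l ∈ L, countBelow (c l) u < l) ∧ 0 ≤ countBelow s u} := by
    simp
  rw [hdrop, measureReal_countBelow_eq_and, measureReal_countBelow_eq_and, Finset.sum_mul]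
  refine Finset.sum_congr rfl fun S hS => ?_
  rw [measureReal_filter_lt_eq_and hs hst ht0 ht1 hL, (Finset.mem_powersetCard.1 hS).2]

lemma countBelow_le (t : ℝ) (u : Fin n → ℝ) : countBelow t u ≤ n :=
  (Finset.card_filter_le _ _).trans (Finset.card_fin n).le

lemma ae_nullMeasure_forall_lt_one (n : ℕ) : ∀ᵐ u ∂nullMeasure n, ∀ k, u k < 1 := by
  have : IsProbabilityMeasure ((volume : Measure ℝ).restrict (Icc 0 1)) := ⟨by simp⟩
  have hone : ∀ᵐ x ∂(volume : Measure ℝ).restrict (Icc 0 1), x < 1 := by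
    rw [← Measure.restrict_congr_set Ico_ae_eq_Icc]
    exact (ae_restrict_mem measurableSet_Ico).mono fun x hx => hx.2
  exact ae_all_iff.2 fun k => (Measure.quasiMeasurePreserving_eval
    (fun _ : Fin n => (volume : Measure ℝ).restrict (Icc 0 1)) k).ae hone

lemma measureReal_le_countBelow (ht0 : 0 ≤ t) (ht1 : t ≤ 1) (j : ℕ) :
    (nullMeasure n).real {u | j ≤ countBelow t u} = binomTail n t j := by
  have hlaw := measureReal_forall_lt_and_le_card_filter (n := n) Finset.univ j one_pos ht0 ht1
    le_rfl
  rw [Finset.card_univ, Fintype.card_fin, one_pow, one_mul, div_one] at hlaw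
  rw [← hlaw]
  refine measureReal_congr ?_
  filter_upwards [ae_nullMeasure_forall_lt_one n] with u hu
  exact propext ⟨fun h => ⟨fun k _ => hu k, h⟩, fun h => h.2⟩

lemma measureReal_countBelow_eq (ht0 : 0 ≤ t) (ht1 : t ≤ 1) (k : ℕ) :
    (nullMeasure n).real {u | countBelow t u = k} = binomWeight n t k := by
  have hdiff : {u : Fin n → ℝ | countBelow t u = k} =
      {u | k ≤ countBelow t u} \ {u | k + 1 ≤ countBelow t u} := by
    ext u
    simp only [mem_ofPred_eq, Set.mem_sdiff]
    lia
  have hsub : {u : Fin n → ℝ | k + 1 ≤ countBelow t u} ⊆ {u | k ≤ countBelow t u} :=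
    fun u hu => (Nat.le_succ k).trans hu
  rw [hdiff, measureReal_sdiff hsub (measurableSet_le measurable_const (measurable_countBelow t)),
    measureReal_le_countBelow ht0 ht1, measureReal_le_countBelow ht0 ht1,
    binomTail_eq_add_succ n t k, add_sub_cancel_right]

end MarkovProperty

section QuantileFamily

variable {n : ℕ} {p : ℝ} {c : ℕ → ℝ}

/-- `c j` is the `p`-quantile of the `j`-th order statistic: the level `U_(j)` falls below with
probability `p`. The values of `c` outside `1, …, n` are irrelevant. -/
structure IsQuantileFamily (n : ℕ) (p : ℝ) (c : ℕ → ℝ) : Prop where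
  pos : ∀ ⦃j⦄, 1 ≤ j → j ≤ n → 0 < c j
  lt_one : ∀ ⦃j⦄, 1 ≤ j → j ≤ n → c j < 1
  binomTail_eq : ∀ ⦃j⦄, 1 ≤ j → j ≤ n → binomTail n (c j) j = p

lemma exists_isQuantileFamily (n : ℕ) (hp0 : 0 < p) (hp1 : p < 1) :
    ∃ c, IsQuantileFamily n p c := by
  have hquantile : ∀ j, ∃ x, 1 ≤ j → j ≤ n → 0 < x ∧ x < 1 ∧ binomTail n x j = p := by
    rintro (_ | j)
    · exact ⟨0, fun h => absurd h (by simp)⟩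
    · rcases lt_or_ge j n with hj | hj
      · obtain ⟨x, hx⟩ := exists_binomTail_eq hj hp0 hp1
        exact ⟨x, fun _ _ => hx⟩
      · exact ⟨0, fun _ h => absurd h (by lia)⟩
  choose c hc using hquantile
  exact ⟨c, fun j h1 hn => (hc j h1 hn).1, fun j h1 hn => (hc j h1 hn).2.1,
    fun j h1 hn => (hc j h1 hn).2.2⟩

lemma orderStat_lt_of_le_countBelow {u : Fin n → ℝ} {t : ℝ} {j : ℕ} (hjn : j < n)
    (h : j + 1 ≤ countBelow t u) : orderStat u ⟨j, hjn⟩ < t := by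
  by_contra! hge
  have hsub : (Finset.univ.filter fun k => u k < t) ⊆
      (Finset.Iio ⟨j, hjn⟩).map (Tuple.sort u).toEmbedding := by
    intro k hk
    rw [Finset.mem_map_equiv, Finset.mem_Iio]
    by_contra! hle
    have hsorted := Tuple.monotone_sort u hle
    simp only [Function.comp, Equiv.apply_symm_apply] at hsorted
    exact (hge.trans hsorted).not_gt (Finset.mem_filter.1 hk).2
  have hcard := Finset.card_le_card hsub
  rw [Finset.card_map, Fin.card_Iio] at hcard
  exact (h.trans hcard).not_gt (Nat.lt_succ_self j)

namespace IsQuantileFamily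

lemma nonneg (h : IsQuantileFamily n p c) {j : ℕ} (hj : 1 ≤ j) (hjn : j ≤ n) : 0 ≤ c j :=
  (h.pos hj hjn).le

lemma le_one (h : IsQuantileFamily n p c) {j : ℕ} (hj : 1 ≤ j) (hjn : j ≤ n) : c j ≤ 1 :=
  (h.lt_one hj hjn).le

lemma lt (h : IsQuantileFamily n p c) {j j' : ℕ} (hj : 1 ≤ j) (hjj' : j < j') (hj'n : j' ≤ n) :
    c j < c j' := by
  have hjn : j ≤ n := by lia
  have hj' : 1 ≤ j' := by lia
  by_contra! hle
  have hmono := monotoneOn_binomTail n j' ⟨h.nonneg hj' hj'n, h.le_one hj' hj'n⟩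
    ⟨h.nonneg hj hjn, h.le_one hj hjn⟩ hle
  have hanti := binomTail_antitone (m := n) (h.nonneg hj hjn) (h.le_one hj hjn) hjj'
  have hweight := binomWeight_pos (h.pos hj hjn) (h.lt_one hj hjn) hjn
  have hsplit := binomTail_eq_add_succ n (c j) j
  rw [h.binomTail_eq hj hjn] at hsplit
  simp only [h.binomTail_eq hj' hj'n] at hmono
  linarith

lemma le (h : IsQuantileFamily n p c) {j j' : ℕ} (hj : 1 ≤ j) (hjj' : j ≤ j') (hj'n : j' ≤ n) :
    c j ≤ c j' := by
  rcases hjj'.eq_or_lt with rfl | hlt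
  · exact le_rfl
  · exact (h.lt hj hlt hj'n).le

lemma div_pos (h : IsQuantileFamily n p c) {i j : ℕ} (hj : 1 ≤ j) (hji : j ≤ i) (hi : i ≤ n) :
    0 < c j / c i :=
  _root_.div_pos (h.pos hj (hji.trans hi)) (h.pos (hj.trans hji) hi)

lemma div_le_one (h : IsQuantileFamily n p c) {i j : ℕ} (hj : 1 ≤ j) (hji : j ≤ i)
    (hi : i ≤ n) : c j / c i ≤ 1 :=
  (_root_.div_le_one (h.pos (hj.trans hji) hi)).2 (h.le hj hji hi)

lemma pOrd_lt (h : IsQuantileFamily n p c) (hp : 0 < p) {u : Fin n → ℝ} {j : ℕ} (hjn : j < n)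
    (hu : orderStat u ⟨j, hjn⟩ < c (j + 1)) : pOrd u ⟨j, hjn⟩ < p := by
  have hc1 := h.le_one (Nat.le_add_left 1 j) hjn
  rcases le_or_gt (orderStat u ⟨j, hjn⟩) 0 with h0 | h0
  · simpa [pOrd, regIncBeta, Ioc_eq_empty h0.not_gt] using hp
  · rw [pOrd, regIncBeta_eq_binomTail hjn h0.le, ← h.binomTail_eq (Nat.le_add_left 1 j) hjn]
    exact strictMonoOn_binomTail hjn ⟨h0.le, hu.le.trans hc1⟩ ⟨h0.le.trans hu.le, hc1⟩ hu

lemma countBelow_lt_of_le_MnPlus (h : IsQuantileFamily n p c) (hp : 0 < p) {u : Fin n → ℝ}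
    (hM : p ≤ MnPlus u) {j : ℕ} (hj : 1 ≤ j) (hjn : j ≤ n) : countBelow (c j) u < j := by
  obtain ⟨j, rfl⟩ := Nat.exists_eq_add_of_le' hj
  by_contra! hle
  have hMn : MnPlus u ≤ pOrd u ⟨j, hjn⟩ := ciInf_le (Set.finite_range _).bddBelow _
  exact (hM.trans hMn).not_gt (h.pOrd_lt hp hjn (orderStat_lt_of_le_countBelow hjn hle))

end IsQuantileFamily

end QuantileFamily

section Renewal

variable {n : ℕ} {p : ℝ} {c : ℕ → ℝ}

/-- Up to the index `b`, the last crossing, i.e. the last `i` with at least `i` points below `c i`,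
happens at `i`. Since `c` increases, exactly `i` points are then below `c i`. -/
def lastCrossing (n : ℕ) (c : ℕ → ℝ) (b i : ℕ) : Set (Fin n → ℝ) :=
  {u | countBelow (c i) u = i ∧ ∀ l ∈ Finset.Ioc i b, countBelow (c l) u < l}

/-- The probability of `lastCrossing n c b i`. -/
noncomputable def lastCrossingProb (n : ℕ) (c : ℕ → ℝ) (b i : ℕ) : ℝ :=
  (nullMeasure n).real (lastCrossing n c b i)

lemma lastCrossingProb_nonneg (n : ℕ) (c : ℕ → ℝ) (b i : ℕ) : 0 ≤ lastCrossingProb n c b i :=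
  measureReal_nonneg

lemma measurableSet_countBelow_eq (t : ℝ) (k : ℕ) :
    MeasurableSet {u : Fin n → ℝ | countBelow t u = k} :=
  measurableSet_eq_fun (measurable_countBelow t) measurable_const

lemma measurableSet_le_countBelow (t : ℝ) (k : ℕ) :
    MeasurableSet {u : Fin n → ℝ | k ≤ countBelow t u} :=
  measurableSet_le measurable_const (measurable_countBelow t)

lemma measurableSet_lastCrossing (n : ℕ) (c : ℕ → ℝ) (b i : ℕ) :
    MeasurableSet (lastCrossing n c b i) :=
  (measurableSet_countBelow_eq _ _).inter (measurableSet_forall_countBelow_lt _ _)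

lemma pairwiseDisjoint_lastCrossing (n : ℕ) (c : ℕ → ℝ) (b : ℕ) :
    (Iio b).PairwiseDisjoint (lastCrossing n c b) := by
  intro i hi i' hi' hne
  refine Set.disjoint_left.2 ?_
  rintro u ⟨hu, hlater⟩ ⟨hu', hlater'⟩
  rcases hne.lt_or_gt with hlt | hlt
  · exact (hlater i' (Finset.mem_Ioc.2 ⟨hlt, le_of_lt hi'⟩)).ne hu'
  · exact (hlater' i (Finset.mem_Ioc.2 ⟨hlt, le_of_lt hi⟩)).ne hu

lemma measureReal_forall_countBelow_lt_add_sum_lastCrossingProb_le_one (n : ℕ) (c : ℕ → ℝ)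
    (a b : ℕ) :
    (nullMeasure n).real {u | ∀ l ∈ Finset.Icc a b, countBelow (c l) u < l} +
      ∑ i ∈ Finset.Ico a b, lastCrossingProb n c b i ≤ 1 := by
  have hmeas : ∀ i ∈ Finset.Ico a b, MeasurableSet (lastCrossing n c b i) :=
    fun i _ => measurableSet_lastCrossing n c b i
  have hdisj : Disjoint {u : Fin n → ℝ | ∀ l ∈ Finset.Icc a b, countBelow (c l) u < l}
      (⋃ i ∈ Finset.Ico a b, lastCrossing n c b i) := by
    refine Set.disjoint_left.2 fun u hu hcross => ?_
    obtain ⟨i, hi, hui, -⟩ := mem_iUnion₂.1 hcross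
    rw [Finset.mem_Ico] at hi
    exact (hu i (Finset.mem_Icc.2 ⟨hi.1, hi.2.le⟩)).ne hui
  simp only [lastCrossingProb]
  rw [← measureReal_biUnion_finset ((pairwiseDisjoint_lastCrossing n c b).subset fun i hi =>
    (Finset.mem_Ico.1 hi).2) hmeas, ← measureReal_union hdisj
    (Finset.measurableSet_biUnion _ hmeas) (measure_ne_top _ _) (measure_ne_top _ _)]
  exact measureReal_le_one

namespace IsQuantileFamily

lemma exists_mem_lastCrossing_or_le (h : IsQuantileFamily n p c) {j b : ℕ} (hj : 1 ≤ j)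
    (hjb : j < b) (hb : b ≤ n) {u : Fin n → ℝ} (hu : j ≤ countBelow (c j) u) :
    (∃ i ∈ Finset.Ico j b, u ∈ lastCrossing n c b i) ∨ b ≤ countBelow (c b) u := by
  obtain ⟨i, hi, hmax⟩ := ((Finset.Icc j b).filter fun l => l ≤ countBelow (c l) u).exists_max_image
    id ⟨j, by simp [hu, hjb.le]⟩
  simp only [Finset.mem_filter, Finset.mem_Icc, id] at hi hmax
  have hlater : ∀ l ∈ Finset.Ioc i b, countBelow (c l) u < l := by
    intro l hl
    rw [Finset.mem_Ioc] at hl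
    by_contra! hcon
    exact (hmax l ⟨⟨by lia, hl.2⟩, hcon⟩).not_gt hl.1
  rcases hi.1.2.eq_or_lt with rfl | hib
  · exact Or.inr hi.2
  · refine Or.inl ⟨i, Finset.mem_Ico.2 ⟨hi.1.1, hib⟩, le_antisymm ?_ hi.2, hlater⟩
    have hnext := hlater (i + 1) (Finset.mem_Ioc.2 ⟨i.lt_succ_self, hib⟩)
    have hmono := countBelow_mono u (h.le (hj.trans hi.1.1) i.le_succ (hib.trans_le hb))
    exact Nat.lt_succ_iff.1 (hmono.trans_lt hnext)

lemma setOf_le_countBelow_eq_union (h : IsQuantileFamily n p c) {j b : ℕ} (hj : 1 ≤ j)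
    (hjb : j < b) (hb : b ≤ n) :
    {u : Fin n → ℝ | j ≤ countBelow (c j) u} =
      (⋃ i ∈ Finset.Ico j b, lastCrossing n c b i ∩ {u | j ≤ countBelow (c j) u}) ∪
        {u | b ≤ countBelow (c b) u ∧ j ≤ countBelow (c j) u} := by
  ext u
  have hcases := h.exists_mem_lastCrossing_or_le hj hjb hb (u := u)
  simp only [mem_ofPred_eq, mem_union, mem_iUnion₂, mem_inter_iff, exists_prop]
  grind

lemma measureReal_lastCrossing_inter (h : IsQuantileFamily n p c) {i j b : ℕ} (hj : 1 ≤ j)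
    (hji : j ≤ i) (hib : i < b) (hb : b ≤ n) :
    (nullMeasure n).real (lastCrossing n c b i ∩ {u | j ≤ countBelow (c j) u}) =
      lastCrossingProb n c b i * binomTail i (c j / c i) j := by
  have hi : 1 ≤ i := hj.trans hji
  have hin : i ≤ n := hib.le.trans hb
  rw [lastCrossingProb, lastCrossing, ← markov_countBelow (h.nonneg hj (hji.trans hin))
    (h.le hj hji hin) (h.pos hi hin) (h.le_one hi hin)
    (fun l hl => h.le hi (Finset.mem_Ioc.1 hl).1.le ((Finset.mem_Ioc.1 hl).2.trans hb))]
  congr 1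
  ext u
  simp [and_assoc]

lemma eq_sum_lastCrossingProb_mul_add (h : IsQuantileFamily n p c) {j b : ℕ} (hj : 1 ≤ j)
    (hjb : j < b) (hb : b ≤ n) :
    p = ∑ i ∈ Finset.Ico j b, lastCrossingProb n c b i * binomTail i (c j / c i) j +
      (nullMeasure n).real {u | b ≤ countBelow (c b) u ∧ j ≤ countBelow (c j) u} := by
  have hjn : j ≤ n := hjb.le.trans hb
  have hdisj : Disjoint
      (⋃ i ∈ Finset.Ico j b, lastCrossing n c b i ∩ {u : Fin n → ℝ | j ≤ countBelow (c j) u})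
      {u | b ≤ countBelow (c b) u ∧ j ≤ countBelow (c j) u} := by
    refine Set.disjoint_left.2 fun u hcross hlast => ?_
    obtain ⟨i, hi, ⟨-, hlater⟩, -⟩ := mem_iUnion₂.1 hcross
    exact (hlater b (Finset.mem_Ioc.2 ⟨(Finset.mem_Ico.1 hi).2, le_rfl⟩)).not_ge hlast.1
  calc p = (nullMeasure n).real {u | j ≤ countBelow (c j) u} := by
        rw [measureReal_le_countBelow (h.nonneg hj hjn) (h.le_one hj hjn), h.binomTail_eq hj hjn]
    _ = ∑ i ∈ Finset.Ico j b,
          (nullMeasure n).real (lastCrossing n c b i ∩ {u | j ≤ countBelow (c j) u}) +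
        (nullMeasure n).real {u | b ≤ countBelow (c b) u ∧ j ≤ countBelow (c j) u} := by
        rw [congrArg (nullMeasure n).real (h.setOf_le_countBelow_eq_union hj hjb hb),
          measureReal_union hdisj ((measurableSet_le_countBelow _ _).inter
            (measurableSet_le_countBelow _ _)) (measure_ne_top _ _) (measure_ne_top _ _),
          measureReal_biUnion_finset]
        · exact ((pairwiseDisjoint_lastCrossing n c b).subset fun i hi =>
            (Finset.mem_Ico.1 hi).2).mono_on fun i _ => inter_subset_left
        · exact fun i _ => (measurableSet_lastCrossing n c b i).inter
            (measurableSet_le_countBelow _ _)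
    _ = _ := by
        congr 1
        refine Finset.sum_congr rfl fun i hi => ?_
        rw [Finset.mem_Ico] at hi
        exact h.measureReal_lastCrossing_inter hj hi.1 hi.2 hb

lemma measureReal_countBelow_eq_and_le (h : IsQuantileFamily n p c) {i j k : ℕ} (hj : 1 ≤ j)
    (hji : j ≤ i) (hi : i ≤ n) :
    (nullMeasure n).real {u | countBelow (c i) u = k ∧ j ≤ countBelow (c j) u} =
      binomWeight n (c i) k * binomTail k (c j / c i) j := by
  have h1i := hj.trans hji
  have hmarkov := markov_countBelow (n := n) (c := c) (L := ∅) (h.nonneg hj (hji.trans hi))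
    (h.le hj hji hi) (h.pos h1i hi) (h.le_one h1i hi) (by simp) k j
  simp only [Finset.notMem_empty, false_imp_iff, implies_true, true_and, and_true] at hmarkov
  rw [hmarkov, measureReal_countBelow_eq (h.nonneg h1i hi) (h.le_one h1i hi)]

lemma binomTail_mul_binomTail_div_le (h : IsQuantileFamily n p c) {i j : ℕ} (m : ℕ) (hj : 1 ≤ j)
    (hji : j ≤ i) (hi : i ≤ n) :
    binomTail n (c i) m * binomTail m (c j / c i) j ≤ p := by
  have h1i := hj.trans hji
  have hjn := hji.trans hi
  calc binomTail n (c i) m * binomTail m (c j / c i) j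
      ≤ ∑ k ∈ Finset.Icc m n, binomWeight n (c i) k * binomTail k (c j / c i) j := by
        rw [binomTail, Finset.sum_mul]
        refine Finset.sum_le_sum fun k hk => mul_le_mul_of_nonneg_left ?_
          (binomWeight_nonneg (h.nonneg h1i hi) (h.le_one h1i hi) k)
        exact monotone_binomTail_trials (h.div_pos hj hji hi).le (h.div_le_one hj hji hi) j
          (Finset.mem_Icc.1 hk).1
    _ = ∑ k ∈ Finset.Icc m n,
          (nullMeasure n).real {u | countBelow (c i) u = k ∧ j ≤ countBelow (c j) u} :=
        Finset.sum_congr rfl fun k _ => (h.measureReal_countBelow_eq_and_le hj hji hi).symm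
    _ = (nullMeasure n).real
          (⋃ k ∈ Finset.Icc m n, {u | countBelow (c i) u = k ∧ j ≤ countBelow (c j) u}) := by
        rw [measureReal_biUnion_finset]
        · exact fun k _ k' _ hne =>
            Set.disjoint_left.2 fun u hu hu' => hne (hu.1.symm.trans hu'.1)
        · exact fun k _ => (measurableSet_countBelow_eq _ _).inter (measurableSet_le_countBelow _ _)
    _ ≤ (nullMeasure n).real {u | j ≤ countBelow (c j) u} :=
        measureReal_mono (iUnion₂_subset fun k _ u hu => hu.2)
    _ = p := by
        rw [measureReal_le_countBelow (h.nonneg hj hjn) (h.le_one hj hjn), h.binomTail_eq hj hjn]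

lemma sum_measureReal_countBelow_eq_and_le (h : IsQuantileFamily n p c) {b j : ℕ} (m : ℕ)
    (hj : 1 ≤ j) (hjb : j ≤ b) (hb : b ≤ n) :
    ∑ k ∈ (Finset.Icc b n).filter (· < m),
        (nullMeasure n).real {u | countBelow (c b) u = k ∧ j ≤ countBelow (c j) u} ≤
      p * binomTail m (c j / c b) j := by
  have h1b := hj.trans hjb
  have hweight := binomWeight_nonneg (m := n) (h.nonneg h1b hb) (h.le_one h1b hb)
  have hr0 := (h.div_pos hj hjb hb).le
  have hr1 := h.div_le_one hj hjb hb
  calc _ = ∑ k ∈ (Finset.Icc b n).filter (· < m),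
          binomWeight n (c b) k * binomTail k (c j / c b) j :=
        Finset.sum_congr rfl fun k _ => h.measureReal_countBelow_eq_and_le hj hjb hb
    _ ≤ ∑ k ∈ (Finset.Icc b n).filter (· < m),
          binomWeight n (c b) k * binomTail m (c j / c b) j :=
        Finset.sum_le_sum fun k hk => mul_le_mul_of_nonneg_left
          (monotone_binomTail_trials hr0 hr1 j (Finset.mem_filter.1 hk).2.le) (hweight k)
    _ ≤ ∑ k ∈ Finset.Icc b n, binomWeight n (c b) k * binomTail m (c j / c b) j :=
        Finset.sum_le_sum_of_subset_of_nonneg (Finset.filter_subset _ _)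
          fun k _ _ => mul_nonneg (hweight k) (binomTail_nonneg hr0 hr1 j)
    _ = p * binomTail m (c j / c b) j := by
        rw [← Finset.sum_mul, ← h.binomTail_eq h1b hb]
        rfl

lemma measureReal_le_countBelow_and_le (h : IsQuantileFamily n p c) {b j : ℕ} (m : ℕ)
    (hj : 1 ≤ j) (hjb : j ≤ b) (hb : b ≤ n) :
    (nullMeasure n).real {u | b ≤ countBelow (c b) u ∧ j ≤ countBelow (c j) u} ≤
      binomTail n (c b) m + p * binomTail m (c j / c b) j := by
  have h1b := hj.trans hjb
  have hsub : {u : Fin n → ℝ | b ≤ countBelow (c b) u ∧ j ≤ countBelow (c j) u} ⊆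
      {u | m ≤ countBelow (c b) u} ∪ ⋃ k ∈ (Finset.Icc b n).filter (· < m),
        {u | countBelow (c b) u = k ∧ j ≤ countBelow (c j) u} := by
    rintro u ⟨hub, huj⟩
    rcases le_or_gt m (countBelow (c b) u) with hm | hm
    · exact Or.inl hm
    · exact Or.inr (mem_iUnion₂.2 ⟨countBelow (c b) u, Finset.mem_filter.2
        ⟨Finset.mem_Icc.2 ⟨hub, countBelow_le _ _⟩, hm⟩, rfl, huj⟩)
  refine (measureReal_mono hsub).trans ((measureReal_union_le _ _).trans (add_le_add ?_ ?_))
  · rw [measureReal_le_countBelow (h.nonneg h1b hb) (h.le_one h1b hb)]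
  · exact (measureReal_biUnion_finset_le _ _).trans
      (h.sum_measureReal_countBelow_eq_and_le m hj hjb hb)

end IsQuantileFamily

end Renewal

section QuantileLocation

variable {n j : ℕ} {p q x : ℝ}

/-- The standard deviation `√(j (n - j) / n)` of a binomial variable with `n` trials and mean
`j`. -/
noncomputable def binomSD (n j : ℕ) : ℝ := √(j * (n - j) / n)

lemma binomSD_sq (h : j ≤ n) : binomSD n j ^ 2 = j * (n - j) / n :=
  Real.sq_sqrt (div_nonneg (mul_nonneg j.cast_nonneg (sub_nonneg.2 (Nat.cast_le.2 h)))
    n.cast_nonneg)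

lemma binomSD_nonneg (n j : ℕ) : 0 ≤ binomSD n j := Real.sqrt_nonneg _

lemma binomSD_sq_le (h : j ≤ n) : binomSD n j ^ 2 ≤ j := by
  have : (j : ℝ) ≤ n := Nat.cast_le.2 h
  rw [binomSD_sq h]
  refine div_le_of_le_mul₀ n.cast_nonneg j.cast_nonneg ?_
  gcongr
  linarith [(Nat.cast_nonneg j : (0 : ℝ) ≤ j)]

lemma binomSD_sq_le_sub (h : j ≤ n) : binomSD n j ^ 2 ≤ n - j := by
  have hjn : (j : ℝ) ≤ n := Nat.cast_le.2 h
  rw [binomSD_sq h, mul_comm]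
  refine div_le_of_le_mul₀ n.cast_nonneg (sub_nonneg.2 hjn) ?_
  gcongr

lemma mul_one_sub_eq_binomSD_sq_add (hn : 0 < n) (h : j ≤ n) (x : ℝ) :
    n * x * (1 - x) =
      binomSD n j ^ 2 + (n * x - j) * ((n - 2 * j) / n) - (n * x - j) ^ 2 / n := by
  have : (n : ℝ) ≠ 0 := Nat.cast_ne_zero.2 hn.ne'
  rw [binomSD_sq h]
  field_simp
  ring

lemma abs_mul_sub_two_mul_div_le (h : j ≤ n) (d : ℝ) :
    |d * ((n - 2 * j) / n)| ≤ |d| := by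
  have hjn : (j : ℝ) ≤ n := Nat.cast_le.2 h
  have : (0 : ℝ) ≤ j := j.cast_nonneg
  rw [abs_mul, abs_div, Nat.abs_cast]
  refine mul_le_of_le_one_right (abs_nonneg d) (div_le_one_of_le₀ ?_ n.cast_nonneg)
  exact abs_le.2 ⟨by linarith, by linarith⟩

lemma mul_one_sub_le_binomSD_sq_add_abs (hn : 0 < n) (h : j ≤ n) (x : ℝ) :
    n * x * (1 - x) ≤ binomSD n j ^ 2 + |n * x - j| := by
  have hd := (le_abs_self _).trans (abs_mul_sub_two_mul_div_le h (n * x - j))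
  have : 0 ≤ (n * x - j) ^ 2 / n := by positivity
  rw [mul_one_sub_eq_binomSD_sq_add hn h]
  linarith

lemma binomSD_sq_sub_abs_sub_le_mul_one_sub (hn : 0 < n) (h : j ≤ n) (x : ℝ) :
    binomSD n j ^ 2 - |n * x - j| - (n * x - j) ^ 2 / n ≤ n * x * (1 - x) := by
  have hd := (abs_le.1 (abs_mul_sub_two_mul_div_le h (n * x - j))).1
  rw [mul_one_sub_eq_binomSD_sq_add hn h]
  linarith

/-- A lower bound `w` for the variance `n x (1 - x)` makes the quadratic term dominate the
log-likelihood ratio. -/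
lemma antitoneOn_log_likelihood_add_sq {K w : ℝ} {c : ℝ} (hc : 0 < c) (hq : q < 1) (hw : 0 < w)
    (hK : n * q ≤ K) (hwc : ∀ x ∈ Icc c q, w ≤ n * x * (1 - x)) :
    AntitoneOn (fun x => K * Real.log x + (n - K) * Real.log (1 - x) + (K - n * x) ^ 2 / (2 * w))
      (Icc c q) := by
  have hderiv : ∀ x ∈ Icc c q, HasDerivAt
      (fun x => K * Real.log x + (n - K) * Real.log (1 - x) + (K - n * x) ^ 2 / (2 * w))
      ((K - n * x) * ((w - n * x * (1 - x)) / (x * (1 - x) * w))) x := by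
    intro x hx
    have : x ≠ 0 := (hc.trans_le hx.1).ne'
    have : 1 - x ≠ 0 := (sub_pos.2 (hx.2.trans_lt hq)).ne'
    have hlog := (Real.hasDerivAt_log ‹x ≠ 0›).const_mul K
    have hlog' := (((hasDerivAt_id x).const_sub 1).log this).const_mul (n - K)
    have hsq := ((((hasDerivAt_id x).const_mul (n : ℝ)).const_sub K).fun_pow 2).div_const (2 * w)
    refine ((hlog.fun_add hlog').fun_add hsq).congr_deriv ?_
    simp
    field_simp
    ring
  refine antitoneOn_of_deriv_nonpos (convex_Icc _ _)
    (fun x hx => (hderiv x hx).continuousAt.continuousWithinAt)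
    (fun x hx => (hderiv x (interior_subset hx)).differentiableAt.differentiableWithinAt) ?_
  intro x hx
  replace hx := interior_subset hx
  have hx0 : 0 < x := hc.trans_le hx.1
  have hx1 : 0 < 1 - x := sub_pos.2 (hx.2.trans_lt hq)
  have hnx : n * x ≤ n * q := mul_le_mul_of_nonneg_left hx.2 n.cast_nonneg
  rw [(hderiv x hx).deriv]
  exact mul_nonpos_of_nonneg_of_nonpos (by linarith)
    (div_nonpos_of_nonpos_of_nonneg (by linarith [hwc x hx]) (by positivity))

lemma binomWeight_eq_choose_mul_exp {k : ℕ} (hk : k ≤ n) (hx0 : 0 < x) (hx1 : x < 1) :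
    binomWeight n x k = n.choose k * Real.exp (k * Real.log x + (n - k) * Real.log (1 - x)) := by
  rw [binomWeight, Real.exp_add, ← Nat.cast_sub hk, Real.exp_nat_mul, Real.exp_nat_mul,
    Real.exp_log hx0, Real.exp_log (sub_pos.2 hx1), mul_assoc]

lemma exp_neg_mul_binomWeight_le {k : ℕ} {c K w : ℝ} (hc : 0 < c) (hcq : c ≤ q) (hq : q < 1)
    (hw : 0 < w) (hK : n * q ≤ K) (hk : k ≤ n) (hkK : (k : ℝ) ≤ K)
    (hwc : ∀ x ∈ Icc c q, w ≤ n * x * (1 - x)) :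
    Real.exp (-((K - n * c) ^ 2 / (2 * w))) * binomWeight n q k ≤ binomWeight n c k := by
  have hanti := antitoneOn_log_likelihood_add_sq hc hq hw hK hwc (left_mem_Icc.2 hcq)
    (right_mem_Icc.2 hcq) hcq
  have : 0 ≤ (K - n * q) ^ 2 / (2 * w) := by positivity
  have hlog : Real.log c ≤ Real.log q := Real.log_le_log hc hcq
  have hlog' : Real.log (1 - q) ≤ Real.log (1 - c) :=
    Real.log_le_log (sub_pos.2 hq) (by linarith)
  have hexponent : -((K - n * c) ^ 2 / (2 * w)) + (k * Real.log q + (n - k) * Real.log (1 - q)) ≤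
      k * Real.log c + (n - k) * Real.log (1 - c) := by
    nlinarith [mul_nonneg (sub_nonneg.2 hkK) (sub_nonneg.2 hlog),
      mul_nonneg (sub_nonneg.2 hkK) (sub_nonneg.2 hlog')]
  rw [binomWeight_eq_choose_mul_exp hk hc (hcq.trans_lt hq),
    binomWeight_eq_choose_mul_exp hk (hc.trans_le hcq) hq, mul_left_comm, ← Real.exp_add]
  gcongr

/-- The weight of `j, …, j + 4 σ` under success probability `(j + 2 σ) / n` is at least one half,
and changing that probability to `c` costs at most the exponential factor. -/
lemma exp_neg_div_two_le_binomTail {c w : ℝ} (hn : 0 < n) (hc : 0 < c) (hcj : n * c ≤ j)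
    (hσ : 2 ≤ binomSD n j) (hj : (j : ℝ) + 4 * binomSD n j ≤ n) (hw : 0 < w)
    (hwc : ∀ x ∈ Icc c ((j + 2 * binomSD n j) / n), w ≤ n * x * (1 - x)) :
    Real.exp (-((j + 4 * binomSD n j - n * c) ^ 2 / (2 * w))) / 2 ≤ binomTail n c j := by
  set σ := binomSD n j
  set q := (j + 2 * σ) / n
  set K : ℝ := j + 4 * σ
  have hn' : (0 : ℝ) < n := Nat.cast_pos.2 hn
  have hjn : j ≤ n := by
    have : (j : ℝ) ≤ n := by linarith
    exact_mod_cast this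
  have hnq : n * q = j + 2 * σ := mul_div_cancel₀ _ hn'.ne'
  have hcq : c ≤ q := (le_div_iff₀ hn').2 (by linarith)
  have hq1 : q < 1 := (div_lt_one hn').2 (by linarith)
  have hvariance : n * q * (1 - q) / (2 * σ) ^ 2 ≤ 1 / 2 := by
    have hle := mul_one_sub_le_binomSD_sq_add_abs hn hjn q
    rw [hnq, add_sub_cancel_left, abs_of_nonneg (by linarith), ← hnq] at hle
    rw [div_le_iff₀ (by positivity)]
    nlinarith
  have hhalf : 1 / 2 ≤ ∑ k ∈ Finset.Icc j ⌊K⌋₊, binomWeight n q k := by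
    have hchebyshev := one_sub_variance_div_sq_le_sum_binomWeight (m := n) (hc.le.trans hcq) hq1.le
      (g := 2 * σ) (by linarith) (S := Finset.Icc j ⌊K⌋₊) fun k _ hk => by
        rw [Finset.mem_Icc, not_and_or, not_le, not_le, Nat.floor_lt (by positivity)] at hk
        rw [hnq, le_abs]
        rcases hk with hk | hk
        · have : (k : ℝ) < j := Nat.cast_lt.2 hk
          exact Or.inr (by linarith)
        · exact Or.inl (by linarith)
    linarith
  calc Real.exp (-((K - n * c) ^ 2 / (2 * w))) / 2
      ≤ Real.exp (-((K - n * c) ^ 2 / (2 * w))) * ∑ k ∈ Finset.Icc j ⌊K⌋₊, binomWeight n q k := by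
        rw [div_eq_mul_one_div]
        gcongr
    _ ≤ ∑ k ∈ Finset.Icc j ⌊K⌋₊, binomWeight n c k := by
        rw [Finset.mul_sum]
        refine Finset.sum_le_sum fun k hk => ?_
        have hkK : (k : ℝ) ≤ K := (Nat.le_floor_iff (by positivity)).1 (Finset.mem_Icc.1 hk).2
        exact exp_neg_mul_binomWeight_le hc hcq hq1 hw (by rw [hnq]; linarith)
          ((Finset.mem_Icc.1 hk).2.trans (Nat.floor_le_of_le hj)) hkK hwc
    _ ≤ binomTail n c j :=
        Finset.sum_le_sum_of_subset_of_nonneg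
          (Finset.Icc_subset_Icc_right (Nat.floor_le_of_le hj))
          fun k _ _ => binomWeight_nonneg hc.le (hcq.trans hq1.le) k

lemma binomTail_le_exp_of_mul_le_sub {c κ : ℝ} (hn : 0 < n) (hjn : j ≤ n) (hκ0 : 0 ≤ κ)
    (hκ : κ ≤ binomSD n j) (hc0 : 0 ≤ c) (hc : n * c ≤ j - κ * binomSD n j)
    (hσ : 0 < binomSD n j) :
    binomTail n c j ≤ Real.exp (-κ ^ 2 + κ ^ 2 * (1 + κ / binomSD n j) ^ 2 / 2) := by
  have hσj := binomSD_sq_le hjn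
  have hjn' : (j : ℝ) ≤ n := Nat.cast_le.2 hjn
  have hn' : (0 : ℝ) < n := Nat.cast_pos.2 hn
  set σ := binomSD n j
  set x := (j - κ * σ) / n
  have hnx : n * x = j - κ * σ := mul_div_cancel₀ _ hn'.ne'
  have hx0 : 0 ≤ x := div_nonneg (by nlinarith) hn'.le
  have hx1 : x ≤ 1 := (div_le_one hn').2 (by nlinarith)
  have hcx : c ≤ x := (le_div_iff₀ hn').2 (by linarith)
  have hvariance : n * x * (1 - x) ≤ σ ^ 2 + κ * σ := by
    have hle := mul_one_sub_le_binomSD_sq_add_abs hn hjn x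
    rwa [hnx, sub_sub_cancel_left, abs_neg, abs_of_nonneg (by positivity), ← hnx] at hle
  calc binomTail n c j
      ≤ binomTail n x j := monotoneOn_binomTail n j ⟨hc0, hcx.trans hx1⟩ ⟨hx0, hx1⟩ hcx
    _ ≤ Real.exp (-(κ / σ * (j - n * x)) + n * x * (1 - x) * (κ / σ) ^ 2 * (1 + κ / σ) / 2) :=
        binomTail_le_exp_bernstein hx0 hx1 (by positivity) ((div_le_one hσ).2 hκ) j
    _ ≤ Real.exp (-(κ / σ * (j - n * x)) + (σ ^ 2 + κ * σ) * (κ / σ) ^ 2 * (1 + κ / σ) / 2) := by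
        gcongr
    _ = Real.exp (-κ ^ 2 + κ ^ 2 * (1 + κ / σ) ^ 2 / 2) := by
        rw [hnx]
        congr 1
        field_simp
        ring

lemma exp_neg_div_two_le_binomTail_of_sub_le_mul {c κ : ℝ} (hn : 0 < n) (hjn : j ≤ n)
    (hκ2 : 2 ≤ κ) (hκ : 2 * κ < binomSD n j) (hc1 : c ≤ 1) (hc : j - κ * binomSD n j ≤ n * c) :
    Real.exp (-((κ + 4) ^ 2 / (2 * (1 - 2 * (κ / binomSD n j))))) / 2 ≤ binomTail n c j := by
  have hσj := binomSD_sq_le hjn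
  have hσnj := binomSD_sq_le_sub hjn
  have hn' : (0 : ℝ) < n := Nat.cast_pos.2 hn
  have hlow := binomSD_sq_sub_abs_sub_le_mul_one_sub hn hjn
  have htail := @exp_neg_div_two_le_binomTail n j
  set σ := binomSD n j
  set w := σ ^ 2 - 2 * κ * σ with hw
  have hσ0 : 0 < σ := by linarith
  set x := (j - κ * σ) / n
  have hnx : n * x = j - κ * σ := mul_div_cancel₀ _ hn'.ne'
  have hx0 : 0 < x := div_pos (by nlinarith) hn'
  have hxc : x ≤ c := (div_le_iff₀ hn').2 (by linarith)
  have hvariance : ∀ y ∈ Icc x ((j + 2 * σ) / n), w ≤ n * y * (1 - y) := by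
    intro y hy
    have hy1 : n * x ≤ n * y := mul_le_mul_of_nonneg_left hy.1 hn'.le
    have hy2 : n * y ≤ j + 2 * σ := by
      rw [mul_comm]
      exact (le_div_iff₀ hn').1 hy.2
    have habs : |n * y - j| ≤ κ * σ := abs_le.2 ⟨by linarith, by nlinarith⟩
    have hsq : (n * y - j) ^ 2 / n ≤ κ * σ := by
      rw [div_le_iff₀ hn', ← sq_abs, pow_two]
      gcongr
      nlinarith
    linarith [hlow y]
  have hexponent : (j + 4 * σ - n * x) ^ 2 / (2 * w) = (κ + 4) ^ 2 / (2 * (1 - 2 * (κ / σ))) := by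
    have hw' : w = σ ^ 2 * (1 - 2 * (κ / σ)) := by
      rw [hw]
      field_simp
    have : 0 < 1 - 2 * (κ / σ) := by
      rw [← mul_div_assoc, sub_pos, div_lt_one hσ0]
      exact hκ
    rw [hw', hnx, div_eq_div_iff (by positivity) (by positivity)]
    ring
  rw [← hexponent]
  exact (htail hn hx0 (by nlinarith) (by linarith) (by nlinarith) (by nlinarith) hvariance).trans
    (monotoneOn_binomTail n j ⟨hx0.le, hxc.trans hc1⟩ ⟨hx0.le.trans hxc, hc1⟩ hxc)

/-- The level `p` is `exp (-u² / 2)` up to a factor `1 + ε / 2` in the exponent, where `u` is large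
compared with `1 / ε`. -/
structure LevelBounds (ε u p : ℝ) : Prop where
  eps_pos : 0 < ε
  eps_le : ε ≤ 1 / 8
  le_eps_mul : 100 ≤ ε * u
  exp_le : Real.exp (-((1 + ε / 2) * u ^ 2 / 2)) ≤ p
  le_exp : p ≤ Real.exp (-(u ^ 2 / 2))

/-- The index `j` is so far from `0` and `n` that the standard deviation is at least `u ^ 3`. -/
structure AdmissibleIndex (n j : ℕ) (u : ℝ) : Prop where
  one_le : 1 ≤ j
  lt : j < n
  cube_le : u ^ 3 ≤ binomSD n j

variable {ε u : ℝ}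

lemma LevelBounds.pos (h : LevelBounds ε u p) : 0 < p := (Real.exp_pos _).trans_le h.exp_le

lemma LevelBounds.le_u (h : LevelBounds ε u p) : 800 ≤ u := by
  by_contra! hu
  nlinarith [h.eps_pos, h.eps_le, h.le_eps_mul]

lemma LevelBounds.sq_add_four_lt (hp : LevelBounds ε u p) :
    ((1 - ε) * u + 4) ^ 2 < (u ^ 2 / 2 - 1) * (2 * (1 - ε / 16)) := by
  have hε0 := hp.eps_pos
  have hε1 := hp.eps_le
  have hu := hp.le_u
  have heu := hp.le_eps_mul
  have hone : 1 ≤ ε * u ^ 2 / 100 := by nlinarith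
  have hcoeff : (1 - 24 * ε / 25) ^ 2 + ε / 4 ≤ (1 - ε / 50) * (1 - ε / 16) := by nlinarith
  calc ((1 - ε) * u + 4) ^ 2 ≤ ((1 - 24 * ε / 25) * u) ^ 2 := by
        refine pow_le_pow_left₀ ?_ (by linarith) 2
        nlinarith
    _ = u ^ 2 * (1 - 24 * ε / 25) ^ 2 := by ring
    _ < u ^ 2 * ((1 - ε / 50) * (1 - ε / 16)) := by
        gcongr
        linarith
    _ = (u ^ 2 / 2 - ε * u ^ 2 / 100) * (2 * (1 - ε / 16)) := by ring
    _ ≤ (u ^ 2 / 2 - 1) * (2 * (1 - ε / 16)) := by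
        gcongr
        linarith

namespace AdmissibleIndex

lemma trials_pos (h : AdmissibleIndex n j u) : (0 : ℝ) < n :=
  Nat.cast_pos.2 (h.one_le.trans_lt h.lt |>.trans_le' zero_le_one)

lemma cast_pos (h : AdmissibleIndex n j u) : (0 : ℝ) < j := Nat.cast_pos.2 h.one_le

lemma cast_lt (h : AdmissibleIndex n j u) : (j : ℝ) < n := Nat.cast_lt.2 h.lt

lemma mul_le_binomSD (h : AdmissibleIndex n j u) (hu : 800 ≤ u) : 640000 * u ≤ binomSD n j := by
  have hu2 : 640000 ≤ u ^ 2 := by nlinarith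
  nlinarith [h.cube_le]

lemma mul_sq_le_eps_mul_binomSD (h : AdmissibleIndex n j u) (hp : LevelBounds ε u p) :
    100 * u ^ 2 ≤ ε * binomSD n j := by
  calc 100 * u ^ 2 ≤ ε * u * u ^ 2 := by
        gcongr
        exact hp.le_eps_mul
    _ = ε * u ^ 3 := by ring
    _ ≤ ε * binomSD n j := mul_le_mul_of_nonneg_left h.cube_le hp.eps_pos.le

lemma div_binomSD_le (h : AdmissibleIndex n j u) (hp : LevelBounds ε u p) :
    u / binomSD n j ≤ ε / 32 := by
  have hu := hp.le_u
  have hσ := h.mul_le_binomSD hu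
  rw [div_le_iff₀ (by linarith)]
  nlinarith [h.mul_sq_le_eps_mul_binomSD hp]

end AdmissibleIndex

namespace IsQuantileFamily

variable {c : ℕ → ℝ}

lemma sub_mul_le (h : IsQuantileFamily n p c) (hp : LevelBounds ε u p)
    (hj : AdmissibleIndex n j u) : j - n * c j ≤ (1 + ε) * u * binomSD n j := by
  have hε0 := hp.eps_pos
  have hε1 := hp.eps_le
  have hu := hp.le_u
  have hσ := hj.mul_le_binomSD hu
  have hσ0 : 0 < binomSD n j := by linarith
  by_contra! hcon
  set κ := (1 + ε) * u with hκ
  have hκu : κ ≤ 2 * u := by nlinarith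
  have hκσ : κ / binomSD n j ≤ ε / 16 := by
    calc κ / binomSD n j ≤ 2 * u / binomSD n j := by gcongr
      _ = 2 * (u / binomSD n j) := mul_div_assoc _ _ _
      _ ≤ ε / 16 := by linarith [hj.div_binomSD_le hp]
  have hκσ0 : 0 ≤ κ / binomSD n j := by positivity
  have htail := binomTail_le_exp_of_mul_le_sub (κ := κ) (hj.one_le.trans hj.lt.le) hj.lt.le
    (by positivity) (by linarith) (h.nonneg hj.one_le hj.lt.le) (by linarith) hσ0
  rw [h.binomTail_eq hj.one_le hj.lt.le] at htail
  have hexponent := Real.exp_le_exp.1 (hp.exp_le.trans htail)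
  have hfactor : (1 + κ / binomSD n j) ^ 2 ≤ 1 + ε / 4 := by nlinarith
  have hκ2 : κ ^ 2 * (1 + κ / binomSD n j) ^ 2 ≤ κ ^ 2 * (1 + ε / 4) := by gcongr
  have hu2 : u ^ 2 * ((1 + ε) ^ 2 * (1 - ε / 4)) ≤ u ^ 2 * (1 + ε / 2) := by
    rw [hκ] at hexponent hκ2
    nlinarith
  nlinarith [le_of_mul_le_mul_left hu2 (by positivity), mul_pos hε0 hε0,
    mul_pos hε0 (mul_pos hε0 hε0)]

lemma le_sub_mul (h : IsQuantileFamily n p c) (hp : LevelBounds ε u p)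
    (hj : AdmissibleIndex n j u) : (1 - ε) * u * binomSD n j ≤ j - n * c j := by
  have hε0 := hp.eps_pos
  have hε1 := hp.eps_le
  have hu := hp.le_u
  have hσ := hj.mul_le_binomSD hu
  by_contra! hcon
  set κ := (1 - ε) * u
  have hκu : κ ≤ u := by nlinarith
  have hκ2 : 2 ≤ κ := by nlinarith
  have hκσ : κ / binomSD n j ≤ ε / 32 :=
    (div_le_div_of_nonneg_right hκu (binomSD_nonneg n j)).trans (hj.div_binomSD_le hp)
  have htail := exp_neg_div_two_le_binomTail_of_sub_le_mul (hj.one_le.trans hj.lt.le) hj.lt.le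
    hκ2 (by linarith) (h.le_one hj.one_le hj.lt.le) (by linarith)
  rw [h.binomTail_eq hj.one_le hj.lt.le] at htail
  have hexp : Real.exp (-((κ + 4) ^ 2 / (2 * (1 - 2 * (κ / binomSD n j)))) - 1) ≤
      Real.exp (-(u ^ 2 / 2)) := by
    refine le_trans ?_ (htail.trans hp.le_exp)
    rw [Real.exp_sub]
    gcongr
    linarith [Real.add_one_le_exp 1]
  have hle : (κ + 4) ^ 2 / (2 * (1 - 2 * (κ / binomSD n j))) ≤
      (κ + 4) ^ 2 / (2 * (1 - ε / 16)) := by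
    refine div_le_div_of_nonneg_left (by positivity) ?_ ?_ <;> linarith
  have hexponent : u ^ 2 / 2 - 1 ≤ (κ + 4) ^ 2 / (2 * (1 - ε / 16)) := by
    linarith [Real.exp_le_exp.1 hexp]
  rw [le_div_iff₀ (by linarith)] at hexponent
  exact hexponent.not_gt hp.sq_add_four_lt

end IsQuantileFamily

end QuantileLocation

section PoissonWalk

open scoped NNReal

variable {b lam z θ ε : ℝ}

lemma poissonWeight_nonneg (hb : 0 ≤ b) (l : ℕ) : 0 ≤ poissonWeight b l := by
  unfold poissonWeight
  positivity

lemma hasSum_poissonWeight_mul_exp (b s : ℝ) :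
    HasSum (fun l => poissonWeight b l * Real.exp (s * l))
      (Real.exp (b * (Real.exp s - 1))) := by
  have hexp := (NormedSpace.expSeries_div_hasSum_exp (b * Real.exp s)).mul_left (Real.exp (-b))
  rw [← Real.exp_eq_exp_ℝ, ← Real.exp_add] at hexp
  convert! hexp using 1
  · ext l
    rw [poissonWeight, mul_pow, ← Real.exp_nat_mul, mul_comm s]
    ring
  · congr 1
    ring

lemma hasSum_poissonWeight (b : ℝ) : HasSum (poissonWeight b) 1 := by
  simpa using hasSum_poissonWeight_mul_exp b 0

lemma poissonWeight_succ_mul (b : ℝ) (l : ℕ) :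
    poissonWeight b (l + 1) * (l + 1 : ℕ) = b * poissonWeight b l := by
  rw [poissonWeight, poissonWeight, Nat.factorial_succ]
  push_cast
  field_simp
  ring

lemma hasSum_poissonWeight_mul (b : ℝ) : HasSum (fun l => poissonWeight b l * (l : ℝ)) b := by
  rw [← hasSum_nat_add_iff' 1]
  simp only [poissonWeight_succ_mul, Finset.range_one, Finset.sum_singleton, Nat.cast_zero,
    mul_zero, sub_zero]
  simpa using (hasSum_poissonWeight b).mul_left b

lemma hasSum_poissonWeight_mul_sq (b : ℝ) :
    HasSum (fun l => poissonWeight b l * (l : ℝ) ^ 2) (b + b ^ 2) := by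
  have hshift : ∀ l, poissonWeight b (l + 1) * ((l + 1 : ℕ) : ℝ) ^ 2 =
      b * (poissonWeight b l * l) + b * poissonWeight b l := by
    intro l
    rw [pow_two, ← mul_assoc, poissonWeight_succ_mul]
    push_cast
    ring
  rw [← hasSum_nat_add_iff' 1]
  simp only [hshift, Finset.range_one, Finset.sum_singleton, Nat.cast_zero]
  convert! ((hasSum_poissonWeight_mul b).mul_left b).add ((hasSum_poissonWeight b).mul_left b)
    using 1
  ring

/-- Lyapunov function of a random walk with steps `1 - Poisson (1 + θ)`: exponential on the
negative half-line, continued affinely with the same slope at `0`. -/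
noncomputable def driftPotential (lam z : ℝ) : ℝ :=
  if z ≤ 0 then Real.exp (lam * z) else 1 + lam * z

lemma driftPotential_nonneg (hlam : 0 ≤ lam) : 0 ≤ driftPotential lam z := by
  unfold driftPotential
  split_ifs with hz
  · positivity
  · have := not_le.1 hz
    positivity

lemma driftPotential_of_nonneg (hz : 0 ≤ z) : driftPotential lam z = 1 + lam * z := by
  rcases hz.eq_or_lt with rfl | hz
  · simp [driftPotential]
  · exact if_neg hz.not_ge

lemma driftPotential_le_exp (lam z : ℝ) : driftPotential lam z ≤ Real.exp (lam * z) := by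
  unfold driftPotential
  split_ifs
  · exact le_rfl
  · linarith [Real.add_one_le_exp (lam * z)]

lemma driftPotential_le_quadratic (hlam : 0 ≤ lam) (z : ℝ) :
    driftPotential lam z ≤ 1 + lam * z + lam ^ 2 / 2 * max 0 (-z) ^ 2 := by
  rcases le_total 0 z with hz | hz
  · rw [driftPotential_of_nonneg hz, max_eq_left (by linarith)]
    simp
  · have hexp := exp_neg_le_one_sub_add_sq (x := -(lam * z)) (by nlinarith)
    rw [neg_neg] at hexp
    rw [driftPotential, if_pos hz, max_eq_right (by linarith)]
    nlinarith

lemma driftPotential_le_one_add_mul {M : ℝ} (hlam : 0 ≤ lam) (hM : 0 ≤ M) (hz : z ≤ M) :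
    driftPotential lam z ≤ 1 + lam * M := by
  rcases le_total 0 z with hz0 | hz0
  · rw [driftPotential_of_nonneg hz0]
    gcongr
  · have : Real.exp (lam * z) ≤ 1 := Real.exp_le_one_iff.2 (by nlinarith)
    linarith [driftPotential_le_exp lam z, mul_nonneg hlam hM]

/-- The exponential rate `2 θ / (1 + θ)`, for which the quadratic approximation of
`E exp (lam (1 - Poisson (1 + θ)))` equals one. -/
noncomputable def driftRate (θ : ℝ) : ℝ := 2 * θ / (1 + θ)

lemma driftRate_nonneg (hθ : 0 ≤ θ) : 0 ≤ driftRate θ := by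
  unfold driftRate
  positivity

lemma driftRate_mul_one_add (hθ : 0 ≤ θ) : driftRate θ * (1 + θ) = 2 * θ :=
  div_mul_cancel₀ _ (by positivity)

lemma summable_poissonWeight_mul_driftPotential (hb : 0 ≤ b) (hlam : 0 ≤ lam) (z : ℝ) :
    Summable fun l : ℕ => poissonWeight b l * driftPotential lam (z - l) := by
  refine Summable.of_nonneg_of_le
    (fun l => mul_nonneg (poissonWeight_nonneg hb l) (driftPotential_nonneg hlam))
    (fun l => mul_le_mul_of_nonneg_left (driftPotential_le_one_add_mul (M := |z|) hlam
      (abs_nonneg _) ?_) (poissonWeight_nonneg hb l))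
    ((hasSum_poissonWeight b).summable.mul_right _)
  linarith [le_abs_self z, (Nat.cast_nonneg l : (0 : ℝ) ≤ l)]

lemma tsum_poissonWeight_mul_driftPotential_le_of_nonpos (hθ : 0 ≤ θ) (hz : z ≤ 0) :
    ∑' l, poissonWeight (1 + θ) l * driftPotential (driftRate θ) (z + 1 - l) ≤
      driftPotential (driftRate θ) z := by
  have hb : 0 ≤ 1 + θ := by positivity
  have hmul := driftRate_mul_one_add hθ
  have hlam := driftRate_nonneg hθ
  set lam := driftRate θ
  have hpointwise : ∀ l : ℕ, poissonWeight (1 + θ) l * driftPotential lam (z + 1 - l) ≤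
      Real.exp (lam * (z + 1)) * (poissonWeight (1 + θ) l * Real.exp (-lam * l)) := by
    intro l
    rw [mul_left_comm, ← Real.exp_add, show lam * (z + 1) + -lam * l = lam * (z + 1 - l) by ring]
    exact mul_le_mul_of_nonneg_left (driftPotential_le_exp _ _) (poissonWeight_nonneg hb l)
  calc _ ≤ Real.exp (lam * (z + 1)) * Real.exp ((1 + θ) * (Real.exp (-lam) - 1)) :=
        hasSum_le hpointwise (summable_poissonWeight_mul_driftPotential hb hlam _).hasSum
          ((hasSum_poissonWeight_mul_exp (1 + θ) (-lam)).mul_left _)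
    _ ≤ Real.exp (lam * z) := by
        rw [← Real.exp_add, Real.exp_le_exp]
        have hquad : (1 + θ) * (Real.exp (-lam) - 1) ≤ (1 + θ) * (-lam + lam ^ 2 / 2) := by
          gcongr
          linarith [exp_neg_le_one_sub_add_sq hlam]
        have heq : (1 + θ) * (-lam + lam ^ 2 / 2) = -lam := by
          linear_combination lam / 2 * hmul
        linarith
    _ = driftPotential lam z := (if_pos hz).symm

/-- `E (Poisson b - 1 - z)₊²`, the error in the quadratic expansion of the Lyapunov function. -/
noncomputable def poissonExcess (b z : ℝ) : ℝ :=
  ∑' l : ℕ, poissonWeight b l * max 0 ((l : ℝ) - 1 - z) ^ 2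

lemma exp_five_div_four_le : Real.exp (5 / 4) ≤ 4 := by
  have hpow : Real.exp (5 / 4) ^ 4 ≤ 4 ^ 4 := by
    calc Real.exp (5 / 4) ^ 4 = Real.exp 1 ^ 5 := by
          rw [← Real.exp_nat_mul, ← Real.exp_nat_mul]
          norm_num
      _ ≤ 2.7182818286 ^ 5 := by
          gcongr
          exact Real.exp_one_lt_d9.le
      _ ≤ 4 ^ 4 := by norm_num
  exact le_of_pow_le_pow_left₀ (by norm_num) (by norm_num) hpow

lemma hasSum_poissonWeight_mul_max_sub_one_sq (b : ℝ) :
    HasSum (fun l : ℕ => poissonWeight b l * max 0 ((l : ℝ) - 1) ^ 2)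
      (b + (b - 1) ^ 2 - Real.exp (-b)) := by
  convert! (((hasSum_poissonWeight_mul_sq b).add ((hasSum_poissonWeight_mul b).mul_left (-2))).add
    (hasSum_poissonWeight b)).sub (hasSum_ite_eq (0 : ℕ) (Real.exp (-b))) using 1
  · ext l
    rcases Nat.eq_zero_or_pos l with rfl | hl
    · simp [poissonWeight]
    · have : (1 : ℝ) ≤ l := Nat.one_le_cast.2 hl
      rw [if_neg hl.ne', max_eq_right (by linarith)]
      ring
  · ring

lemma poissonWeight_mul_max_sq_le (hb : 0 ≤ b) (hz : 0 ≤ z) (l : ℕ) :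
    poissonWeight b l * max 0 ((l : ℝ) - 1 - z) ^ 2 ≤
      poissonWeight b l * max 0 ((l : ℝ) - 1) ^ 2 :=
  mul_le_mul_of_nonneg_left
    (pow_le_pow_left₀ (le_max_left _ _) (max_le_max le_rfl (by linarith)) 2)
    (poissonWeight_nonneg hb l)

lemma hasSum_poissonExcess (hb : 0 ≤ b) (hz : 0 ≤ z) :
    HasSum (fun l : ℕ => poissonWeight b l * max 0 ((l : ℝ) - 1 - z) ^ 2) (poissonExcess b z) :=
  (Summable.of_nonneg_of_le (fun l => mul_nonneg (poissonWeight_nonneg hb l) (sq_nonneg _))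
    (poissonWeight_mul_max_sq_le hb hz)
    (hasSum_poissonWeight_mul_max_sub_one_sq b).summable).hasSum

lemma poissonExcess_le (hb1 : 1 ≤ b) (hb2 : b ≤ 5 / 4) (hz : 0 ≤ z) : poissonExcess b z ≤ b := by
  have hb0 : 0 ≤ b := zero_le_one.trans hb1
  have hle := hasSum_le (poissonWeight_mul_max_sq_le hb0 hz) (hasSum_poissonExcess hb0 hz)
    (hasSum_poissonWeight_mul_max_sub_one_sq b)
  have hexp : 1 / 4 ≤ Real.exp (-b) := by
    rw [Real.exp_neg, ← one_div]
    exact one_div_le_one_div_of_le (Real.exp_pos _)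
      ((Real.exp_le_exp.2 hb2).trans exp_five_div_four_le)
  nlinarith

lemma max_zero_sq_le_two_mul_exp (x : ℝ) : max 0 x ^ 2 ≤ 2 * Real.exp x := by
  rcases le_total x 0 with hx | hx
  · simpa [max_eq_left hx] using (Real.exp_pos x).le
  · rw [max_eq_right hx]
    linarith [Real.quadratic_le_exp_of_nonneg hx]

lemma poissonExcess_le_exp_neg (hb0 : 0 ≤ b) (hb2 : b ≤ 5 / 4) (hz : 0 ≤ z) :
    poissonExcess b z ≤ 8 * Real.exp (-z) := by
  have hpointwise : ∀ l : ℕ, poissonWeight b l * max 0 ((l : ℝ) - 1 - z) ^ 2 ≤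
      2 * Real.exp (-1 - z) * (poissonWeight b l * Real.exp (1 * l)) := by
    intro l
    calc _ ≤ poissonWeight b l * (2 * Real.exp ((l : ℝ) - 1 - z)) :=
          mul_le_mul_of_nonneg_left (max_zero_sq_le_two_mul_exp _) (poissonWeight_nonneg hb0 l)
      _ = _ := by
          rw [show (l : ℝ) - 1 - z = (-1 - z) + 1 * l by ring, Real.exp_add]
          ring
  have he := Real.exp_one_lt_d9
  have : 1 ≤ Real.exp 1 := Real.one_le_exp zero_le_one
  calc poissonExcess b z
      ≤ 2 * Real.exp (-1 - z) * Real.exp (b * (Real.exp 1 - 1)) :=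
        hasSum_le hpointwise (hasSum_poissonExcess hb0 hz)
          ((hasSum_poissonWeight_mul_exp b 1).mul_left _)
    _ ≤ 2 * Real.exp (-1 - z) * Real.exp (1 + 5 / 4) := by
        gcongr
        nlinarith
    _ = 2 * Real.exp (-z) * Real.exp (5 / 4) := by
        rw [mul_assoc, mul_assoc, ← Real.exp_add, ← Real.exp_add]
        ring_nf
    _ ≤ 2 * Real.exp (-z) * 4 := by
        gcongr
        exact exp_five_div_four_le
    _ = 8 * Real.exp (-z) := by ring

lemma tsum_poissonWeight_mul_driftPotential_le_of_nonneg (hθ : 0 ≤ θ) (hz : 0 ≤ z) :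
    ∑' l, poissonWeight (1 + θ) l * driftPotential (driftRate θ) (z + 1 - l) ≤
      driftPotential (driftRate θ) z - driftRate θ * θ +
        driftRate θ ^ 2 / 2 * poissonExcess (1 + θ) z := by
  have hb : 0 ≤ 1 + θ := by positivity
  have hlam := driftRate_nonneg hθ
  set lam := driftRate θ
  have hpointwise : ∀ l : ℕ, poissonWeight (1 + θ) l * driftPotential lam (z + 1 - l) ≤
      (1 + lam * (z + 1)) * poissonWeight (1 + θ) l + -lam * (poissonWeight (1 + θ) l * l) +
        lam ^ 2 / 2 * (poissonWeight (1 + θ) l * max 0 ((l : ℝ) - 1 - z) ^ 2) := by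
    intro l
    have hquad := mul_le_mul_of_nonneg_left (driftPotential_le_quadratic hlam (z + 1 - l))
      (poissonWeight_nonneg hb l)
    rw [show -(z + 1 - (l : ℝ)) = l - 1 - z by ring] at hquad
    exact hquad.trans_eq (by ring)
  refine (hasSum_le hpointwise (summable_poissonWeight_mul_driftPotential hb hlam _).hasSum
    ((((hasSum_poissonWeight _).mul_left _).add ((hasSum_poissonWeight_mul _).mul_left _)).add
      ((hasSum_poissonExcess hb hz).mul_left _))).trans_eq ?_
  rw [driftPotential_of_nonneg hz]
  ring

lemma tsum_poissonWeight_mul_driftPotential_le {A : ℝ} (hθ0 : 0 ≤ θ) (hθ1 : θ ≤ 1 / 4)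
    (hε : 0 ≤ ε) (hA : 0 ≤ A) (hAε : 8 * Real.exp (-A) ≤ ε) (z : ℝ) :
    ∑' l, poissonWeight (1 + θ) l * driftPotential (driftRate θ) (z + 1 - l) ≤
      driftPotential (driftRate θ) z - driftRate θ * θ * (1 - ε) * (if A ≤ z then 1 else 0) := by
  have hmul := driftRate_mul_one_add hθ0
  have hlam := driftRate_nonneg hθ0
  have hb1 : 1 ≤ 1 + θ := by linarith
  have hb2 : 1 + θ ≤ 5 / 4 := by linarith
  rcases le_total z 0 with hz | hz
  · have hneg := tsum_poissonWeight_mul_driftPotential_le_of_nonpos hθ0 hz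
    split_ifs with hAz
    · obtain rfl : z = 0 := le_antisymm hz (hA.trans hAz)
      have hε8 : 8 ≤ ε := by simpa [le_antisymm hAz hA] using hAε
      nlinarith [mul_nonneg hlam hθ0]
    · linarith
  · refine (tsum_poissonWeight_mul_driftPotential_le_of_nonneg hθ0 hz).trans ?_
    split_ifs with hAz
    · have hexcess : poissonExcess (1 + θ) z ≤ ε * (1 + θ) := by
        have hexp : Real.exp (-z) ≤ Real.exp (-A) := Real.exp_le_exp.2 (by linarith)
        nlinarith [poissonExcess_le_exp_neg (zero_le_one.trans hb1) hb2 hz]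
      have hquad : driftRate θ ^ 2 / 2 * poissonExcess (1 + θ) z ≤
          driftRate θ ^ 2 / 2 * (ε * (1 + θ)) := by gcongr
      linear_combination hquad + driftRate θ * ε / 2 * hmul
    · have hquad : driftRate θ ^ 2 / 2 * poissonExcess (1 + θ) z ≤
          driftRate θ ^ 2 / 2 * (1 + θ) := by
        gcongr
        exact poissonExcess_le hb1 hb2 hz
      linear_combination hquad + driftRate θ / 2 * hmul

/-- The distribution function of the Poisson law with mean `b`. -/
noncomputable def poissonCDF (b : ℝ) (m : ℕ) : ℝ := ∑ k ∈ Finset.range (m + 1), poissonWeight b k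

lemma poissonCDF_nonneg (hb : 0 ≤ b) (m : ℕ) : 0 ≤ poissonCDF b m :=
  Finset.sum_nonneg fun k _ => poissonWeight_nonneg hb k

lemma integral_poissonMeasure_eq_tsum (r : ℝ≥0) (f : ℕ → ℝ) :
    ∫ l, f l ∂(ProbabilityTheory.poissonMeasure r) = ∑' l, poissonWeight r l * f l :=
  ProbabilityTheory.integral_poissonMeasure ..

lemma integral_poissonMeasure_ite_le (r : ℝ≥0) (m : ℕ) :
    ∫ k, (if k ≤ m then (1 : ℝ) else 0) ∂(ProbabilityTheory.poissonMeasure r) =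
      poissonCDF r m := by
  rw [integral_poissonMeasure_eq_tsum, tsum_eq_sum (s := Finset.range (m + 1))]
  · refine Finset.sum_congr rfl fun k hk => ?_
    rw [if_pos (Finset.mem_range_succ_iff.1 hk), mul_one]
  · intro k hk
    rw [if_neg fun h => hk (Finset.mem_range_succ_iff.2 h), mul_zero]

lemma integral_poissonMeasure_add (r s : ℝ≥0) {f : ℕ → ℝ} {B : ℝ} (hf : ∀ k, |f k| ≤ B) :
    ∫ k, f k ∂(ProbabilityTheory.poissonMeasure (r + s)) =
      ∫ k, (∑' l, poissonWeight s l * f (k + l)) ∂(ProbabilityTheory.poissonMeasure r) := by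
  rw [← ProbabilityTheory.poissonMeasure_conv_poissonMeasure, Measure.conv,
    integral_map .of_discrete .of_discrete,
    integral_prod _ (.of_bound .of_discrete B (ae_of_all _ fun _ => hf _))]
  exact integral_congr_ae (ae_of_all _ fun k =>
    integral_poissonMeasure_eq_tsum s fun l => f (k + l))

/-- The expected potential after `m` steps of the walk started at `A`. -/
noncomputable def meanPotential (θ : ℝ≥0) (A m : ℕ) : ℝ :=
  ∫ k : ℕ, driftPotential (driftRate θ) (m + A - k)
    ∂(ProbabilityTheory.poissonMeasure (m * (1 + θ)))

lemma abs_driftPotential_sub_le (hlam : 0 ≤ lam) (m A k : ℕ) :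
    |driftPotential lam ((m : ℝ) + A - k)| ≤ 1 + lam * (m + A) := by
  rw [abs_of_nonneg (driftPotential_nonneg hlam)]
  exact driftPotential_le_one_add_mul hlam (by positivity) (by simp)

lemma meanPotential_succ_le {θ : ℝ≥0} {A : ℕ} (hθ : (θ : ℝ) ≤ 1 / 4) (hε : 0 ≤ ε)
    (hAε : 8 * Real.exp (-(A : ℝ)) ≤ ε) (m : ℕ) :
    meanPotential θ A (m + 1) ≤ meanPotential θ A m -
      driftRate θ * θ * (1 - ε) * poissonCDF (m * (1 + θ)) m := by
  have hlam := driftRate_nonneg θ.2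
  have hdrift : ∀ k : ℕ, ∑' l, poissonWeight (1 + θ) l *
        driftPotential (driftRate θ) ((m + 1 : ℕ) + A - (k + l : ℕ)) ≤
      driftPotential (driftRate θ) (m + A - k) -
        driftRate θ * θ * (1 - ε) * (if k ≤ m then 1 else 0) := by
    intro k
    have hstep := tsum_poissonWeight_mul_driftPotential_le θ.2 hθ hε A.cast_nonneg hAε (m + A - k)
    have hshift : ∀ l : ℕ, ((m + 1 : ℕ) : ℝ) + A - (k + l : ℕ) = m + A - k + 1 - l := by
      intro l
      push_cast
      ring
    have hiff : (A : ℝ) ≤ m + A - k ↔ k ≤ m := by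
      rw [← Nat.cast_le (α := ℝ)]
      constructor <;> intro <;> linarith
    simp only [hiff] at hstep
    simp only [hshift]
    exact hstep.trans_eq (by congr)
  have hpotential : Integrable (fun k : ℕ => driftPotential (driftRate θ) (m + A - k))
      (ProbabilityTheory.poissonMeasure (m * (1 + θ))) :=
    .of_bound .of_discrete _ (ae_of_all _ fun k => abs_driftPotential_sub_le hlam m A k)
  have hindicator : Integrable (fun k : ℕ => if k ≤ m then (1 : ℝ) else 0)
      (ProbabilityTheory.poissonMeasure (m * (1 + θ))) :=
    .of_bound .of_discrete 1 (ae_of_all _ fun k => by split_ifs <;> simp)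
  calc meanPotential θ A (m + 1)
      = ∫ k : ℕ, (∑' l, poissonWeight (1 + θ) l *
          driftPotential (driftRate θ) ((m + 1 : ℕ) + A - (k + l : ℕ)))
          ∂(ProbabilityTheory.poissonMeasure (m * (1 + θ))) := by
        rw [meanPotential, show ((m + 1 : ℕ) : ℝ≥0) * (1 + θ) = m * (1 + θ) + (1 + θ) by
          push_cast; ring]
        exact integral_poissonMeasure_add _ _
          (f := fun k : ℕ => driftPotential (driftRate θ) ((m + 1 : ℕ) + A - k))
          fun k => abs_driftPotential_sub_le hlam (m + 1) A k
    _ ≤ ∫ k : ℕ, (driftPotential (driftRate θ) (m + A - k) -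
          driftRate θ * θ * (1 - ε) * (if k ≤ m then 1 else 0))
          ∂(ProbabilityTheory.poissonMeasure (m * (1 + θ))) :=
        integral_mono_of_nonneg (ae_of_all _ fun k => tsum_nonneg fun l =>
          mul_nonneg (poissonWeight_nonneg (1 + θ).2 l) (driftPotential_nonneg hlam))
          (hpotential.sub (hindicator.const_mul _)) (ae_of_all _ hdrift)
    _ = _ := by
        rw [integral_sub hpotential (hindicator.const_mul _), integral_const_mul,
          integral_poissonMeasure_ite_le, meanPotential]
        push_cast
        rfl

lemma meanPotential_zero_le (θ : ℝ≥0) (A : ℕ) : meanPotential θ A 0 ≤ 1 + driftRate θ * A := by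
  have hlam := driftRate_nonneg θ.2
  calc meanPotential θ A 0
      ≤ ∫ _ : ℕ, (1 + driftRate θ * A)
          ∂(ProbabilityTheory.poissonMeasure ((0 : ℕ) * (1 + θ))) := by
        refine integral_mono_of_nonneg (ae_of_all _ fun k => driftPotential_nonneg hlam)
          (integrable_const _) (ae_of_all _ fun k => ?_)
        simpa using (le_abs_self _).trans (abs_driftPotential_sub_le hlam 0 A k)
    _ = 1 + driftRate θ * A := by simp

lemma driftRate_mul_sum_poissonCDF_le {A : ℕ} (hθ0 : 0 ≤ θ) (hθ1 : θ ≤ 1 / 4) (hε : 0 ≤ ε)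
    (hAε : 8 * Real.exp (-(A : ℝ)) ≤ ε) (M : ℕ) :
    driftRate θ * θ * (1 - ε) * ∑ m ∈ Finset.range M, poissonCDF (m * (1 + θ)) m ≤
      1 + driftRate θ * A := by
  lift θ to ℝ≥0 using hθ0
  have htelescope : driftRate θ * θ * (1 - ε) *
      ∑ m ∈ Finset.range M, poissonCDF (m * (1 + θ)) m ≤
        meanPotential θ A 0 - meanPotential θ A M := by
    rw [Finset.mul_sum, ← Finset.sum_range_sub']
    exact Finset.sum_le_sum fun m _ => by
      linarith [meanPotential_succ_le hθ1 hε hAε m]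
  have : 0 ≤ meanPotential θ A M := integral_nonneg fun k =>
    driftPotential_nonneg (driftRate_nonneg θ.2)
  linarith [meanPotential_zero_le θ A]

end PoissonWalk

section QuantileIncrements

variable {n i j l : ℕ} {p ε u η : ℝ} {c : ℕ → ℝ}

namespace AdmissibleIndex

lemma binomSD_pos (hj : AdmissibleIndex n j u) (hu : 800 ≤ u) : 0 < binomSD n j := by
  linarith [hj.mul_le_binomSD hu]

lemma mul_le_eps_mul_binomSD (hj : AdmissibleIndex n j u) (hp : LevelBounds ε u p) :
    80000 * u ≤ ε * binomSD n j := by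
  nlinarith [hj.mul_sq_le_eps_mul_binomSD hp, hp.le_u]

lemma mul_mul_le_eps_mul_binomSD_sq (hj : AdmissibleIndex n j u) (hp : LevelBounds ε u p) :
    80000 * (u * binomSD n j) ≤ ε * binomSD n j ^ 2 := by
  nlinarith [hj.mul_le_eps_mul_binomSD hp, hj.binomSD_pos hp.le_u]

lemma mul_div_add_mul_div (hj : AdmissibleIndex n j u) :
    u * binomSD n j / j + u * binomSD n j / (n - j) = u / binomSD n j := by
  have hj0 := hj.cast_pos.ne'
  have hnj := (sub_pos.2 hj.cast_lt).ne'
  have hn := hj.trials_pos.ne'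
  have hσ : binomSD n j ≠ 0 := by
    intro h0
    have hsq := binomSD_sq hj.lt.le
    rw [h0, zero_pow two_ne_zero, eq_comm, div_eq_zero_iff] at hsq
    simp_all
  rw [eq_div_iff hσ, add_mul, div_mul_eq_mul_div, div_mul_eq_mul_div, mul_assoc, ← pow_two,
    binomSD_sq hj.lt.le]
  field_simp
  ring

end AdmissibleIndex

section NearIndices

variable (hη0 : 0 ≤ η) (hin : i ≤ n) (hnear : (i : ℝ) - l ≤ η * binomSD n i ^ 2)
include hη0 hin hnear

lemma one_sub_mul_le_of_sub_le : (1 - η) * i ≤ l := by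
  nlinarith [binomSD_sq_le hin]

lemma sub_le_one_add_mul_of_sub_le : (n : ℝ) - l ≤ (1 + η) * (n - i) := by
  nlinarith [binomSD_sq_le_sub hin]

lemma one_sub_mul_binomSD_le_of_sub_le (hli : l ≤ i) :
    (1 - η) * binomSD n i ≤ binomSD n l := by
  rcases le_total 1 η with hη1 | hη1
  · nlinarith [binomSD_nonneg n i, binomSD_nonneg n l]
  have hli' : (l : ℝ) ≤ i := Nat.cast_le.2 hli
  have hin' : (i : ℝ) ≤ n := Nat.cast_le.2 hin
  have hsq : (1 - η) * binomSD n i ^ 2 ≤ binomSD n l ^ 2 := by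
    rw [binomSD_sq hin, binomSD_sq (hli.trans hin), mul_div_assoc', ← mul_assoc]
    have hl : (1 - η) * i ≤ l := one_sub_mul_le_of_sub_le hη0 hin hnear
    gcongr ?_ / _
    exact mul_le_mul hl (by linarith) (by linarith) l.cast_nonneg
  refine (pow_le_pow_iff_left₀ (mul_nonneg (by linarith) (binomSD_nonneg n i))
    (binomSD_nonneg n l) two_ne_zero).1 (le_trans ?_ hsq)
  rw [mul_pow]
  gcongr
  nlinarith

lemma binomSD_le_one_add_mul_of_sub_le (hli : l ≤ i) :
    binomSD n l ≤ (1 + η) * binomSD n i := by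
  have hsq : binomSD n l ^ 2 ≤ (1 + η) * binomSD n i ^ 2 := by
    rw [binomSD_sq hin, binomSD_sq (hli.trans hin), mul_div_assoc']
    gcongr ?_ / _
    calc (l : ℝ) * (n - l) ≤ i * ((1 + η) * (n - i)) :=
          mul_le_mul (Nat.cast_le.2 hli) (sub_le_one_add_mul_of_sub_le hη0 hin hnear)
            (sub_nonneg.2 (Nat.cast_le.2 (hli.trans hin))) i.cast_nonneg
      _ = (1 + η) * (i * (n - i)) := by ring
  have hσ := binomSD_nonneg n i
  refine (pow_le_pow_iff_left₀ (binomSD_nonneg n l) (by positivity) two_ne_zero).1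
    (hsq.trans ?_)
  rw [mul_pow]
  gcongr
  nlinarith

end NearIndices

/-- The variables are relative errors: `i / c i = n * (1 + P)`, `l / c l = n * (1 + Q)` and
`(n - l + 1) / (1 - c l) = n * (1 - R + S)`. -/
lemma one_add_mul_two_add_le {P Q R S A B : ℝ} (hη0 : 0 ≤ η) (hη1 : η ≤ 1 / 40) (hA : 0 ≤ A)
    (hB : 0 ≤ B) (hP : (1 - η) * A ≤ P) (hQ : Q ≤ (1 + 5 * η) * A) (hR : (1 - 4 * η) * B ≤ R)
    (hS : S ≤ η * B) (hQη : Q ≤ η) (hSη : S ≤ η) :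
    (1 + (1 - 9 * η) * (A + B) / 2) * (2 + Q - R + S) ≤ 2 * (1 + P) := by
  have hR0 : 0 ≤ R := (mul_nonneg (by linarith) hB).trans hR
  set t := A + B with ht_def
  have ht : 0 ≤ t := add_nonneg hA hB
  set θ := (1 - 9 * η) * t / 2
  have hθ0 : 0 ≤ θ := div_nonneg (mul_nonneg (by linarith) ht) zero_le_two
  have hsum : (1 - 7 * η) * t ≤ 2 * P - Q + R - S := by
    rw [ht_def]
    nlinarith
  have hcross : θ * (Q - R + S) ≤ θ * (2 * η) :=
    mul_le_mul_of_nonneg_left (by linarith) hθ0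
  have hθ : θ * (2 + 2 * η) ≤ (1 - 7 * η) * t := by
    have hcoeff : (1 - 9 * η) / 2 * (2 + 2 * η) ≤ 1 - 7 * η := by nlinarith
    calc θ * (2 + 2 * η) = (1 - 9 * η) / 2 * (2 + 2 * η) * t := by ring
      _ ≤ (1 - 7 * η) * t := mul_le_mul_of_nonneg_right hcoeff ht
  nlinarith

namespace IsQuantileFamily

lemma sub_mul_le_eps_mul_sq (h : IsQuantileFamily n p c) (hp : LevelBounds ε u p)
    (hj : AdmissibleIndex n j u) : j - n * c j ≤ ε / 1000 * binomSD n j ^ 2 := by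
  have hσ := hj.binomSD_pos hp.le_u
  have huσ : 0 ≤ u * binomSD n j := mul_nonneg (by linarith [hp.le_u]) hσ.le
  calc j - n * c j ≤ (1 + ε) * u * binomSD n j := h.sub_mul_le hp hj
    _ ≤ 2 * (u * binomSD n j) := by
        rw [mul_assoc]
        gcongr
        linarith [hp.eps_le]
    _ ≤ ε / 1000 * binomSD n j ^ 2 := by linarith [hj.mul_mul_le_eps_mul_binomSD_sq hp]

lemma mul_le (h : IsQuantileFamily n p c) (hp : LevelBounds ε u p) (hj : AdmissibleIndex n j u) :
    n * c j ≤ j := by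
  have : 0 ≤ (1 - ε) * u * binomSD n j :=
    mul_nonneg (mul_nonneg (by linarith [hp.eps_le]) (by linarith [hp.le_u])) (binomSD_nonneg n j)
  linarith [h.le_sub_mul hp hj]

lemma le_sub_mul_div_mul (h : IsQuantileFamily n p c) (hp : LevelBounds ε u p)
    (hj : AdmissibleIndex n j u) :
    (1 - ε) * (u * binomSD n j / j) ≤ (j - n * c j) / (n * c j) := by
  have hmean := h.mul_le hp hj
  calc (1 - ε) * (u * binomSD n j / j) = (1 - ε) * u * binomSD n j / j := by ring
    _ ≤ (j - n * c j) / j := div_le_div_of_nonneg_right (h.le_sub_mul hp hj) hj.cast_pos.le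
    _ ≤ (j - n * c j) / (n * c j) :=
        div_le_div_of_nonneg_left (by linarith)
          (mul_pos hj.trials_pos (h.pos hj.one_le hj.lt.le)) hmean

section Increment

variable (h : IsQuantileFamily n p c) (hp : LevelBounds ε u p) (hεη : ε ≤ η) (hη : η ≤ 1 / 40)
  (hi : AdmissibleIndex n i u) (hl : AdmissibleIndex n l u) (hli : l ≤ i)
  (hnear : (i : ℝ) - l ≤ η * binomSD n i ^ 2)
include h hp hεη

lemma sub_mul_le_mul_min (hl : AdmissibleIndex n l u) :
    l - n * c l ≤ η / 100 * l ∧ l - n * c l ≤ η / 100 * (n - l) := by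
  have hη0 : 0 ≤ η := hp.eps_pos.le.trans hεη
  have hD : l - n * c l ≤ η / 100 * binomSD n l ^ 2 :=
    (h.sub_mul_le_eps_mul_sq hp hl).trans
      (mul_le_mul_of_nonneg_right (by linarith) (sq_nonneg _))
  exact ⟨hD.trans (mul_le_mul_of_nonneg_left (binomSD_sq_le hl.lt.le) (by linarith)),
    hD.trans (mul_le_mul_of_nonneg_left (binomSD_sq_le_sub hl.lt.le) (by linarith))⟩

include hη hi hl hli hnear

lemma sub_mul_div_mul_le :
    (l - n * c l) / (n * c l) ≤ (1 + 5 * η) * (u * binomSD n i / i) := by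
  have hη0 : 0 ≤ η := hp.eps_pos.le.trans hεη
  have hu := hp.le_u
  have hi0 := hi.cast_pos
  have hσ := binomSD_nonneg n i
  have hnum : l - n * c l ≤ (1 + η) * (1 + η) * (u * binomSD n i) := by
    calc l - n * c l ≤ (1 + ε) * u * binomSD n l := h.sub_mul_le hp hl
      _ ≤ (1 + η) * u * ((1 + η) * binomSD n i) := by
          gcongr
          · exact binomSD_nonneg n l
          · exact binomSD_le_one_add_mul_of_sub_le hη0 hi.lt.le hnear hli
      _ = _ := by ring
  have hden : (1 - η / 100) * ((1 - η) * i) ≤ n * c l :=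
    calc (1 - η / 100) * ((1 - η) * i) ≤ (1 - η / 100) * l := by
          gcongr
          · linarith
          · exact one_sub_mul_le_of_sub_le hη0 hi.lt.le hnear
      _ ≤ n * c l := by linarith [(h.sub_mul_le_mul_min hp hεη hl).1]
  have hcoeff : (1 + η) * (1 + η) ≤ (1 + 5 * η) * ((1 - η / 100) * (1 - η)) := by
    nlinarith [mul_nonneg hη0 (sq_nonneg η)]
  have : 0 < 1 - η := by linarith
  have : 0 < 1 - η / 100 := by linarith
  have : 0 < 100 - η := by linarith
  calc (l - n * c l) / (n * c l)
      ≤ ((1 + η) * (1 + η) * (u * binomSD n i)) / ((1 - η / 100) * ((1 - η) * i)) := by gcongr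
    _ ≤ ((1 + 5 * η) * ((1 - η / 100) * (1 - η)) * (u * binomSD n i)) /
          ((1 - η / 100) * ((1 - η) * i)) := by gcongr
    _ = (1 + 5 * η) * (u * binomSD n i / i) := by field_simp

lemma mul_div_sub_le_sub_mul_div :
    (1 - 4 * η) * (u * binomSD n i / (n - i)) ≤ (l - n * c l) / (n * (1 - c l)) := by
  have hη0 : 0 ≤ η := hp.eps_pos.le.trans hεη
  have hu := hp.le_u
  have hni := sub_pos.2 hi.cast_lt
  have hσ := binomSD_nonneg n i
  have hden0 : 0 < n * (1 - c l) :=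
    mul_pos hl.trials_pos (sub_pos.2 (h.lt_one hl.one_le hl.lt.le))
  have hnum : (1 - η) * (1 - η) * (u * binomSD n i) ≤ l - n * c l := by
    calc (1 - η) * (1 - η) * (u * binomSD n i) = (1 - η) * u * ((1 - η) * binomSD n i) := by ring
      _ ≤ (1 - ε) * u * binomSD n l := by
          gcongr ?_ * u * ?_
          · exact mul_nonneg (by linarith) hσ
          · exact mul_nonneg (by linarith [hp.eps_le]) (by linarith)
          · linarith
          · exact one_sub_mul_binomSD_le_of_sub_le hη0 hi.lt.le hnear hli
      _ ≤ l - n * c l := h.le_sub_mul hp hl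
  have hden : n * (1 - c l) ≤ (1 + η / 100) * ((1 + η) * (n - i)) :=
    calc n * (1 - c l) ≤ (1 + η / 100) * (n - l) := by
          linarith [(h.sub_mul_le_mul_min hp hεη hl).2]
      _ ≤ _ := by
          gcongr
          exact sub_le_one_add_mul_of_sub_le hη0 hi.lt.le hnear
  have hcoeff : (1 - 4 * η) * ((1 + η / 100) * (1 + η)) ≤ (1 - η) * (1 - η) := by
    nlinarith [sq_nonneg η, mul_nonneg hη0 (sq_nonneg η)]
  calc (1 - 4 * η) * (u * binomSD n i / (n - i))
      = ((1 - 4 * η) * ((1 + η / 100) * (1 + η)) * (u * binomSD n i)) /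
          ((1 + η / 100) * ((1 + η) * (n - i))) := by field_simp
    _ ≤ ((1 - η) * (1 - η) * (u * binomSD n i)) / ((1 + η / 100) * ((1 + η) * (n - i))) := by
        gcongr
    _ ≤ (l - n * c l) / (n * (1 - c l)) :=
        div_le_div₀ (sub_nonneg.2 (h.mul_le hp hl)) hnum hden0 hden

omit hη hnear in
lemma one_div_mul_one_sub_le : 1 / (n * (1 - c l)) ≤ η * (u * binomSD n i / (n - i)) := by
  have hni := sub_pos.2 hi.cast_lt
  have huσ : 1 ≤ η * (u * binomSD n i) := by
    have hu := hp.le_u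
    have hσ : 80000 * u ≤ η * binomSD n i :=
      (hi.mul_le_eps_mul_binomSD hp).trans (by gcongr; exact binomSD_nonneg n i)
    nlinarith
  have hden : (n : ℝ) - i ≤ n * (1 - c l) := by
    linarith [h.mul_le hp hl, (Nat.cast_le (α := ℝ)).2 hli]
  calc 1 / (n * (1 - c l)) ≤ 1 / ((n : ℝ) - i) := one_div_le_one_div_of_le hni hden
    _ ≤ η * (u * binomSD n i) / (n - i) := by gcongr
    _ = η * (u * binomSD n i / (n - i)) := by ring

lemma one_add_mul_div_le_sub :
    (1 + (1 - 9 * η) * (u / binomSD n i) / 2) * (c i / i) ≤ c (l + 1) - c l := by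
  have hη0 : 0 ≤ η := hp.eps_pos.le.trans hεη
  have hu := hp.le_u
  have hn := hl.trials_pos
  have hi0 := hi.cast_pos
  have hni := sub_pos.2 hi.cast_lt
  have hσ := binomSD_nonneg n i
  have hci := h.pos hi.one_le hi.lt.le
  have hcl := h.pos hl.one_le hl.lt.le
  have hcl1 := sub_pos.2 (h.lt_one hl.one_le hl.lt.le)
  have hDl : 0 ≤ l - n * c l := sub_nonneg.2 (h.mul_le hp hl)
  have hDi : 0 ≤ i - n * c i := sub_nonneg.2 (h.mul_le hp hi)
  have hDl1 := (h.sub_mul_le_mul_min hp hεη hl).1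
  refine le_trans ?_ (two_div_le_sub_of_binomTail_eq hl.lt hcl (sub_pos.1 hcl1)
    (h.pos (by lia) hl.lt) (h.lt_one (by lia) hl.lt)
    ((h.binomTail_eq hl.one_le hl.lt.le).trans (h.binomTail_eq (by lia) hl.lt).symm)
    (h.mul_le hp hl))
  have hS := h.one_div_mul_one_sub_le hp hεη hi hl hli
  have hB : u * binomSD n i / (n - i) ≤ 1 := by
    have hσu : u ≤ binomSD n i := by linarith [hi.mul_le_binomSD hu]
    rw [div_le_iff₀ hni]
    nlinarith [binomSD_sq_le_sub hi.lt.le]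
  have hdrift := one_add_mul_two_add_le hη0 hη (A := u * binomSD n i / i) (by positivity)
    (by positivity)
    ((mul_le_mul_of_nonneg_right (by linarith) (by positivity)).trans (h.le_sub_mul_div_mul hp hi))
    (h.sub_mul_div_mul_le hp hεη hη hi hl hli hnear)
    (h.mul_div_sub_le_sub_mul_div hp hεη hη hi hl hli hnear) hS
    (by rw [div_le_iff₀ (by positivity)]; nlinarith)
    (hS.trans (mul_le_of_le_one_right hη0 hB))
  rw [hi.mul_div_add_mul_div] at hdrift
  have hrecip : c i / i = 1 / (n * (1 + (i - n * c i) / (n * c i))) := by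
    rw [eq_div_iff (by positivity)]
    field_simp
    ring
  have hsum : l / c l + (n - l + 1) / (1 - c l) = n * (2 + (l - n * c l) / (n * c l) -
      (l - n * c l) / (n * (1 - c l)) + 1 / (n * (1 - c l))) := by
    field_simp
    ring
  have hsum0 : 0 < l / c l + ((n : ℝ) - l + 1) / (1 - c l) := by
    have := sub_pos.2 hl.cast_lt
    positivity
  rw [hsum] at hsum0 ⊢
  rw [hrecip, mul_one_div, div_le_div_iff₀ (by positivity) hsum0]
  nlinarith [mul_le_mul_of_nonneg_left hdrift hn.le]

end Increment

lemma sub_mul_one_add_le (h : IsQuantileFamily n p c) (hp : LevelBounds ε u p) (hεη : ε ≤ η)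
    (hη : η ≤ 1 / 40) (hadm : ∀ l, j ≤ l → l ≤ i → AdmissibleIndex n l u) (hji : j ≤ i)
    (hnear : (i : ℝ) - j ≤ η * binomSD n i ^ 2) :
    ((i : ℝ) - j) * (1 + (1 - 9 * η) * (u / binomSD n i) / 2) ≤ i * (1 - c j / c i) := by
  have hi := hadm i hji le_rfl
  have hi0 := hi.cast_pos
  have hci := h.pos hi.one_le hi.lt.le
  set slope := (1 + (1 - 9 * η) * (u / binomSD n i) / 2) * (c i / i)
  have hsteps : ∀ m : ℕ, j + m ≤ i → slope * m ≤ c (j + m) - c j := by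
    intro m
    induction m with
    | zero => simp
    | succ m ih =>
      intro hm
      have hstep : slope ≤ c (j + m + 1) - c (j + m) :=
        h.one_add_mul_div_le_sub hp hεη hη hi (hadm (j + m) (by lia) (by lia)) (by lia)
          (by push_cast; linarith [m.cast_nonneg (α := ℝ)])
      rw [← add_assoc]
      push_cast
      rw [mul_add, mul_one]
      linarith [ih (by lia)]
  have htotal := hsteps (i - j) (by lia)
  rw [Nat.add_sub_cancel' hji, Nat.cast_sub hji] at htotal
  calc ((i : ℝ) - j) * (1 + (1 - 9 * η) * (u / binomSD n i) / 2)
      = slope * (i - j) * (i / c i) := by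
        simp only [slope]
        field_simp
    _ ≤ (c i - c j) * (i / c i) := by gcongr
    _ = i * (1 - c j / c i) := by field_simp

end IsQuantileFamily

end QuantileIncrements

section ThinnedTails

variable {n i j : ℕ} {p q θ ε u ρ g s η : ℝ} {c : ℕ → ℝ}

lemma binomTail_eq_sum_range_one_sub (q : ℝ) (hji : j ≤ i) :
    binomTail i q j = ∑ k ∈ Finset.range (i - j + 1), binomWeight i (1 - q) k := by
  refine Finset.sum_nbij' (fun k => i - k) (fun k => i - k) ?_ ?_ ?_ ?_ ?_
  iterate 4 { intro k hk; simp only [Finset.mem_Icc, Finset.mem_range] at hk ⊢; lia }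
  intro k hk
  have hki := (Finset.mem_Icc.1 hk).2
  rw [binomWeight, binomWeight, Nat.choose_symm hki, Nat.sub_sub_self hki]
  ring

lemma binomTail_le_mul_poissonCDF (hj : 1 ≤ j) (hji : j ≤ i) (hq0 : 0 ≤ q) (hq1 : q ≤ 1)
    (hθ : 0 ≤ θ) (hdrift : ((i : ℝ) - j) * (1 + θ) ≤ i * (1 - q)) :
    binomTail i q j ≤ (i : ℝ) / j * poissonCDF ((i - j : ℕ) * (1 + θ)) (i - j) := by
  have hj0 : (0 : ℝ) < j := Nat.cast_pos.2 hj
  have hji' : (j : ℝ) ≤ i := Nat.cast_le.2 hji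
  have hi0 : (0 : ℝ) < i := hj0.trans_le hji'
  rw [Nat.cast_sub hji]
  set b := ((i : ℝ) - j) * (1 + θ)
  have hb0 : 0 ≤ b := mul_nonneg (by linarith) (by linarith)
  have hbi : b / i ≤ 1 - q := (div_le_iff₀ hi0).2 (by linarith)
  have hbi0 : 0 ≤ b / i := by positivity
  calc binomTail i q j ≤ binomTail i (1 - b / i) j :=
        monotoneOn_binomTail i j ⟨hq0, hq1⟩ ⟨by linarith, by linarith⟩ (by linarith)
    _ = ∑ k ∈ Finset.range (i - j + 1), binomWeight i (b / i) k := by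
        rw [binomTail_eq_sum_range_one_sub _ hji, sub_sub_cancel]
    _ ≤ ∑ k ∈ Finset.range (i - j + 1), (i : ℝ) / j * poissonWeight b k := by
        refine Finset.sum_le_sum fun k hk => ?_
        have hkj : k + j ≤ i := by
          have := Finset.mem_range.1 hk
          lia
        have hkj' : (j : ℝ) ≤ i - k := by
          rw [le_sub_iff_add_le']
          exact_mod_cast hkj
        have hweight := binomWeight_le_poissonWeight (i := i) (k := k) (by lia) hbi0
          (by linarith : b / i ≤ 1)
        rw [mul_div_cancel₀ b hi0.ne'] at hweight
        refine hweight.trans (mul_le_mul_of_nonneg_right ?_ (poissonWeight_nonneg hb0 k))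
        gcongr
    _ = (i : ℝ) / j * poissonCDF b (i - j) := by rw [poissonCDF, Finset.mul_sum]

lemma binomTail_le_exp_neg_sq_div_eight (hq0 : 0 ≤ q) (hq1 : q ≤ 1) (hs : 0 < s) (hg0 : 0 ≤ g)
    (hgs : g ≤ 4 * s) (hvar : n * q * (1 - q) ≤ 2 * s ^ 2) (hgap : g * s ≤ j - n * q) :
    binomTail n q j ≤ Real.exp (-(g ^ 2 / 8)) := by
  have hl0 : 0 ≤ g / (4 * s) := by positivity
  have hl1 : g / (4 * s) ≤ 1 := (div_le_one (by positivity)).2 hgs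
  refine (binomTail_le_exp_bernstein hq0 hq1 hl0 hl1 j).trans (Real.exp_le_exp.2 ?_)
  set l := g / (4 * s)
  have hls : l * s = g / 4 := by
    simp only [l]
    field_simp
  calc -(l * (j - n * q)) + n * q * (1 - q) * l ^ 2 * (1 + l) / 2
      ≤ -(l * (g * s)) + 2 * s ^ 2 * l ^ 2 * (1 + 1) / 2 := by gcongr
    _ = -((l * s) * g) + 2 * (l * s) ^ 2 := by ring
    _ = -(g ^ 2 / 8) := by
        rw [hls]
        ring

lemma div_mul_binomSD_le (hi : 0 < i) (hin : i ≤ n) (hj : j < n) (hρ0 : 0 ≤ ρ)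
    (hρ : (j * (n - i) / (i * (n - j)) : ℝ) ≤ ρ ^ 2) :
    (j : ℝ) / i * binomSD n i ≤ ρ * binomSD n j := by
  have hσi := binomSD_nonneg n i
  have hσj := binomSD_nonneg n j
  refine (pow_le_pow_iff_left₀ (by positivity) (by positivity) two_ne_zero).1 ?_
  have : (0 : ℝ) < i := Nat.cast_pos.2 hi
  have hnj : (0 : ℝ) < n - j := sub_pos.2 (Nat.cast_lt.2 hj)
  have hn : (0 : ℝ) < n := Nat.cast_pos.2 (by lia)
  calc ((j : ℝ) / i * binomSD n i) ^ 2 = j * (n - i) / (i * (n - j)) * binomSD n j ^ 2 := by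
        rw [mul_pow, binomSD_sq hin, binomSD_sq hj.le]
        field_simp
    _ ≤ (ρ * binomSD n j) ^ 2 := by
        rw [mul_pow]
        gcongr

lemma mul_sub_div_mul_sub_le_sq (hη0 : 0 ≤ η) (hη1 : η ≤ 1) (hi : 0 < i) (hin : i < n)
    (hji : j ≤ i) (hfar : η * binomSD n i ^ 2 ≤ (i : ℝ) - j) :
    (j * (n - i) / (i * (n - j)) : ℝ) ≤ (1 - η / 4) ^ 2 := by
  have hi0 : (0 : ℝ) < i := Nat.cast_pos.2 hi
  have hin' : (i : ℝ) < n := Nat.cast_lt.2 hin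
  have hji' : (j : ℝ) ≤ i := Nat.cast_le.2 hji
  have hn : (0 : ℝ) < n := hi0.trans hin'
  rw [binomSD_sq hin.le, mul_div_assoc', div_le_iff₀ hn] at hfar
  have hsq : η * (i * (i - j)) ≤ (i - j) * n := by
    calc η * (i * ((i : ℝ) - j)) ≤ 1 * (n * (i - j)) := by
          have := sub_nonneg.2 hji'
          gcongr
      _ = (i - j) * n := by ring
  calc (j * (n - i) / (i * (n - j)) : ℝ) ≤ 1 - η / 2 := by
        rw [div_le_iff₀ (mul_pos hi0 (by linarith))]
        linarith
    _ ≤ (1 - η / 4) ^ 2 := by nlinarith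

namespace IsQuantileFamily

lemma mul_one_sub_le (h : IsQuantileFamily n p c) (hp : LevelBounds ε u p)
    (hj : AdmissibleIndex n j u) : j * (1 - c j) ≤ 2 * binomSD n j ^ 2 := by
  have hn := hj.trials_pos
  have hone : 1 - c j ≤ 2 * (n - j) / n := by
    rw [le_div_iff₀ hn]
    nlinarith [h.sub_mul_le_eps_mul_sq hp hj, binomSD_sq_le_sub hj.lt.le, hp.eps_le, hj.cast_lt]
  calc j * (1 - c j) ≤ j * (2 * (n - j) / n) := mul_le_mul_of_nonneg_left hone hj.cast_pos.le
    _ = 2 * binomSD n j ^ 2 := by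
        rw [binomSD_sq hj.lt.le]
        ring

lemma mul_mul_one_sub_le (h : IsQuantileFamily n p c) (hp : LevelBounds ε u p)
    (hj : AdmissibleIndex n j u) : n * c j * (1 - c j) ≤ 2 * binomSD n j ^ 2 :=
  (mul_le_mul_of_nonneg_right (h.mul_le hp hj)
    (sub_nonneg.2 (h.le_one hj.one_le hj.lt.le))).trans (h.mul_one_sub_le hp hj)

lemma cast_sub_mul_div_eq (h : IsQuantileFamily n p c) (hi : AdmissibleIndex n i u) :
    (j : ℝ) - i * (c j / c i) =
      ((j - n * c j) - j / i * (i - n * c i)) * (i / (n * c i)) := by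
  have hci := h.pos hi.one_le hi.lt.le
  have hi0 := hi.cast_pos
  have hn := hi.trials_pos
  field_simp
  ring

lemma mul_le_cast_sub_mul_div (h : IsQuantileFamily n p c) (hp : LevelBounds ε u p)
    (hi : AdmissibleIndex n i u) (hj : AdmissibleIndex n j u) (hρ0 : 0 ≤ ρ)
    (hρ : (j * (n - i) / (i * (n - j)) : ℝ) ≤ ρ ^ 2) (hg0 : 0 ≤ g)
    (hg : g ≤ (1 - ε) - (1 + ε) * ρ) :
    g * (u * binomSD n j) ≤ (j : ℝ) - i * (c j / c i) := by
  have hε0 := hp.eps_pos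
  have hu := hp.le_u
  have hi0 := hi.cast_pos
  have huσ : 0 ≤ u * binomSD n j := mul_nonneg (by linarith) (binomSD_nonneg n j)
  have hshift : (j : ℝ) / i * (i - n * c i) ≤ (1 + ε) * ρ * (u * binomSD n j) :=
    calc (j : ℝ) / i * (i - n * c i) ≤ j / i * ((1 + ε) * u * binomSD n i) := by
          gcongr
          exact h.sub_mul_le hp hi
      _ = (1 + ε) * u * (j / i * binomSD n i) := by ring
      _ ≤ (1 + ε) * u * (ρ * binomSD n j) := by
          gcongr (1 + ε) * u * ?_
          exact div_mul_binomSD_le hi.one_le hi.lt.le hj.lt hρ0 hρ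
      _ = _ := by ring
  have hgap : g * (u * binomSD n j) ≤ (j - n * c j) - j / i * (i - n * c i) := by
    linarith [h.le_sub_mul hp hj, mul_le_mul_of_nonneg_right hg huσ]
  have hratio : 1 ≤ (i : ℝ) / (n * c i) :=
    (one_le_div (mul_pos hi.trials_pos (h.pos hi.one_le hi.lt.le))).2 (h.mul_le hp hi)
  rw [h.cast_sub_mul_div_eq hi]
  exact hgap.trans (le_mul_of_one_le_right ((mul_nonneg hg0 huσ).trans hgap) hratio)

lemma binomTail_div_le_exp_neg (h : IsQuantileFamily n p c) (hp : LevelBounds ε u p)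
    (hi : AdmissibleIndex n i u) (hj : AdmissibleIndex n j u) (hji : j ≤ i) (hεη : ε ≤ η / 20)
    (hη : η ≤ 1 / 40) (hfar : η * binomSD n i ^ 2 ≤ (i : ℝ) - j) :
    binomTail i (c j / c i) j ≤ Real.exp (-(η ^ 2 * u ^ 2 / 512)) := by
  have hε0 := hp.eps_pos
  have hu := hp.le_u
  have hσ := hj.mul_le_binomSD hu
  have hq0 := (h.div_pos hj.one_le hji hi.lt.le).le
  have hq1 := h.div_le_one hj.one_le hji hi.lt.le
  have hgap := h.mul_le_cast_sub_mul_div hp hi hj (ρ := 1 - η / 4) (g := η / 8) (by linarith)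
    (mul_sub_div_mul_sub_le_sq (by linarith) (by linarith) hi.one_le hi.lt hji hfar)
    (by linarith) (by nlinarith)
  have hmean : i * (c j / c i) ≤ j := by
    have : 0 ≤ η / 8 * (u * binomSD n j) :=
      mul_nonneg (by linarith) (mul_nonneg (by linarith) (by linarith))
    linarith
  have hcj : c j ≤ c j / c i := le_div_self (h.nonneg hj.one_le hj.lt.le)
    (h.pos hi.one_le hi.lt.le) (h.le_one hi.one_le hi.lt.le)
  have hvar : i * (c j / c i) * (1 - c j / c i) ≤ 2 * binomSD n j ^ 2 :=
    calc i * (c j / c i) * (1 - c j / c i) ≤ j * (1 - c j) :=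
          mul_le_mul hmean (by linarith) (by linarith) j.cast_nonneg
      _ ≤ 2 * binomSD n j ^ 2 := h.mul_one_sub_le hp hj
  refine (binomTail_le_exp_neg_sq_div_eight hq0 hq1 (g := η / 8 * u) (by linarith)
    (mul_nonneg (by linarith) (by linarith)) (by nlinarith) hvar (by linarith)).trans_eq ?_
  ring_nf

end IsQuantileFamily

end ThinnedTails

section FarIndices

variable {n i j m m₀ : ℕ} {p q ε u δ ρ : ℝ} {c : ℕ → ℝ}

lemma exp_le_one_add_mul_one_sub (hδ0 : 0 ≤ δ) (hδ1 : δ ≤ 1) :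
    Real.exp (26 / 100 * δ) ≤ (1 + δ) * (1 - δ / 8) := by
  have hpos : 0 < 1 - 26 / 100 * δ := by linarith
  calc Real.exp (26 / 100 * δ) ≤ 1 / (1 - 26 / 100 * δ) := by
        rw [le_div_iff₀ hpos, ← le_div_iff₀' (Real.exp_pos _), one_div, ← Real.exp_neg]
        linarith [Real.add_one_le_exp (-(26 / 100 * δ))]
    _ ≤ (1 + δ) * (1 - δ / 8) := by
        rw [div_le_iff₀ hpos]
        have : 0 ≤ δ * (1 - δ) := mul_nonneg hδ0 (by linarith)
        nlinarith [mul_nonneg hδ0 this, mul_nonneg hδ0 hδ0]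

lemma exp_neg_le_of_one_le_mul {t : ℝ} (hδ : 0 ≤ δ) (ht : 1 ≤ δ * t) : Real.exp (-t) ≤ δ := by
  rw [Real.exp_neg, inv_le_iff_one_le_mul₀ (Real.exp_pos t)]
  exact ht.trans (mul_le_mul_of_nonneg_left (by linarith [Real.add_one_le_exp t]) hδ)

lemma half_binomSD_sq_le_mul_one_sub (hi : 0 < i) (hin : i < n) (hji : j ≤ i)
    (hq : q ≤ j / i) (hρ : (j * (n - i) / (i * (n - j)) : ℝ) ≤ 1 / 2) :
    binomSD n j ^ 2 / 2 ≤ j * (1 - q) := by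
  have hi0 : (0 : ℝ) < i := Nat.cast_pos.2 hi
  have hin' : (i : ℝ) < n := Nat.cast_lt.2 hin
  have hji' : (j : ℝ) ≤ i := Nat.cast_le.2 hji
  have hn : (0 : ℝ) < n := hi0.trans hin'
  rw [div_le_iff₀ (mul_pos hi0 (by linarith))] at hρ
  calc binomSD n j ^ 2 / 2 = j * ((n - j) / (2 * n)) := by
        rw [binomSD_sq (hji.trans hin.le)]
        field_simp
    _ ≤ j * (1 - j / i) := by
        gcongr
        rw [one_sub_div hi0.ne', div_le_div_iff₀ (by positivity) hi0]
        linarith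
    _ ≤ j * (1 - q) := by gcongr

namespace IsQuantileFamily

variable (h : IsQuantileFamily n p c) (hp : LevelBounds ε u p) (hi : AdmissibleIndex n i u)
  (hj : AdmissibleIndex n j u) (hji : j ≤ i)
include h hp hi

lemma one_sub_mul_binomTail_le (hj0 : 1 ≤ j) (hji : j ≤ i)
    (hm₀ : m₀ + u * binomSD n i ≤ n * c i) :
    (1 - 2 / u ^ 2) * binomTail m₀ (c j / c i) j ≤ p := by
  have hσ := hi.binomSD_pos hp.le_u
  have hu : 0 < u := by linarith [hp.le_u]
  have hci0 := h.nonneg hi.one_le hi.lt.le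
  have hci1 := h.le_one hi.one_le hi.lt.le
  have hchebyshev : 1 - 2 / u ^ 2 ≤ binomTail n (c i) m₀ :=
    calc 1 - 2 / u ^ 2 = 1 - 2 * binomSD n i ^ 2 / (u * binomSD n i) ^ 2 := by field_simp
      _ ≤ 1 - n * c i * (1 - c i) / (u * binomSD n i) ^ 2 := by
          gcongr 1 - ?_ / _
          exact h.mul_mul_one_sub_le hp hi
      _ ≤ binomTail n (c i) m₀ :=
          one_sub_variance_div_sq_le_binomTail hci0 hci1 (by positivity) hm₀
  exact (mul_le_mul_of_nonneg_right hchebyshev (binomTail_nonneg (h.div_pos hj0 hji hi.lt.le).le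
    (h.div_le_one hj0 hji hi.lt.le) j)).trans (h.binomTail_mul_binomTail_div_le m₀ hj0 hji hi.lt.le)

omit hi in
lemma sub_mul_le_nine_eighths (hj : AdmissibleIndex n j u) :
    j - n * c j ≤ 9 / 8 * (u * binomSD n j) := by
  have : 0 ≤ u * binomSD n j := mul_nonneg (by linarith [hp.le_u]) (binomSD_nonneg n j)
  nlinarith [h.sub_mul_le hp hj, hp.eps_le]

include hj

lemma cast_sub_mul_div_le : (j : ℝ) - i * (c j / c i) ≤ 13 / 10 * (u * binomSD n j) := by
  have hi0 := hi.cast_pos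
  have hnci := mul_pos hi.trials_pos (h.pos hi.one_le hi.lt.le)
  have huσ : 0 ≤ u * binomSD n j := mul_nonneg (by linarith [hp.le_u]) (binomSD_nonneg n j)
  have hratio : (i : ℝ) / (n * c i) ≤ 11 / 10 := by
    rw [div_le_iff₀ hnci]
    nlinarith [h.sub_mul_le_eps_mul_sq hp hi, binomSD_sq_le hi.lt.le, hp.eps_le]
  have hdev : (j - n * c j) - j / i * (i - n * c i) ≤ 9 / 8 * (u * binomSD n j) := by
    have : 0 ≤ (j : ℝ) / i * (i - n * c i) :=
      mul_nonneg (by positivity) (sub_nonneg.2 (h.mul_le hp hi))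
    linarith [h.sub_mul_le_nine_eighths hp hj]
  rw [h.cast_sub_mul_div_eq hi]
  calc ((j - n * c j) - j / i * (i - n * c i)) * (i / (n * c i))
      ≤ 9 / 8 * (u * binomSD n j) * (11 / 10) := by gcongr
    _ ≤ 13 / 10 * (u * binomSD n j) := by linarith

section OddsRatio

variable (hρ0 : 0 ≤ ρ) (hρ : (j * (n - i) / (i * (n - j)) : ℝ) ≤ ρ ^ 2)
  (hρδ : 2000 * u ^ 2 * ρ ≤ δ) (hδ1 : δ ≤ 1)
include hρ0 hρ hρδ hδ1

lemma div_le_cast_div : c j / c i ≤ j / i := by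
  have hu := hp.le_u
  have hρ1 : 2000 * ρ ≤ 1 := by nlinarith
  have hgap := h.mul_le_cast_sub_mul_div hp hi hj hρ0 hρ (g := 1 / 2) (by norm_num)
    (by nlinarith [hp.eps_le, hp.eps_pos])
  have : 0 ≤ u * binomSD n j := mul_nonneg (by linarith) (binomSD_nonneg n j)
  rw [le_div_iff₀ hi.cast_pos]
  linarith

lemma div_mul_binomSD_le_mul : c j / c i * binomSD n i ≤ ρ * binomSD n j :=
  (mul_le_mul_of_nonneg_right (h.div_le_cast_div hp hi hj hρ0 hρ hρδ hδ1)
    (binomSD_nonneg n i)).trans (div_mul_binomSD_le hi.one_le hi.lt.le hj.lt hρ0 hρ)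

include hji

/-- The hazard bound `binomTail_le_exp_mul_binomTail` is applied with window `⌊σ / (16 * u)⌋` and
rate `8 * u / σ`, where `σ = binomSD n j`. -/
lemma binomTail_div_le_exp_mul (hm₀ : i - 25 / 8 * (u * binomSD n i) ≤ m₀) (hm₀m : m₀ ≤ m)
    (hm : m ≤ i + 5 * (u * binomSD n i)) :
    binomTail m (c j / c i) j ≤ Real.exp (26 / 100 * δ) * binomTail m₀ (c j / c i) j := by
  have hu := hp.le_u
  have hσ := hj.mul_le_binomSD hu
  have hσ0 := hj.binomSD_pos hu
  have hρ1 : 2000 * ρ ≤ 1 := by nlinarith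
  have hq0 := h.div_pos hj.one_le hji hi.lt.le
  have hqσ := h.div_mul_binomSD_le_mul hp hi hj hρ0 hρ hρδ hδ1
  have hV := half_binomSD_sq_le_mul_one_sub hi.one_le hi.lt hji
    (h.div_le_cast_div hp hi hj hρ0 hρ hρδ hδ1) (hρ.trans (by nlinarith))
  have hgap := h.cast_sub_mul_div_le hp hi hj
  set q := c j / c i
  set σ := binomSD n j
  have hq1 : q < 1 := by
    have : 0 < (j : ℝ) * (1 - q) := lt_of_lt_of_le (by positivity) hV
    linarith [pos_of_mul_pos_right this j.cast_nonneg]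
  set x := σ / (16 * u)
  have hx : 1 ≤ x := by
    rw [le_div_iff₀ (by linarith)]
    linarith
  have hwindow := Nat.floor_le (zero_le_one.trans hx)
  have hxσ : x ≤ u * σ := (div_le_self hσ0.le (by linarith)).trans (by nlinarith)
  have hquσ : q * (u * binomSD n i) ≤ 1 / 2000 * (u * σ) := by nlinarith
  have hmean : j + ⌊x⌋₊ - m₀ * q ≤ 8 * u / σ * (j * (1 - q)) :=
    calc j + ⌊x⌋₊ - m₀ * q ≤ 4 * (u * σ) := by nlinarith
      _ = 8 * u / σ * (σ ^ 2 / 2) := by field_simp; norm_num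
      _ ≤ 8 * u / σ * (j * (1 - q)) := by gcongr
  obtain ⟨k, rfl⟩ := Nat.exists_eq_add_of_le' hj.one_le
  push_cast at hmean hgap
  have hratio := binomTail_le_exp_mul_binomTail (j := k) hq0.le hq1 (Nat.one_le_floor_iff x |>.2 hx)
    (X := 8 * u / σ) (by positivity)
    (calc ⌊x⌋₊ * (8 * u / σ) ≤ x * (8 * u / σ) := by gcongr
      _ = 1 / 2 := by simp only [x]; field_simp; norm_num)
    hm₀m (by linarith)
  refine hratio.trans (mul_le_mul_of_nonneg_right (Real.exp_le_exp.2 ?_)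
    (binomTail_nonneg hq0.le hq1.le _))
  calc 2 * q / ⌊x⌋₊ * (m - m₀) ≤ 2 * q / (x / 2) * (65 / 8 * (u * binomSD n i)) := by
        gcongr
        · exact sub_nonneg.2 (Nat.cast_le.2 hm₀m)
        · exact (Nat.div_two_lt_floor hx).le
        · linarith
    _ = 520 * u ^ 2 / σ * (q * binomSD n i) := by simp only [x]; field_simp; ring
    _ ≤ 520 * u ^ 2 / σ * (ρ * σ) := by gcongr
    _ = 520 * u ^ 2 * ρ := by field_simp
    _ ≤ 26 / 100 * δ := by linarith

variable (hδu : 16 ≤ δ * u ^ 2)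
include hδu

lemma binomTail_div_le_one_add_mul (hm : m ≤ i + 5 * (u * binomSD n i)) :
    binomTail m (c j / c i) j ≤ (1 + δ) * p := by
  have hu := hp.le_u
  have hσ := hi.mul_le_binomSD hu
  have hδ0 : 0 ≤ δ := le_trans (by positivity) hρδ
  have hq0 := (h.div_pos hj.one_le hji hi.lt.le).le
  have hq1 := h.div_le_one hj.one_le hji hi.lt.le
  have huσ : 1 ≤ u * binomSD n i := by nlinarith
  have hci : 0 ≤ n * c i - u * binomSD n i := by
    nlinarith [h.sub_mul_le_eps_mul_sq hp hi, hi.mul_mul_le_eps_mul_binomSD_sq hp,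
      binomSD_sq_le hi.lt.le, hp.eps_le, sq_nonneg (binomSD n i)]
  set m₀ := ⌊n * c i - u * binomSD n i⌋₊
  have hm₀ : m₀ ≤ n * c i - u * binomSD n i := Nat.floor_le hci
  have hm₀' : n * c i - u * binomSD n i < m₀ + 1 := Nat.lt_floor_add_one _
  have hbase := h.one_sub_mul_binomTail_le hp hi (m₀ := m₀) hj.one_le hji (by linarith)
  have hratio := h.binomTail_div_le_exp_mul hp hi hj hji hρ0 hρ hρδ hδ1 (m := max m m₀)
    (by linarith [h.sub_mul_le_nine_eighths hp hi]) (le_max_right m m₀)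
    (by
      rw [Nat.cast_max]
      exact max_le hm (by linarith [h.mul_le hp hi]))
  have hB := binomTail_nonneg (m := m₀) hq0 hq1 j
  have huδ : 2 / u ^ 2 ≤ δ / 8 := by
    rw [div_le_iff₀ (by positivity)]
    linarith
  calc binomTail m (c j / c i) j ≤ binomTail (max m m₀) (c j / c i) j :=
        monotone_binomTail_trials hq0 hq1 j (le_max_left m m₀)
    _ ≤ Real.exp (26 / 100 * δ) * binomTail m₀ (c j / c i) j := hratio
    _ ≤ (1 + δ) * (1 - 2 / u ^ 2) * binomTail m₀ (c j / c i) j := by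
        gcongr
        exact (exp_le_one_add_mul_one_sub hδ0 hδ1).trans (by gcongr)
    _ ≤ (1 + δ) * p := by
        rw [mul_assoc]
        gcongr

lemma measureReal_le_countBelow_and_le_le :
    (nullMeasure n).real {w | i ≤ countBelow (c i) w ∧ j ≤ countBelow (c j) w} ≤ 2 * δ * p := by
  have hu := hp.le_u
  have hσ := hi.mul_le_binomSD hu
  have hσ0 := hi.binomSD_pos hu
  have hδ0 : 0 ≤ δ := le_trans (by positivity) hρδ
  have hp0 : 0 < p := hp.pos
  have huσ : 1 ≤ u * binomSD n i := by nlinarith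
  set m := ⌈(i : ℝ) + 4 * (u * binomSD n i)⌉₊
  have hm : (i : ℝ) + 4 * (u * binomSD n i) ≤ m := Nat.le_ceil _
  have hm' : (m : ℝ) < i + 4 * (u * binomSD n i) + 1 := Nat.ceil_lt_add_one (by positivity)
  have hexceed : binomTail n (c i) m ≤ δ * p :=
    calc binomTail n (c i) m ≤ Real.exp (-((4 * u) ^ 2 / 8)) :=
          binomTail_le_exp_neg_sq_div_eight (h.nonneg hi.one_le hi.lt.le)
            (h.le_one hi.one_le hi.lt.le) hσ0 (by linarith) (by linarith)
            (h.mul_mul_one_sub_le hp hi) (by linarith [h.mul_le hp hi])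
      _ ≤ Real.exp (-(u ^ 2)) * Real.exp (-((1 + ε / 2) * u ^ 2 / 2)) := by
          rw [← Real.exp_add, Real.exp_le_exp]
          nlinarith [hp.eps_le]
      _ ≤ δ * p := by
          gcongr
          · exact exp_neg_le_of_one_le_mul hδ0 (by linarith)
          · exact hp.exp_le
  have hfar := h.binomTail_div_le_one_add_mul hp hi hj hji hρ0 hρ hρδ hδ1 hδu (m := m)
    (by linarith)
  have hpδ : p ≤ δ / 8 :=
    hp.le_exp.trans (exp_neg_le_of_one_le_mul (by linarith) (by linarith))
  have hfarδ : p * binomTail m (c j / c i) j ≤ p * δ :=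
    mul_le_mul_of_nonneg_left (hfar.trans (by nlinarith)) hp0.le
  linarith [h.measureReal_le_countBelow_and_le m hj.one_le hji hi.lt.le]

end OddsRatio

end IsQuantileFamily

end FarIndices

section HalfLogit

variable {n i j : ℕ}

/-- Half the log-odds of `j` out of `n`, a scale on which the odds ratio of two indices is the
exponential of minus twice their distance. -/
noncomputable def halfLogit (n j : ℕ) : ℝ := (Real.log j - Real.log (n - j)) / 2

lemma halfLogit_mono (hj : 1 ≤ j) (hji : j ≤ i) (hin : i < n) :
    halfLogit n j ≤ halfLogit n i := by
  have : (0 : ℝ) < j := Nat.cast_pos.2 hj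
  have hin0 : (0 : ℝ) < n - i := sub_pos.2 (Nat.cast_lt.2 hin)
  unfold halfLogit
  gcongr

lemma odds_ratio_eq_exp_halfLogit_sq (hj : 1 ≤ j) (hji : j ≤ i) (hin : i < n) :
    (j * (n - i) / (i * (n - j)) : ℝ) = Real.exp (-(halfLogit n i - halfLogit n j)) ^ 2 := by
  have hj0 : (0 : ℝ) < j := Nat.cast_pos.2 hj
  have hji' : (j : ℝ) ≤ i := Nat.cast_le.2 hji
  have hin' : (i : ℝ) < n := Nat.cast_lt.2 hin
  have hexponent : (2 : ℕ) * -(halfLogit n i - halfLogit n j) =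
      Real.log j + Real.log (n - i) - (Real.log i + Real.log (n - j)) := by
    unfold halfLogit
    push_cast
    ring
  rw [← Real.exp_nat_mul, hexponent, Real.exp_sub, Real.exp_add, Real.exp_add, Real.exp_log hj0,
    Real.exp_log (by linarith), Real.exp_log (by linarith), Real.exp_log (by linarith)]

lemma log_add_one_sub_log_le {x : ℝ} (hx : 0 < x) : Real.log (x + 1) - Real.log x ≤ 1 / x := by
  rw [← Real.log_div (by linarith) hx.ne', add_div, div_self hx.ne']
  linarith [Real.log_le_sub_one_of_pos (show 0 < 1 + 1 / x by positivity)]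

lemma halfLogit_sub_le (hj : 2 ≤ j) (hjn : j < n) :
    halfLogit n j - halfLogit n (j - 1) ≤ (1 / ((j : ℝ) - 1) + 1 / ((n : ℝ) - j)) / 2 := by
  have hj2 : (2 : ℝ) ≤ j := by exact_mod_cast hj
  have hlow := log_add_one_sub_log_le (x := (j : ℝ) - 1) (by linarith)
  have hhigh := log_add_one_sub_log_le (sub_pos.2 ((Nat.cast_lt (α := ℝ)).2 hjn))
  unfold halfLogit
  rw [Nat.cast_pred (by lia), sub_sub_eq_add_sub, ← sub_add_eq_add_sub]
  rw [sub_add_cancel] at hlow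
  linarith

lemma halfLogit_sub_le_one (hj : 2 ≤ j) (hjn : j < n) :
    halfLogit n j - halfLogit n (j - 1) ≤ 1 := by
  have hj2 : (2 : ℝ) ≤ j := by exact_mod_cast hj
  have hjn' : (j : ℝ) + 1 ≤ n := by exact_mod_cast hjn
  have hlow : 1 / ((j : ℝ) - 1) ≤ 1 := div_le_one_of_le₀ (by linarith) (by linarith)
  have hhigh : 1 / ((n : ℝ) - j) ≤ 1 := div_le_one_of_le₀ (by linarith) (by linarith)
  linarith [halfLogit_sub_le hj hjn]

lemma sum_Ioc_sub_sub_one (f : ℕ → ℝ) (h : j ≤ i) :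
    ∑ l ∈ Finset.Ioc j i, (f l - f (l - 1)) = f i - f j := by
  induction i, h using Nat.le_induction with
  | base => simp
  | succ i hji ih => rw [Finset.sum_Ioc_succ_top (by lia), ih, Nat.add_sub_cancel]; ring

/-- The part inside `[α, β]` of the half-logit step from `j - 1` to `j`. -/
noncomputable def clippedStep (n : ℕ) (α β : ℝ) (j : ℕ) : ℝ :=
  max α (min (halfLogit n j) β) - max α (min (halfLogit n (j - 1)) β)

variable {α β : ℝ}

lemma clippedStep_nonneg (hj : 2 ≤ j) (hjn : j < n) : 0 ≤ clippedStep n α β j := by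
  have := halfLogit_mono (n := n) (j := j - 1) (i := j) (by lia) (by lia) hjn
  exact sub_nonneg.2 (by gcongr)

lemma clippedStep_le (hj : 2 ≤ j) (hjn : j < n) :
    clippedStep n α β j ≤ halfLogit n j - halfLogit n (j - 1) := by
  have := halfLogit_mono (n := n) (j := j - 1) (i := j) (by lia) (by lia) hjn
  unfold clippedStep
  grind

lemma clippedStep_eq (hα : α ≤ halfLogit n (j - 1)) (hstep : halfLogit n (j - 1) ≤ halfLogit n j)
    (hβ : halfLogit n j ≤ β) :
    clippedStep n α β j = halfLogit n j - halfLogit n (j - 1) := by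
  unfold clippedStep
  grind

lemma sum_clippedStep (n : ℕ) (α β : ℝ) (hji : j ≤ i) :
    ∑ l ∈ Finset.Ioc j i, clippedStep n α β l =
      max α (min (halfLogit n i) β) - max α (min (halfLogit n j) β) :=
  sum_Ioc_sub_sub_one (fun l => max α (min (halfLogit n l) β)) hji

lemma lt_halfLogit_of_clippedStep_ne_zero (hj : 2 ≤ j) (hjn : j < n)
    (h : clippedStep n α β j ≠ 0) : α < halfLogit n j ∧ halfLogit n j < β + 1 := by
  have := halfLogit_mono (n := n) (j := j - 1) (i := j) (by lia) (by lia) hjn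
  have := halfLogit_sub_le_one hj hjn
  unfold clippedStep at h
  grind

lemma sum_halfLogit_sub_le (hj : 1 ≤ j) (hji : j ≤ i) (hin : i < n) {L : ℝ} (hL : 0 ≤ L) :
    ∑ l ∈ Finset.Ioc j i with halfLogit n i - L < halfLogit n l,
      (halfLogit n l - halfLogit n (l - 1)) ≤ L + 1 := by
  set α := halfLogit n i - (L + 1)
  calc ∑ l ∈ Finset.Ioc j i with halfLogit n i - L < halfLogit n l,
        (halfLogit n l - halfLogit n (l - 1))
      = ∑ l ∈ Finset.Ioc j i with halfLogit n i - L < halfLogit n l,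
          clippedStep n α (halfLogit n i) l := by
        refine Finset.sum_congr rfl fun l hl => (clippedStep_eq ?_ ?_ ?_).symm
        all_goals obtain ⟨hl, hlL⟩ := Finset.mem_filter.1 hl
        all_goals rw [Finset.mem_Ioc] at hl
        · linarith [halfLogit_sub_le_one (n := n) (j := l) (by lia) (by lia)]
        · exact halfLogit_mono (by lia) (by lia) (by lia)
        · exact halfLogit_mono (by lia) hl.2 hin
    _ ≤ ∑ l ∈ Finset.Ioc j i, clippedStep n α (halfLogit n i) l := by
        refine Finset.sum_le_sum_of_subset_of_nonneg (Finset.filter_subset _ _) fun l hl _ => ?_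
        rw [Finset.mem_Ioc] at hl
        exact clippedStep_nonneg (by lia) (by lia)
    _ ≤ L + 1 := by
        rw [sum_clippedStep n _ _ hji, min_self, max_eq_right (by linarith)]
        linarith [le_max_left α (min (halfLogit n j) (halfLogit n i))]

end HalfLogit

section NearDiagonal

variable {n a b i j : ℕ} {p ε u η δ L : ℝ} {c : ℕ → ℝ}

lemma one_add_sq_le (hη0 : 0 ≤ η) (hη : η ≤ 1 / 100) :
    (1 + η) ^ 2 ≤ (1 + 40 * η) * ((1 - 2 * η) * (1 - η) ^ 2 * (1 - 9 * η) ^ 2) := by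
  have hsmall : 1 - 4 * η ≤ (1 - 2 * η) * (1 - η) ^ 2 := by
    have : 1 - 2 * η ≤ (1 - η) ^ 2 := by nlinarith
    nlinarith
  have hlarge : 1 - 18 * η ≤ (1 - 9 * η) ^ 2 := by nlinarith
  calc (1 + η) ^ 2 ≤ (1 + 40 * η) * ((1 - 4 * η) * (1 - 18 * η)) := by nlinarith
    _ ≤ (1 + 40 * η) * ((1 - 2 * η) * (1 - η) ^ 2 * (1 - 9 * η) ^ 2) := by
        have : 0 ≤ (1 - 2 * η) * (1 - η) ^ 2 := by linarith
        gcongr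
        linarith

lemma mul_sum_poissonCDF_le {x : ℝ} {A : ℕ} (hη : η ≤ 1 / 100) (hx0 : 0 ≤ x) (hx : x ≤ η)
    (hA : 8 * Real.exp (-(A : ℝ)) ≤ η) (hxA : x * A ≤ η) (N : ℕ) :
    (1 - 9 * η) ^ 2 * x ^ 2 / 2 * (1 - η) *
      ∑ m ∈ Finset.range N, poissonCDF (m * (1 + (1 - 9 * η) * x / 2)) m ≤ (1 + η) ^ 2 := by
  set θ := (1 - 9 * η) * x / 2
  have hθx : θ ≤ x / 2 := by
    have : (1 - 9 * η) * x ≤ 1 * x := by gcongr; linarith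
    simp only [θ]
    linarith
  have hθ0 : 0 ≤ θ := div_nonneg (mul_nonneg (by linarith) hx0) two_pos.le
  have hrate := driftRate_mul_one_add hθ0
  have hrateA : driftRate θ * A ≤ η := by
    refine le_trans (mul_le_mul_of_nonneg_right ?_ A.cast_nonneg) hxA
    nlinarith [driftRate_nonneg hθ0]
  have hwalk := driftRate_mul_sum_poissonCDF_le hθ0 (by linarith) (hx0.trans hx) hA N
  set S := ∑ m ∈ Finset.range N, poissonCDF (m * (1 + θ)) m
  calc (1 - 9 * η) ^ 2 * x ^ 2 / 2 * (1 - η) * S = 2 * θ * θ * (1 - η) * S := by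
        simp only [θ]
        ring
    _ = driftRate θ * θ * (1 - η) * S * (1 + θ) := by
        rw [← hrate]
        ring
    _ ≤ (1 + η) * (1 + η) := by
        have : 0 ≤ 1 + θ := by linarith
        gcongr
        · linarith
        · linarith
        · linarith
    _ = (1 + η) ^ 2 := by ring

/-- All indices between `a` and `b` are admissible at the level `p`, with quantiles `c`. -/
structure IsCrossingWindow (n a b : ℕ) (ε u p : ℝ) (c : ℕ → ℝ) : Prop where
  quantile : IsQuantileFamily n p c
  level : LevelBounds ε u p
  le : a ≤ b
  admissible : ∀ ⦃j⦄, a ≤ j → j ≤ b → AdmissibleIndex n j u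

/-- Compatible error scales for a level of order `exp (-u ^ 2 / 2)`: the relative error `η` of the
near-diagonal estimate, and a half-logit lag `L` beyond which tails decorrelate up to `δ`. -/
structure ErrorScales (ε u η δ L : ℝ) : Prop where
  pos : 0 < η
  le : η ≤ 1 / 100
  mul_eps_le : 20 * ε ≤ η
  lag_nonneg : 0 ≤ L
  lag_mul_exp_le : (L + 1) * Real.exp (-(η ^ 2 * u ^ 2 / 512)) ≤ η / u ^ 2
  exp_lag_le : 2000 * u ^ 2 * Real.exp (-L) ≤ δ
  delta_le_one : δ ≤ 1
  le_delta_mul : 16 ≤ δ * u ^ 2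

namespace IsCrossingWindow

variable (hw : IsCrossingWindow n a b ε u p c) (hs : ErrorScales ε u η δ L)
  (hai : a ≤ i) (hib : i ≤ b)
include hw hs hai hib

omit hs hai in
lemma binomTail_nonneg (haj : a < j) (hji : j ≤ i) : 0 ≤ binomTail i (c j / c i) j := by
  have hin := (hw.admissible (haj.le.trans hji) hib).lt.le
  have hj := (hw.admissible haj.le (hji.trans hib)).one_le
  exact _root_.binomTail_nonneg (hw.quantile.div_pos hj hji hin).le
    (hw.quantile.div_le_one hj hji hin) j

lemma halfLogit_sub_le (haj : a < j) (hji : j ≤ i)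
    (hnear : (i : ℝ) - j ≤ η * binomSD n i ^ 2) :
    halfLogit n j - halfLogit n (j - 1) ≤ 1 / ((1 - 2 * η) * (2 * binomSD n i ^ 2)) := by
  have hi := hw.admissible hai hib
  have hj := hw.admissible haj.le (hji.trans hib)
  have ha := (hw.admissible le_rfl hw.le).one_le
  have hη := hs.le
  have hη0 := hs.pos
  have hi0 := hi.cast_pos
  have hin : (0 : ℝ) < n - i := sub_pos.2 hi.cast_lt
  have hji' : (j : ℝ) ≤ i := Nat.cast_le.2 hji
  have hη1 : 0 < 1 - 2 * η := by linarith
  have hσ : 1 ≤ η * binomSD n i ^ 2 := by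
    nlinarith [hi.mul_mul_le_eps_mul_binomSD_sq hw.level, hs.mul_eps_le, hw.level.le_u,
      hi.mul_le_binomSD hw.level.le_u, sq_nonneg (binomSD n i)]
  have hlow : (1 - 2 * η) * i ≤ (j : ℝ) - 1 := by nlinarith [binomSD_sq_le hi.lt.le]
  have hhigh : (1 - 2 * η) * (n - i) ≤ (n : ℝ) - j := by nlinarith
  calc halfLogit n j - halfLogit n (j - 1) ≤ (1 / ((j : ℝ) - 1) + 1 / ((n : ℝ) - j)) / 2 :=
        _root_.halfLogit_sub_le (by lia) hj.lt
    _ ≤ (1 / ((1 - 2 * η) * i) + 1 / ((1 - 2 * η) * (n - i))) / 2 := by gcongr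
    _ = 1 / ((1 - 2 * η) * (2 * binomSD n i ^ 2)) := by
        have := hi.trials_pos.ne'
        rw [binomSD_sq hi.lt.le]
        field_simp
        ring

lemma binomTail_le_mul_poissonCDF (haj : a < j) (hji : j ≤ i)
    (hnear : (i : ℝ) - j ≤ η * binomSD n i ^ 2) :
    binomTail i (c j / c i) j ≤ 1 / (1 - η) *
      poissonCDF ((i - j : ℕ) * (1 + (1 - 9 * η) * (u / binomSD n i) / 2)) (i - j) := by
  have hi := hw.admissible hai hib
  have hj := hw.admissible haj.le (hji.trans hib)
  have hη := hs.le
  have hη0 := hs.pos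
  have hσ := hi.binomSD_pos hw.level.le_u
  have hu := hw.level.le_u
  have hθ : 0 ≤ (1 - 9 * η) * (u / binomSD n i) / 2 :=
    div_nonneg (mul_nonneg (by linarith) (by positivity)) two_pos.le
  have hεη : ε ≤ η := by linarith [hs.mul_eps_le, hw.level.eps_pos]
  have hdrift := hw.quantile.sub_mul_one_add_le hw.level hεη (by linarith)
    (fun l hjl hli => hw.admissible (by lia) (hli.trans hib)) hji hnear
  have hratio : (i : ℝ) / j ≤ 1 / (1 - η) := by
    rw [div_le_div_iff₀ hj.cast_pos (by linarith)]
    linarith [one_sub_mul_le_of_sub_le hη0.le hi.lt.le hnear]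
  refine (_root_.binomTail_le_mul_poissonCDF hj.one_le hji
    (hw.quantile.div_pos hj.one_le hji hi.lt.le).le
    (hw.quantile.div_le_one hj.one_le hji hi.lt.le) hθ hdrift).trans ?_
  exact mul_le_mul_of_nonneg_right hratio (poissonCDF_nonneg (by positivity) _)

omit hw hs hai hib in
lemma mul_sum_poissonCDF_le_div (hs : ErrorScales ε u η δ L) (hp : LevelBounds ε u p)
    (hi : AdmissibleIndex n i u) (N : ℕ) :
    1 / ((1 - 2 * η) * (2 * binomSD n i ^ 2)) * (1 / (1 - η) *
      ∑ m ∈ Finset.range N, poissonCDF (m * (1 + (1 - 9 * η) * (u / binomSD n i) / 2)) m) ≤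
        (1 + 40 * η) / u ^ 2 := by
  have hη := hs.le
  have hη0 := hs.pos
  have hu := hp.le_u
  have hσ := hi.binomSD_pos hu
  have hηu : 2000 ≤ η * u := by nlinarith [hs.mul_eps_le, hp.le_eps_mul]
  have hx : u / binomSD n i * u ≤ η := by
    rw [div_mul_eq_mul_div, div_le_iff₀ hσ]
    nlinarith [hi.mul_sq_le_eps_mul_binomSD hp, hs.mul_eps_le, hp.eps_pos]
  have hx0 : 0 ≤ u / binomSD n i := by positivity
  have hA : 8 * Real.exp (-(⌊u⌋₊ : ℝ)) ≤ η := by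
    have := exp_neg_le_of_one_le_mul (δ := η / 8) (t := ⌊u⌋₊) (by linarith)
      (by nlinarith [Nat.lt_floor_add_one u])
    linarith
  have hwalk := mul_sum_poissonCDF_le hη hx0 (by nlinarith) hA
    ((mul_le_mul_of_nonneg_left (Nat.floor_le (by linarith)) hx0).trans hx) N
  set σ := binomSD n i
  set S := ∑ m ∈ Finset.range N, poissonCDF (m * (1 + (1 - 9 * η) * (u / σ) / 2)) m
  have hη1 : 0 < 1 - η := by linarith
  have hη2 : 0 < 1 - 2 * η := by linarith
  have hη9 : 0 < 1 - 9 * η := by linarith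
  calc 1 / ((1 - 2 * η) * (2 * σ ^ 2)) * (1 / (1 - η) * S)
      = (1 - 9 * η) ^ 2 * (u / σ) ^ 2 / 2 * (1 - η) * S /
          ((1 - 2 * η) * (1 - η) ^ 2 * (1 - 9 * η) ^ 2 * u ^ 2) := by
        generalize 1 - 9 * η = κ at hη9
        field_simp
    _ ≤ (1 + 40 * η) / u ^ 2 := by
        rw [div_le_div_iff₀ (by positivity) (by positivity), ← mul_assoc]
        gcongr ?_ * _
        exact hwalk.trans (one_add_sq_le hη0.le hη)

lemma sum_near_diagonal_le :
    ∑ j ∈ Finset.Ioc a i with (i : ℝ) - (j : ℕ) ≤ η * binomSD n i ^ 2,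
      (halfLogit n j - halfLogit n (j - 1)) * binomTail i (c j / c i) j ≤
        (1 + 40 * η) / u ^ 2 := by
  have hi := hw.admissible hai hib
  have hη := hs.le
  have hη0 := hs.pos
  have hu := hw.level.le_u
  have hσ := hi.binomSD_pos hu
  set σ := binomSD n i
  have hη1 : 0 < 1 - η := by linarith
  have hη2 : 0 < 1 - 2 * η := by linarith
  have hη9 : 0 < 1 - 9 * η := by linarith
  set w : ℕ → ℝ := fun m => poissonCDF (m * (1 + (1 - 9 * η) * (u / σ) / 2)) m
  have hw0 : ∀ m, 0 ≤ w m := fun m => poissonCDF_nonneg (by positivity) m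
  have hreindex : ∑ j ∈ Finset.Ioc a i, w (i - j) = ∑ m ∈ Finset.range (i - a), w m :=
    Finset.sum_nbij' (i - ·) (i - ·) (by simp; lia) (by simp; lia) (by simp; lia) (by simp; lia)
      (by simp)
  calc ∑ j ∈ Finset.Ioc a i with (i : ℝ) - (j : ℕ) ≤ η * σ ^ 2,
        (halfLogit n j - halfLogit n (j - 1)) * binomTail i (c j / c i) j
      ≤ ∑ j ∈ Finset.Ioc a i, 1 / ((1 - 2 * η) * (2 * σ ^ 2)) * (1 / (1 - η) * w (i - j)) := by
        rw [Finset.sum_filter]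
        refine Finset.sum_le_sum fun j hj => ?_
        rw [Finset.mem_Ioc] at hj
        split_ifs with hnear
        · exact mul_le_mul (hw.halfLogit_sub_le hs hai hib hj.1 hj.2 hnear)
            (hw.binomTail_le_mul_poissonCDF hs hai hib hj.1 hj.2 hnear)
            (hw.binomTail_nonneg hib hj.1 hj.2) (by positivity)
        · have := hw0 (i - j)
          positivity
    _ = 1 / ((1 - 2 * η) * (2 * σ ^ 2)) * (1 / (1 - η) * ∑ m ∈ Finset.range (i - a), w m) := by
        rw [← Finset.mul_sum, ← Finset.mul_sum, hreindex]
    _ ≤ (1 + 40 * η) / u ^ 2 := mul_sum_poissonCDF_le_div hs hw.level hi _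

/-- Steps outside the near-diagonal range have total length at most `L + 1` and carry tails of
order `exp (-η ^ 2 * u ^ 2 / 512)`. -/
lemma sum_halfLogit_sub_mul_binomTail_le :
    ∑ j ∈ Finset.Ioc a i with halfLogit n i - L < halfLogit n j,
      (halfLogit n j - halfLogit n (j - 1)) * binomTail i (c j / c i) j ≤
        (1 + 41 * η) / u ^ 2 := by
  have hi := hw.admissible hai hib
  have ha := (hw.admissible le_rfl hw.le).one_le
  set r := Real.exp (-(η ^ 2 * u ^ 2 / 512))
  have hnear := hw.sum_near_diagonal_le hs hai hib
  have hmid : ∑ j ∈ Finset.Ioc a i with halfLogit n i - L < halfLogit n j,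
      (halfLogit n j - halfLogit n (j - 1)) * r ≤ η / u ^ 2 := by
    rw [← Finset.sum_mul]
    exact (mul_le_mul_of_nonneg_right (sum_halfLogit_sub_le ha hai hi.lt hs.lag_nonneg)
      (Real.exp_pos _).le).trans hs.lag_mul_exp_le
  have hsplit : ∑ j ∈ Finset.Ioc a i with halfLogit n i - L < halfLogit n j,
        (halfLogit n j - halfLogit n (j - 1)) * binomTail i (c j / c i) j ≤
      ∑ j ∈ Finset.Ioc a i with (i : ℝ) - (j : ℕ) ≤ η * binomSD n i ^ 2,
        (halfLogit n j - halfLogit n (j - 1)) * binomTail i (c j / c i) j +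
      ∑ j ∈ Finset.Ioc a i with halfLogit n i - L < halfLogit n j,
        (halfLogit n j - halfLogit n (j - 1)) * r := by
    simp only [Finset.sum_filter]
    rw [← Finset.sum_add_distrib]
    refine Finset.sum_le_sum fun j hj => ?_
    rw [Finset.mem_Ioc] at hj
    have hj' := hw.admissible hj.1.le (hj.2.trans hib)
    have hstep : 0 ≤ halfLogit n j - halfLogit n (j - 1) :=
      sub_nonneg.2 (halfLogit_mono (by lia) (by lia) hj'.lt)
    have htail := mul_nonneg hstep (hw.binomTail_nonneg hib hj.1 hj.2)
    have hr : 0 ≤ (halfLogit n j - halfLogit n (j - 1)) * r := by positivity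
    split_ifs with hL hdist hdist
    · linarith
    · have := mul_le_mul_of_nonneg_left (hw.quantile.binomTail_div_le_exp_neg hw.level hi hj' hj.2
        (by linarith [hs.mul_eps_le]) (by linarith [hs.le]) (not_le.1 hdist).le) hstep
      linarith
    · linarith
    · linarith
  calc _ ≤ _ := hsplit
    _ ≤ (1 + 40 * η) / u ^ 2 + η / u ^ 2 := add_le_add hnear hmid
    _ = (1 + 41 * η) / u ^ 2 := by ring

end IsCrossingWindow

end NearDiagonal

section CrossingMass

variable {n a b i j : ℕ} {p ε u η δ L α β γ : ℝ} {c : ℕ → ℝ}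

/-- The probability that the last crossing before `b` occurs at an index of `[a, b)` whose
half-logit exceeds `t`. -/
noncomputable def crossingMass (n a b : ℕ) (c : ℕ → ℝ) (t : ℝ) : ℝ :=
  ∑ i ∈ Finset.Ico a b with t < halfLogit n i, lastCrossingProb n c b i

lemma crossingMass_nonneg (n a b : ℕ) (c : ℕ → ℝ) (t : ℝ) : 0 ≤ crossingMass n a b c t :=
  Finset.sum_nonneg fun i _ => lastCrossingProb_nonneg n c b i

lemma measureReal_forall_countBelow_lt_add_crossingMass_le_one (n a b : ℕ) (c : ℕ → ℝ) (t : ℝ) :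
    (nullMeasure n).real {w | ∀ l ∈ Finset.Icc a b, countBelow (c l) w < l} +
      crossingMass n a b c t ≤ 1 := by
  refine le_trans ?_
    (measureReal_forall_countBelow_lt_add_sum_lastCrossingProb_le_one n c a b)
  gcongr
  exact Finset.sum_le_sum_of_subset_of_nonneg (Finset.filter_subset _ _)
    fun i _ _ => lastCrossingProb_nonneg n c b i

lemma crossingMass_le_one (n a b : ℕ) (c : ℕ → ℝ) (t : ℝ) : crossingMass n a b c t ≤ 1 :=
  (le_add_of_nonneg_left measureReal_nonneg).trans
    (measureReal_forall_countBelow_lt_add_crossingMass_le_one n a b c t)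

lemma crossingMass_sub_crossingMass (n a b : ℕ) (c : ℕ → ℝ) (hαγ : α ≤ γ) :
    crossingMass n a b c α - crossingMass n a b c γ =
      ∑ i ∈ Finset.Ico a b with α < halfLogit n i ∧ halfLogit n i ≤ γ,
        lastCrossingProb n c b i := by
  have hγ : {i ∈ Finset.Ico a b | γ < halfLogit n i} =
      {i ∈ {i ∈ Finset.Ico a b | α < halfLogit n i} | ¬ halfLogit n i ≤ γ} := by
    ext i
    simp only [Finset.mem_filter, not_le, and_assoc]
    exact and_congr_right fun _ => ⟨fun h => ⟨hαγ.trans_lt h, h⟩, And.right⟩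
  rw [sub_eq_iff_eq_add, crossingMass, crossingMass, hγ, ← Finset.filter_filter,
    Finset.sum_filter_add_sum_filter_not]

namespace ErrorScales

variable (hs : ErrorScales ε u η δ L)
include hs

lemma delta_pos (hp : LevelBounds ε u p) : 0 < δ := by
  have := hp.le_u
  exact lt_of_lt_of_le (by positivity) hs.exp_lag_le

lemma exp_halfLogit_sub_le (hL : L ≤ halfLogit n i - halfLogit n j) :
    2000 * u ^ 2 * Real.exp (-(halfLogit n i - halfLogit n j)) ≤ δ := by
  refine le_trans ?_ hs.exp_lag_le
  gcongr

end ErrorScales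

namespace IsCrossingWindow

variable (hw : IsCrossingWindow n a b ε u p c) (hs : ErrorScales ε u η δ L)
include hw

lemma measureReal_le_MnPlus_le_one_sub_crossingMass (t : ℝ) :
    (nullMeasure n).real {w | p ≤ MnPlus w} ≤ 1 - crossingMass n a b c t := by
  have hmono : (nullMeasure n).real {w | p ≤ MnPlus w} ≤
      (nullMeasure n).real {w | ∀ l ∈ Finset.Icc a b, countBelow (c l) w < l} := by
    refine measureReal_mono fun w hwp l hl => ?_
    have hl' := hw.admissible (Finset.mem_Icc.1 hl).1 (Finset.mem_Icc.1 hl).2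
    exact hw.quantile.countBelow_lt_of_le_MnPlus hw.level.pos hwp hl'.one_le hl'.lt.le
  linarith [measureReal_forall_countBelow_lt_add_crossingMass_le_one n a b c t]

include hs

lemma sum_far_le (haj : a ≤ j) (hα : α < halfLogit n j) :
    ∑ i ∈ Finset.Ico j b with ¬ halfLogit n i - L < halfLogit n j,
      lastCrossingProb n c b i * binomTail i (c j / c i) j ≤
      (1 + δ) * p * crossingMass n a b c α := by
  have hp := hw.level.pos
  have hδ := hs.delta_pos hw.level
  calc ∑ i ∈ Finset.Ico j b with ¬ halfLogit n i - L < halfLogit n j,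
        lastCrossingProb n c b i * binomTail i (c j / c i) j
      ≤ ∑ i ∈ Finset.Ico j b with ¬ halfLogit n i - L < halfLogit n j,
          (1 + δ) * p * lastCrossingProb n c b i := by
        refine Finset.sum_le_sum fun i hi => ?_
        obtain ⟨hi, hfar⟩ := Finset.mem_filter.1 hi
        rw [Finset.mem_Ico] at hi
        rw [mul_comm]
        refine mul_le_mul_of_nonneg_right ?_ (lastCrossingProb_nonneg n c b i)
        have hi' := hw.admissible (haj.trans hi.1) hi.2.le
        have hj' := hw.admissible haj (hi.1.trans hi.2.le)
        have hu : 0 ≤ u := by linarith [hw.level.le_u]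
        exact hw.quantile.binomTail_div_le_one_add_mul hw.level hi' hj' hi.1 (Real.exp_pos _).le
          (odds_ratio_eq_exp_halfLogit_sq hj'.one_le hi.1 hi'.lt).le
          (hs.exp_halfLogit_sub_le (by linarith)) hs.delta_le_one hs.le_delta_mul
          (le_add_of_nonneg_right (by have := binomSD_nonneg n i; positivity))
    _ ≤ (1 + δ) * p * crossingMass n a b c α := by
        rw [← Finset.mul_sum]
        refine mul_le_mul_of_nonneg_left ?_ (by positivity)
        refine Finset.sum_le_sum_of_subset_of_nonneg (fun i hi => ?_)
          fun i _ _ => lastCrossingProb_nonneg n c b i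
        have hi := Finset.mem_Ico.1 (Finset.mem_filter.1 hi).1
        have hmono := halfLogit_mono (hw.admissible haj (hi.1.trans hi.2.le)).one_le hi.1
          (hw.admissible (haj.trans hi.1) hi.2.le).lt
        exact Finset.mem_filter.2
          ⟨Finset.mem_Ico.2 ⟨haj.trans hi.1, hi.2⟩, hα.trans_le hmono⟩

/-- Conditioning on the last crossing `i`: crossings far beyond `j` are decorrelated from `j` and
account for at most `(1 + δ) * p` times their mass. -/
lemma mul_one_sub_crossingMass_le (haj : a ≤ j) (hjb : j < b) (hα : α < halfLogit n j)
    (hL : L ≤ halfLogit n b - halfLogit n j) :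
    p * (1 - 3 * δ - crossingMass n a b c α) ≤
      ∑ i ∈ Finset.Ico j b with halfLogit n i - L < halfLogit n j,
        lastCrossingProb n c b i * binomTail i (c j / c i) j := by
  have hb := hw.admissible hw.le le_rfl
  have hj := hw.admissible haj hjb.le
  have hrenewal := hw.quantile.eq_sum_lastCrossingProb_mul_add hj.one_le hjb hb.lt.le
  have hlast := hw.quantile.measureReal_le_countBelow_and_le_le hw.level hb hj hjb.le
    (Real.exp_pos _).le (odds_ratio_eq_exp_halfLogit_sq hj.one_le hjb.le hb.lt).le
    (hs.exp_halfLogit_sub_le hL) hs.delta_le_one hs.le_delta_mul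
  have hfar := hw.sum_far_le hs haj hα
  have hδp : 0 ≤ δ * p := mul_nonneg (hs.delta_pos hw.level).le hw.level.pos.le
  have hmass := mul_le_of_le_one_right hδp (crossingMass_le_one n a b c α)
  rw [← Finset.sum_filter_add_sum_filter_not _ fun i => halfLogit n i - L < halfLogit n j]
    at hrenewal
  linarith

lemma mul_sub_mul_one_sub_crossingMass_le (hα : halfLogit n a ≤ α) (hαβ : α ≤ β)
    (hβ : β + L + 1 ≤ halfLogit n b) :
    p * (β - α) * (1 - 3 * δ - crossingMass n a b c α) ≤
      ∑ j ∈ Finset.Ioc a b with α < halfLogit n j ∧ halfLogit n j < β + 1,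
        ∑ i ∈ Finset.Ico j b with halfLogit n i - L < halfLogit n j,
          clippedStep n α β j * (lastCrossingProb n c b i * binomTail i (c j / c i) j) := by
  have ha := (hw.admissible le_rfl hw.le).one_le
  have hb := (hw.admissible hw.le le_rfl).lt
  have hL := hs.lag_nonneg
  have htotal : β - α =
      ∑ j ∈ Finset.Ioc a b with α < halfLogit n j ∧ halfLogit n j < β + 1,
        clippedStep n α β j := by
    rw [Finset.sum_filter_of_ne, sum_clippedStep n α β hw.le, min_eq_right (by linarith),
      max_eq_right hαβ, min_eq_left (by linarith), max_eq_left hα]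
    intro j hj
    rw [Finset.mem_Ioc] at hj
    exact lt_halfLogit_of_clippedStep_ne_zero (by lia) (by lia)
  rw [mul_right_comm, htotal, Finset.mul_sum]
  refine Finset.sum_le_sum fun j hj => ?_
  obtain ⟨hj, hαj, hjβ⟩ := Finset.mem_filter.1 hj
  rw [Finset.mem_Ioc] at hj
  have hjb : j < b := hj.2.lt_of_ne (by rintro rfl; linarith)
  rw [← Finset.mul_sum, mul_comm]
  exact mul_le_mul_of_nonneg_left
    (hw.mul_one_sub_crossingMass_le hs hj.1.le hjb hαj (by linarith))
    (clippedStep_nonneg (by lia) (by lia))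

lemma sum_clippedStep_mul_binomTail_le (hai : a ≤ i) (hib : i ≤ b) (α β : ℝ) :
    ∑ j ∈ Finset.Ioc a i with halfLogit n i - L < halfLogit n j ∧
        α < halfLogit n j ∧ halfLogit n j < β + 1,
      clippedStep n α β j * binomTail i (c j / c i) j ≤ (1 + 41 * η) / u ^ 2 := by
  have ha := (hw.admissible le_rfl hw.le).one_le
  have hi := (hw.admissible hai hib).lt
  refine le_trans ?_ (hw.sum_halfLogit_sub_mul_binomTail_le hs hai hib)
  have hterm : ∀ j ∈ Finset.Ioc a i, 0 ≤ clippedStep n α β j * binomTail i (c j / c i) j ∧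
      clippedStep n α β j * binomTail i (c j / c i) j ≤
        (halfLogit n j - halfLogit n (j - 1)) * binomTail i (c j / c i) j := by
    intro j hj
    rw [Finset.mem_Ioc] at hj
    have htail := hw.binomTail_nonneg hib hj.1 hj.2
    exact ⟨mul_nonneg (clippedStep_nonneg (by lia) (by lia)) htail,
      mul_le_mul_of_nonneg_right (clippedStep_le (by lia) (by lia)) htail⟩
  rw [← Finset.filter_filter]
  calc _ ≤ ∑ j ∈ Finset.Ioc a i with halfLogit n i - L < halfLogit n j,
        clippedStep n α β j * binomTail i (c j / c i) j :=
        Finset.sum_le_sum_of_subset_of_nonneg (Finset.filter_subset _ _)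
          fun j hj _ => (hterm j (Finset.mem_filter.1 hj).1).1
    _ ≤ _ := Finset.sum_le_sum fun j hj => (hterm j (Finset.mem_filter.1 hj).1).2

lemma mul_sub_mul_one_sub_crossingMass_le_sub (hα : halfLogit n a ≤ α) (hαβ : α ≤ β)
    (hβγ : β + L + 1 ≤ γ) (hγ : γ ≤ halfLogit n b) :
    p * (β - α) * (1 - 3 * δ - crossingMass n a b c α) ≤
      (1 + 41 * η) / u ^ 2 * (crossingMass n a b c α - crossingMass n a b c γ) := by
  have ha := (hw.admissible le_rfl hw.le).one_le
  have hb := (hw.admissible hw.le le_rfl).lt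
  have hL := hs.lag_nonneg
  refine (hw.mul_sub_mul_one_sub_crossingMass_le hs hα hαβ (hβγ.trans hγ)).trans ?_
  rw [crossingMass_sub_crossingMass n a b c (by linarith), Finset.mul_sum,
    Finset.sum_comm' (s' := fun i => {j ∈ Finset.Ioc a i | halfLogit n i - L < halfLogit n j ∧
        α < halfLogit n j ∧ halfLogit n j < β + 1})
      (t' := {i ∈ Finset.Ico a b | α < halfLogit n i ∧ halfLogit n i ≤ γ})]
  · refine Finset.sum_le_sum fun i hi => ?_
    obtain ⟨hi, -⟩ := Finset.mem_filter.1 hi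
    rw [Finset.mem_Ico] at hi
    simp only [mul_left_comm _ (lastCrossingProb n c b i)]
    rw [← Finset.mul_sum, mul_comm]
    exact mul_le_mul_of_nonneg_right
      (hw.sum_clippedStep_mul_binomTail_le hs hi.1 hi.2.le α β) (lastCrossingProb_nonneg n c b i)
  · intro j i
    simp only [Finset.mem_filter, Finset.mem_Ioc, Finset.mem_Ico]
    constructor
    · rintro ⟨⟨hj, hαj, hjβ⟩, hi, hij⟩
      have := halfLogit_mono (n := n) (j := j) (i := i) (by lia) hi.1 (by lia)
      exact ⟨⟨⟨hj.1, hi.1⟩, hij, hαj, hjβ⟩, ⟨by lia, hi.2⟩, by linarith, by linarith⟩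
    · rintro ⟨⟨hj, hij, hαj, hjβ⟩, hi, -⟩
      exact ⟨⟨⟨hj.1, by lia⟩, hαj, hjβ⟩, ⟨hj.2, hi.2⟩, hij⟩

end IsCrossingWindow

lemma le_one_div_one_add_pow {q : ℕ → ℝ} {h : ℝ} {M : ℕ} (hh : 0 ≤ h) (h0 : q 0 ≤ 1)
    (hq : ∀ k < M, 0 ≤ q (k + 1) → (1 + h) * q (k + 1) ≤ q k) : q M ≤ 1 / (1 + h) ^ M := by
  induction M with
  | zero => simpa using h0
  | succ M ih =>
    have hqM := ih fun k hk => hq k (hk.trans M.lt_succ_self)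
    rcases le_total (q (M + 1)) 0 with hneg | hpos
    · exact hneg.trans (by positivity)
    · rw [le_div_iff₀ (by positivity)] at hqM ⊢
      calc q (M + 1) * (1 + h) ^ (M + 1) = (1 + h) * q (M + 1) * (1 + h) ^ M := by ring
        _ ≤ q M * (1 + h) ^ M := by
            gcongr
            exact hq M M.lt_succ_self hpos
        _ ≤ 1 := hqM

/-- The window is cut into `M` blocks of half-logit length `B`, in each of which the probability
of no crossing so far is reduced by the factor `1 + h`. -/
lemma IsCrossingWindow.measureReal_le_MnPlus_le (hw : IsCrossingWindow n a b ε u p c)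
    (hs : ErrorScales ε u η δ L) {B h : ℝ} {M : ℕ}
    (hB : halfLogit n a + M * B ≤ halfLogit n b) (hLB : L + 1 ≤ B) (hh0 : 0 ≤ h)
    (hh : h * ((1 + 41 * η) / u ^ 2) ≤ p * (B - L - 1)) :
    (nullMeasure n).real {w | p ≤ MnPlus w} ≤ 1 / (1 + h) ^ M + 3 * δ := by
  have hL := hs.lag_nonneg
  have hδ := hs.delta_pos hw.level
  have hu := hw.level.le_u
  have hη := hs.pos
  set K := (1 + 41 * η) / u ^ 2
  have hK : 0 < K := by positivity
  set t : ℕ → ℝ := fun k => halfLogit n b - k * B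
  have hrec : ∀ k < M, 0 ≤ 1 - 3 * δ - crossingMass n a b c (t (k + 1)) →
      (1 + h) * (1 - 3 * δ - crossingMass n a b c (t (k + 1))) ≤
        1 - 3 * δ - crossingMass n a b c (t k) := by
    intro k hk hq
    have hkM : ((k + 1 : ℕ) : ℝ) * B ≤ M * B := by
      gcongr
      · linarith
      · exact hk
    have hkB : 0 ≤ k * B := mul_nonneg k.cast_nonneg (by linarith)
    have ht : t k = t (k + 1) + B := by
      simp only [t]
      push_cast
      ring
    have hblock := hw.mul_sub_mul_one_sub_crossingMass_le_sub hs (α := t (k + 1))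
      (β := t k - L - 1) (γ := t k) (by linarith) (by linarith) (by linarith) (by linarith)
    rw [show t k - L - 1 - t (k + 1) = B - L - 1 by rw [ht]; ring] at hblock
    have hstep := (mul_le_mul_of_nonneg_right hh hq).trans hblock
    rw [mul_comm h, mul_assoc] at hstep
    linarith [le_of_mul_le_mul_left hstep hK]
  have hiter := le_one_div_one_add_pow (q := fun k => 1 - 3 * δ - crossingMass n a b c (t k)) hh0
    (by linarith [crossingMass_nonneg n a b c (t 0)]) hrec
  linarith [hw.measureReal_le_MnPlus_le_one_sub_crossingMass (t M)]

end CrossingMass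

section Asymptotics

variable {n a j : ℕ} {x y ε u η δ : ℝ}

lemma eventually_sq_pow_le_mul_exp (k : ℕ) {r s : ℝ} (hr : 0 < r) (hs : 0 < s) :
    ∀ᶠ u : ℝ in atTop, (u ^ 2) ^ k ≤ r * Real.exp (s * u ^ 2) := by
  filter_upwards [(tendsto_pow_atTop two_ne_zero).eventually
    ((isLittleO_pow_exp_pos_mul_atTop (k := k) hs).bound hr)] with u hu
  simpa using hu

lemma eventually_levelBounds (hx : 0 < x) (hε : 0 < ε) (hε8 : ε ≤ 1 / 8) :
    ∀ᶠ u : ℝ in atTop, LevelBounds ε u (x / u ^ 2 * Real.exp (-(u ^ 2 / 2))) := by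
  filter_upwards [eventually_ge_atTop (100 / ε), eventually_gt_atTop 0,
    (tendsto_pow_atTop two_ne_zero).eventually_ge_atTop x,
    eventually_sq_pow_le_mul_exp 1 hx (show 0 < ε / 4 by positivity)] with u hu hu0 hxu hexp
  refine ⟨hε, hε8, ?_, ?_, ?_⟩
  · rwa [mul_comm, ← div_le_iff₀ hε]
  · rw [show -((1 + ε / 2) * u ^ 2 / 2) = -(ε / 4 * u ^ 2) + -(u ^ 2 / 2) by ring, Real.exp_add]
    gcongr
    rw [Real.exp_neg, le_div_iff₀ (by positivity), inv_mul_le_iff₀ (Real.exp_pos _)]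
    linarith
  · exact mul_le_of_le_one_left (Real.exp_pos _).le (div_le_one_of_le₀ hxu (by positivity))

lemma eventually_errorScales (hη : 0 < η) (hη1 : η ≤ 1 / 100) (hδ : 0 < δ) (hδ1 : δ ≤ 1) :
    ∀ᶠ u : ℝ in atTop, ErrorScales (η / 20) u η δ (Real.log (2000 * u ^ 2 / δ)) := by
  filter_upwards [eventually_ge_atTop 1,
    (tendsto_pow_atTop two_ne_zero).eventually_ge_atTop (16 / δ),
    eventually_sq_pow_le_mul_exp 2 (show 0 < δ * η / 2000 by positivity)
      (show 0 < η ^ 2 / 512 by positivity)] with u hu huδ hexp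
  have hratio : 1 ≤ 2000 * u ^ 2 / δ := by
    rw [le_div_iff₀ hδ]
    nlinarith
  refine ⟨hη, hη1, by linarith, Real.log_nonneg hratio, ?_, ?_, hδ1, ?_⟩
  · have hlog := Real.log_le_sub_one_of_pos (by linarith : 0 < 2000 * u ^ 2 / δ)
    rw [mul_div_right_comm (η ^ 2), Real.exp_neg, ← div_eq_mul_inv, div_le_div_iff₀ (by positivity)
      (by positivity)]
    calc (Real.log (2000 * u ^ 2 / δ) + 1) * u ^ 2 ≤ 2000 * u ^ 2 / δ * u ^ 2 := by
          gcongr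
          linarith
      _ = 2000 / δ * (u ^ 2) ^ 2 := by ring
      _ ≤ 2000 / δ * (δ * η / 2000 * Real.exp (η ^ 2 / 512 * u ^ 2)) := by gcongr
      _ = η * Real.exp (η ^ 2 / 512 * u ^ 2) := by field_simp
  · rw [Real.exp_neg, Real.exp_log (by linarith), inv_div, mul_div_cancel₀ _ (by positivity)]
  · rwa [mul_comm, ← div_le_iff₀ hδ]

lemma eventually_log_add_one_le_mul_exp {r : ℝ} (hδ : 0 < δ) (hr : 0 < r) :
    ∀ᶠ u : ℝ in atTop, Real.log (2000 * u ^ 2 / δ) + 1 ≤ r * Real.exp (u ^ 2 / 2) := by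
  filter_upwards [eventually_gt_atTop 0, eventually_sq_pow_le_mul_exp 1
    (show 0 < r * δ / 2000 by positivity) one_half_pos] with u hu hexp
  have hlog := Real.log_le_sub_one_of_pos (show 0 < 2000 * u ^ 2 / δ by positivity)
  calc Real.log (2000 * u ^ 2 / δ) + 1 ≤ 2000 / δ * (u ^ 2) ^ 1 := by
        rw [pow_one, div_mul_eq_mul_div]
        linarith
    _ ≤ 2000 / δ * (r * δ / 2000 * Real.exp (1 / 2 * u ^ 2)) := by gcongr
    _ = r * Real.exp (u ^ 2 / 2) := by
        rw [one_div_mul_eq_div]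
        field_simp

lemma admissibleIndex_of_le_of_le_sub (hua : 2 * (u ^ 3) ^ 2 ≤ a) (ha : 1 ≤ a) (han : 2 * a ≤ n)
    (haj : a ≤ j) (hjn : j ≤ n - a) : AdmissibleIndex n j u := by
  have haj' : (a : ℝ) ≤ j := Nat.cast_le.2 haj
  have hjn' : (j : ℝ) + a ≤ n := by exact_mod_cast (by lia : j + a ≤ n)
  have : 2 * (a : ℝ) ≤ n := by exact_mod_cast han
  have hn : (0 : ℝ) < n := Nat.cast_pos.2 (by lia)
  refine ⟨by lia, by lia, Real.le_sqrt_of_sq_le ?_⟩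
  rw [le_div_iff₀ hn]
  calc (u ^ 3) ^ 2 * n ≤ a / 2 * n := by
        gcongr
        linarith
    _ ≤ a * (n - a) := by nlinarith
    _ ≤ j * (n - j) := by nlinarith

lemma ceil_rpow_le_two_mul (h16 : 16 ≤ (n : ℝ) ^ η) :
    (⌈(n : ℝ) ^ η⌉₊ : ℝ) ≤ 2 * (n : ℝ) ^ η := by
  linarith [Nat.ceil_lt_add_one (by linarith : 0 ≤ (n : ℝ) ^ η)]

lemma ceil_rpow_le_div_sixteen (hn : 1 ≤ n) (hη : η ≤ 1 / 3) (h16 : 16 ≤ (n : ℝ) ^ η) :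
    (⌈(n : ℝ) ^ η⌉₊ : ℝ) ≤ n / 16 := by
  have hn' : (1 : ℝ) ≤ n := Nat.one_le_cast.2 hn
  have hcube : (n : ℝ) ^ η * (n : ℝ) ^ η * (n : ℝ) ^ η ≤ n := by
    rw [← Real.rpow_add (by linarith), ← Real.rpow_add (by linarith)]
    exact (Real.rpow_le_rpow_of_exponent_le hn' (by linarith)).trans (Real.rpow_one _).le
  have : 16 * 16 * (n : ℝ) ^ η ≤ (n : ℝ) ^ η * (n : ℝ) ^ η * (n : ℝ) ^ η := by gcongr
  linarith [ceil_rpow_le_two_mul h16]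

lemma halfLogit_ceil_rpow_add_le (hn : 1 ≤ n) (hη : η ≤ 1 / 3) (h16 : 16 ≤ (n : ℝ) ^ η) :
    halfLogit n ⌈(n : ℝ) ^ η⌉₊ + (1 - 2 * η) * Real.log n ≤
      halfLogit n (n - ⌈(n : ℝ) ^ η⌉₊) := by
  have hn0 : (0 : ℝ) < n := Nat.cast_pos.2 hn
  have htwo := ceil_rpow_le_two_mul h16
  have han := ceil_rpow_le_div_sixteen hn hη h16
  have ha0 : (0 : ℝ) < ⌈(n : ℝ) ^ η⌉₊ := by linarith [Nat.le_ceil ((n : ℝ) ^ η)]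
  set a := ⌈(n : ℝ) ^ η⌉₊
  have hale : a ≤ n := by
    have : (a : ℝ) ≤ n := by linarith
    exact_mod_cast this
  have hprod : (n : ℝ) ^ (1 - 2 * η) * ((n : ℝ) ^ η * (n : ℝ) ^ η) = n := by
    rw [← Real.rpow_add hn0, ← Real.rpow_add hn0]
    ring_nf
    exact Real.rpow_one _
  have hmul : (n : ℝ) ^ (1 - 2 * η) * a ≤ n - a := by
    have : (n : ℝ) ^ (1 - 2 * η) * a ≤ (n : ℝ) ^ (1 - 2 * η) * (2 * (n : ℝ) ^ η) := by gcongr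
    have : (n : ℝ) ^ (1 - 2 * η) * (16 * (n : ℝ) ^ η) ≤
        (n : ℝ) ^ (1 - 2 * η) * ((n : ℝ) ^ η * (n : ℝ) ^ η) := by gcongr
    linarith
  have hlog := Real.log_le_log (by positivity) hmul
  rw [Real.log_mul (by positivity) ha0.ne', Real.log_rpow hn0] at hlog
  unfold halfLogit
  rw [Nat.cast_sub hale, sub_sub_cancel]
  linarith

/-- The level `x / (2 * log n * log (log n))` is of order `exp (-u ^ 2 / 2)` for this `u`. -/
noncomputable def iterLogScale (n : ℕ) : ℝ := √(2 * Real.log (Real.log n))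

lemma tendsto_log_natCast_atTop : Tendsto (fun n : ℕ => Real.log n) atTop atTop :=
  Real.tendsto_log_atTop.comp tendsto_natCast_atTop_atTop

lemma tendsto_iterLogScale : Tendsto iterLogScale atTop atTop :=
  Real.tendsto_sqrt_atTop.comp
    ((Real.tendsto_log_atTop.comp tendsto_log_natCast_atTop).const_mul_atTop two_pos)

lemma iterLogScale_sq (hn : 1 ≤ Real.log n) :
    iterLogScale n ^ 2 = 2 * Real.log (Real.log n) :=
  Real.sq_sqrt (mul_nonneg two_pos.le (Real.log_nonneg hn))

lemma exp_iterLogScale_sq (hn : 1 ≤ Real.log n) :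
    Real.exp (iterLogScale n ^ 2 / 2) = Real.log n := by
  rw [iterLogScale_sq hn, mul_div_cancel_left₀ _ two_ne_zero, Real.exp_log (by linarith)]

lemma div_mul_exp_iterLogScale (hn : 1 ≤ Real.log n) (x : ℝ) :
    x / iterLogScale n ^ 2 * Real.exp (-(iterLogScale n ^ 2 / 2)) =
      x / (2 * Real.log n * Real.log (Real.log n)) := by
  rw [Real.exp_neg, exp_iterLogScale_sq hn, iterLogScale_sq hn, ← div_eq_mul_inv, div_div]
  ring_nf

lemma iterLogScale_sq_le (hn : 1 ≤ Real.log n) : iterLogScale n ^ 2 ≤ 2 * Real.log n := by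
  rw [iterLogScale_sq hn]
  linarith [Real.log_le_sub_one_of_pos (by linarith : 0 < Real.log n)]

lemma eventually_sixteen_mul_log_cube_le_rpow (hη : 0 < η) :
    ∀ᶠ n : ℕ in atTop, 16 * Real.log n ^ 3 ≤ (n : ℝ) ^ η := by
  filter_upwards [eventually_ge_atTop 1, tendsto_log_natCast_atTop.eventually
    ((isLittleO_pow_exp_pos_mul_atTop (k := 3) hη).bound (show (0 : ℝ) < 1 / 16 by norm_num)),
    tendsto_log_natCast_atTop.eventually_ge_atTop 0] with n hn hbound hlog
  rw [Real.norm_of_nonneg (by positivity), Real.norm_of_nonneg (by positivity), mul_comm η,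
    ← Real.rpow_def_of_pos (Nat.cast_pos.2 hn)] at hbound
  linarith

lemma eventually_exists_isCrossingWindow (hx : 0 < x) (hε : 0 < ε) (hε8 : ε ≤ 1 / 8) (hη : 0 < η)
    (hη3 : η ≤ 1 / 3) :
    ∀ᶠ n : ℕ in atTop, ∃ c, IsCrossingWindow n ⌈(n : ℝ) ^ η⌉₊ (n - ⌈(n : ℝ) ^ η⌉₊) ε
      (iterLogScale n) (x / (2 * Real.log n * Real.log (Real.log n))) c := by
  filter_upwards [eventually_ge_atTop 1, tendsto_log_natCast_atTop.eventually_ge_atTop 1,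
    tendsto_iterLogScale.eventually (eventually_levelBounds hx hε hε8),
    eventually_sixteen_mul_log_cube_le_rpow hη] with n hn hlog hlevel hcube
  rw [div_mul_exp_iterLogScale hlog] at hlevel
  have hlevel1 : x / (2 * Real.log n * Real.log (Real.log n)) < 1 :=
    hlevel.le_exp.trans_lt (Real.exp_lt_one_iff.2 (by nlinarith [hlevel.le_u]))
  obtain ⟨c, hc⟩ := exists_isQuantileFamily n hlevel.pos hlevel1
  have hceil := Nat.le_ceil ((n : ℝ) ^ η)
  have h16 : 16 ≤ (n : ℝ) ^ η := by linarith [one_le_pow₀ hlog (n := 3)]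
  have han := ceil_rpow_le_div_sixteen hn hη3 h16
  set a := ⌈(n : ℝ) ^ η⌉₊
  have ha : 1 ≤ a := by
    have : (1 : ℝ) ≤ a := by linarith
    exact_mod_cast this
  have han' : 2 * a ≤ n := by
    have : 2 * (a : ℝ) ≤ n := by linarith
    exact_mod_cast this
  have hua : 2 * (iterLogScale n ^ 3) ^ 2 ≤ a :=
    calc 2 * (iterLogScale n ^ 3) ^ 2 = 2 * (iterLogScale n ^ 2) ^ 3 := by ring
      _ ≤ 2 * (2 * Real.log n) ^ 3 := by
          gcongr
          exact iterLogScale_sq_le hlog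
      _ = 16 * Real.log n ^ 3 := by ring
      _ ≤ a := hcube.trans hceil
  exact ⟨c, hc, hlevel, by lia, fun j => admissibleIndex_of_le_of_le_sub hua ha han'⟩

lemma eventually_measureReal_le_MnPlus_le {M : ℕ} (hx : 0 < x) (hy : 0 ≤ y) (hη : 0 < η)
    (hη1 : η ≤ 1 / 100) (hxy : y * (1 + 41 * η) ≤ x * (1 - 3 * η)) (hM : 0 < M) (hδ : 0 < δ)
    (hδ1 : δ ≤ 1) :
    ∀ᶠ n : ℕ in atTop,
      (nullMeasure n).real {w | x / (2 * Real.log n * Real.log (Real.log n)) ≤ MnPlus w} ≤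
        1 / (1 + y / M) ^ M + 3 * δ := by
  have hM' : (0 : ℝ) < M := Nat.cast_pos.2 hM
  filter_upwards [eventually_ge_atTop 1, tendsto_log_natCast_atTop.eventually_ge_atTop 1,
    (tendsto_rpow_atTop hη).comp tendsto_natCast_atTop_atTop |>.eventually_ge_atTop 16,
    eventually_exists_isCrossingWindow hx (by positivity : 0 < η / 20) (by linarith) hη
      (by linarith),
    tendsto_iterLogScale.eventually (eventually_errorScales hη hη1 hδ hδ1),
    tendsto_iterLogScale.eventually
      (eventually_log_add_one_le_mul_exp hδ (by positivity : 0 < η / M))]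
    with n hn hlog h16 ⟨c, hw⟩ hs hlag
  rw [exp_iterLogScale_sq hlog] at hlag
  have hu : 0 < iterLogScale n := by linarith [hw.level.le_u]
  have hlog0 : 0 < Real.log n := by linarith
  have hlength : (1 - 3 * η) * Real.log n / M =
      (1 - 2 * η) * Real.log n / M - η / M * Real.log n := by ring
  refine hw.measureReal_le_MnPlus_le hs (B := (1 - 2 * η) * Real.log n / M) (h := y / M)
    ?_ ?_ (by positivity) ?_
  · rw [mul_div_cancel₀ _ hM'.ne']
    exact halfLogit_ceil_rpow_add_le hn (by linarith) h16
  · have : 0 ≤ (1 - 3 * η) * Real.log n / M :=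
      div_nonneg (mul_nonneg (by linarith) hlog0.le) hM'.le
    linarith
  · rw [← div_mul_exp_iterLogScale hlog, Real.exp_neg, exp_iterLogScale_sq hlog]
    calc y / M * ((1 + 41 * η) / iterLogScale n ^ 2)
        = y * (1 + 41 * η) / (M * iterLogScale n ^ 2) := by field_simp
      _ ≤ x * (1 - 3 * η) / (M * iterLogScale n ^ 2) := by gcongr
      _ = x / iterLogScale n ^ 2 * (Real.log n)⁻¹ * ((1 - 3 * η) * Real.log n / M) := by
          field_simp
      _ ≤ _ := by
          gcongr
          linarith

lemma exists_pos_lt_exp_neg_le (hx : 0 < x) {e : ℝ} (he : 0 < e) :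
    ∃ y, 0 < y ∧ y < x ∧ Real.exp (-y) ≤ Real.exp (-x) + e := by
  have hcont : ContinuousAt (fun y => Real.exp (-y)) x := by fun_prop
  have hle : ∀ᶠ y in nhdsWithin x (Iio x), Real.exp (-y) ≤ Real.exp (-x) + e :=
    (hcont.tendsto.mono_left nhdsWithin_le_nhds).eventually_le_const (by linarith)
  obtain ⟨y, hy, hyx, hy0⟩ :=
    (hle.and (eventually_mem_nhdsWithin.and (nhdsWithin_le_nhds (lt_mem_nhds hx)))).exists
  exact ⟨y, hy0, hyx, hy⟩

lemma exists_one_div_one_add_div_pow_le (y : ℝ) {e : ℝ} (he : 0 < e) :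
    ∃ M : ℕ, 0 < M ∧ 1 / (1 + y / M) ^ M ≤ Real.exp (-y) + e := by
  have hlim := (Real.tendsto_one_add_div_pow_exp y).inv₀ (Real.exp_pos y).ne'
  rw [← Real.exp_neg] at hlim
  simp only [← one_div] at hlim
  exact ((eventually_gt_atTop 0).and (hlim.eventually_le_const (by linarith))).exists

lemma exists_pos_le_mul_one_add_le {κ : ℝ} (hκ : 0 < κ) (hyx : y < x) (A B : ℝ) :
    ∃ η, 0 < η ∧ η ≤ κ ∧ y * (1 + A * η) ≤ x * (1 - B * η) := by
  have hcont : ContinuousAt (fun η => x * (1 - B * η) - y * (1 + A * η)) 0 := by fun_prop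
  have hpos : ∀ᶠ η in nhdsWithin (0 : ℝ) (Ioi 0), 0 < x * (1 - B * η) - y * (1 + A * η) :=
    (hcont.tendsto.mono_left nhdsWithin_le_nhds).eventually_const_lt (by linarith)
  obtain ⟨η, hη, hη0, hηκ⟩ :=
    (hpos.and (eventually_mem_nhdsWithin.and (nhdsWithin_le_nhds (Iic_mem_nhds hκ)))).exists
  exact ⟨η, hη0, hηκ, by linarith⟩

end Asymptotics

theorem berk_jones_MnPlus_null_upper_bound (x : ℝ) (hx : 0 < x) :
    ∀ ε > (0:ℝ), ∀ᶠ n : ℕ in Filter.atTop,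
      ((nullMeasure n) {u | x / (2 * Real.log n * Real.log (Real.log n)) ≤ MnPlus u}).toReal ≤
        Real.exp (-x) + ε := by
  intro ε hε
  obtain ⟨y, hy, hyx, hexp⟩ := exists_pos_lt_exp_neg_le hx (show 0 < ε / 3 by positivity)
  obtain ⟨M, hM, hpow⟩ := exists_one_div_one_add_div_pow_le y (show 0 < ε / 3 by positivity)
  obtain ⟨η, hη, hη1, hxy⟩ :=
    exists_pos_le_mul_one_add_le (show (0 : ℝ) < 1 / 100 by norm_num) hyx 41 3
  have hδ : 0 < min 1 (ε / 9) := by positivity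
  filter_upwards [eventually_measureReal_le_MnPlus_le hx hy.le hη hη1 hxy hM hδ (min_le_left _ _)]
    with n hn
  calc _ ≤ 1 / (1 + y / M) ^ M + 3 * min 1 (ε / 9) := hn
    _ ≤ Real.exp (-x) + ε / 3 + ε / 3 + 3 * (ε / 9) := by
        gcongr
        · linarith
        · exact min_le_right _ _
    _ = Real.exp (-x) + ε := by ring
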